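/- For every η > 0 there exist κ > 0 and a constant C = C(η) such that the following holds. Let p be a prime and R a real number with p^{1/8 + η} ≤ R < p^{1/2}, let χ be a non-trivial multiplicative character modulo p, and let ℱ(R) = {r/s : gcd(r, s) = 1, 0 ≤ r ≤ s ≤ R} be the set of Farey fractions of order R, embedded into 𝔽_p by sending r/s to r·s̄ mod p, where s̄ is the multiplicative inverse of s modulo p. Then for all complex weights (ξ_ρ)_{ρ ∈ ℱ(R)} and (ζ_ϱ)_{ϱ ∈ ℱ(R)} with |ξ_ρ| ≤ 1 and |ζ_ϱ| ≤ 1 for all ρ, ϱ, one has |∑_{ρ ∈ ℱ(R)} ∑_{ϱ ∈ ℱ(R)} ξ_ρ · ζ_ϱ · χ(ρ − ϱ)| ≤ C·R⁴·p^{−κ}, where χ(ρ − ϱ) means χ applied to the difference in 𝔽_p of the embedded images of ρ and ϱ. -/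

import Mathlib

open Finset

/-- The set of Farey fractions of order `R`: rationals `r/s` in lowest terms with
`0 ≤ r ≤ s ≤ R`. -/
noncomputable def fareySet (R : ℝ) : Finset ℚ :=
  (((Finset.Icc 0 ⌊R⌋₊) ×ˢ (Finset.Icc 1 ⌊R⌋₊)).filter
      fun rs => rs.1 ≤ rs.2 ∧ Nat.gcd rs.1 rs.2 = 1).image
    fun rs => (rs.1 : ℚ) / (rs.2 : ℚ)

/-- The canonical embedding of a rational `ρ = r/s` (in lowest terms) into `𝔽_p`,
sending `ρ` to `r · s̄ mod p`. -/
def fareyEmb (p : ℕ) (ρ : ℚ) : ZMod p :=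
  (ρ.num : ZMod p) * ((ρ.den : ZMod p))⁻¹

section
open Finset Polynomial

theorem stepanov_deg_inj {Q H D M L : ℕ} (hQ : D * H + 1 = Q) (hc : Nat.Coprime M D)
    (hL : D * (L + M) ≤ Q) {j j' i i' l l' : ℕ} (hj : j < D) (hj' : j' < D) (hl : l < L)
    (hl' : l' < L) (h : l + i * Q + j * H * M = l' + i' * Q + j' * H * M) :
    j = j' ∧ i = i' ∧ l = l' := by
  have hD : 0 < D := by omega
  have e1 : ((i * D + j * M : ℤ) - (i' * D + j' * M)) * Q = (D * l' - j' * M) - (D * l - j * M) := by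
    have hz : (l + i * Q + j * H * M : ℤ) = l' + i' * Q + j' * H * M := by exact_mod_cast h
    have hQz : (D * H + 1 : ℤ) = Q := by exact_mod_cast hQ
    rw [← hQz] at hz ⊢
    linear_combination (D : ℤ) * hz
  have b1 : (D * l : ℤ) < D * L := by exact_mod_cast Nat.mul_lt_mul_of_pos_left hl hD
  have b2 : (D * l' : ℤ) < D * L := by exact_mod_cast Nat.mul_lt_mul_of_pos_left hl' hD
  have b3 : (j * M : ℤ) ≤ D * M := by exact_mod_cast Nat.mul_le_mul_right M hj.le
  have b4 : (j' * M : ℤ) ≤ D * M := by exact_mod_cast Nat.mul_le_mul_right M hj'.le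
  have b5 : (0 : ℤ) ≤ D * l := by positivity
  have b6 : (0 : ℤ) ≤ D * l' := by positivity
  have b7 : (0 : ℤ) ≤ j * M := by positivity
  have b8 : (0 : ℤ) ≤ j' * M := by positivity
  have b9 : (D * L + D * M : ℤ) ≤ Q := by rw [← mul_add]; exact_mod_cast hL
  have e2 : (i * D + j * M : ℤ) - (i' * D + j' * M) = 0 := by
    have hQ0 : (0:ℤ) < Q := by exact_mod_cast (by omega : 0 < Q)
    by_contra hne
    rcases lt_or_gt_of_ne hne with h1 | h1
    · have : ((i * D + j * M : ℤ) - (i' * D + j' * M)) * Q ≤ (-1) * Q :=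
        mul_le_mul_of_nonneg_right (by omega) hQ0.le
      linarith
    · have : 1 * (Q:ℤ) ≤ ((i * D + j * M : ℤ) - (i' * D + j' * M)) * Q :=
        mul_le_mul_of_nonneg_right (by omega) hQ0.le
      linarith
  have e3 : j = j' := by
    have hd : (D : ℤ) ∣ M * ((j : ℤ) - j') := ⟨i' - i, by linear_combination e2⟩
    have hd2 : (D : ℤ) ∣ (j : ℤ) - j' :=
      (Nat.isCoprime_iff_coprime.mpr hc.symm).dvd_of_dvd_mul_left hd
    have := Int.eq_zero_of_abs_lt_dvd hd2 (by rw [abs_lt]; constructor <;> omega)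
    omega
  subst e3
  have e4 : i = i' := by
    have : ((i : ℤ) - i') * D = 0 := by linear_combination e2
    rcases mul_eq_zero.mp this with h1 | h1
    · omega
    · omega
  subst e4
  exact ⟨rfl, rfl, by omega⟩

theorem stepanov_core {K : Type*} [Field K] [Fintype K] [DecidableEq K] (p n : ℕ) [Fact p.Prime]
    [CharP K p] {Q H D M I L : ℕ} (hQp : Q = p ^ n) (hcard : ∀ x : K, x ^ (Q * Q) = x)
    (hQ : D * H + 1 = Q) (hH : 0 < H) (hD : 0 < D) (F : K[X]) (hF : F.Monic) (hM : F.natDegree = M)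
    (hc : Nat.Coprime M D) (hL : D * (L + M) ≤ Q)
    (hcount : L * Q + I + M * (D * H) < D * I * L) (c : K) (hc0 : c ≠ 0) :
    (univ.filter fun x : K => F.eval x ^ (H * (Q + 1)) = c).card ≤ L + I * Q + M * (D * H) := by
  classical
  let ι := Fin D × Fin I × Fin L
  let T : ι → K[X] := fun t => C (c ^ (t.1 : ℕ)) * X ^ (t.2.2 * Q + t.2.1 : ℕ) * F ^ ((D - 1 - t.1) * H)
  let N := L * Q + I + M * (D * H)
  have hTdeg : ∀ t, T t ∈ degreeLT K N := by
    intro t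
    rw [mem_degreeLT]
    have h1 : (T t).natDegree ≤ (t.2.2 * Q + t.2.1 : ℕ) + (D - 1 - t.1) * H * M := by
      have := hM
      refine natDegree_mul_le.trans ?_
      refine add_le_add ?_ ?_
      · exact natDegree_C_mul_X_pow_le _ _
      · rw [hF.natDegree_pow, hM]
    have h2 : (t.2.2 * Q + t.2.1 : ℕ) + (D - 1 - t.1) * H * M < N := by
      have hl := t.2.2.2
      have hi := t.2.1.2
      have a1 : (t.2.2 : ℕ) * Q ≤ L * Q := Nat.mul_le_mul_right _ hl.le
      have a2 : (D - 1 - t.1) * H * M ≤ M * (D * H) := by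
        rw [mul_comm M]; gcongr; omega
      show _ < L * Q + I + M * (D * H)
      omega
    refine lt_of_le_of_lt degree_le_natDegree ?_
    exact_mod_cast h1.trans_lt h2
  let φ : (ι → K) →ₗ[K] degreeLT K N :=
    Fintype.linearCombination K (fun t => (⟨T t, hTdeg t⟩ : degreeLT K N))
  have hker : LinearMap.ker φ ≠ ⊥ := by
    apply LinearMap.ker_ne_bot_of_finrank_lt
    rw [Module.finrank_fintype_fun_eq_card, (degreeLTEquiv K N).finrank_eq]
    simp only [Module.finrank_fintype_fun_eq_card, ι, Fintype.card_prod, Fintype.card_fin]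
    rw [← mul_assoc]; exact hcount
  obtain ⟨b, hb, hb0⟩ := (Submodule.ne_bot_iff _).mp hker
  have hT0 : ∑ t, b t • T t = 0 := by
    have : φ b = 0 := hb
    have h2 := congrArg Subtype.val this
    simpa [φ, Fintype.linearCombination_apply] using h2
  let P : ι → K[X] := fun t => C (b t ^ Q) * X ^ (t.2.2 + t.2.1 * Q : ℕ) * F ^ (t.1 * H : ℕ)
  have hQ0 : Q ≠ 0 := by omega
  have hPne : ∀ t, b t ≠ 0 → P t ≠ 0 := fun t ht => by
    refine mul_ne_zero (mul_ne_zero (C_ne_zero.mpr (pow_ne_zero _ ht)) (pow_ne_zero _ X_ne_zero))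
      (pow_ne_zero _ hF.ne_zero)
  have hP0 : ∀ t, P t ≠ 0 → b t ≠ 0 := fun t ht h => ht (by simp [P, h, hQ0])
  have hPdeg : ∀ t, b t ≠ 0 → (P t).natDegree = t.2.2 + t.2.1 * Q + t.1 * H * M := by
    intro t ht
    rw [natDegree_mul (mul_ne_zero (C_ne_zero.mpr (pow_ne_zero _ ht)) (pow_ne_zero _ X_ne_zero))
      (pow_ne_zero _ hF.ne_zero), natDegree_C_mul_X_pow _ _ (pow_ne_zero _ ht), hF.natDegree_pow, hM]
  have hsum : ∑ t, P t ≠ 0 := by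
    have hdis := degree_sum_eq_of_disjoint P univ (by
      intro s hs t ht hst
      simp only [Function.onFun, Function.comp]
      intro he
      apply hst
      have hs' := hP0 s hs.2
      have ht' := hP0 t ht.2
      have he2 := natDegree_eq_of_degree_eq he
      rw [hPdeg s hs', hPdeg t ht'] at he2
      obtain ⟨h1, h2, h3⟩ := stepanov_deg_inj hQ hc hL s.1.2 t.1.2 s.2.2.2 t.2.2.2 he2
      exact Prod.ext (Fin.ext h1) (Prod.ext (Fin.ext h2) (Fin.ext h3)))
    intro h0
    rw [h0, degree_zero] at hdis
    apply hb0
    funext t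
    by_contra ht
    have := Finset.le_sup (f := fun i => (P i).degree) (mem_univ t)
    rw [← hdis, le_bot_iff, degree_eq_bot] at this
    exact hPne t ht this
  have hdegP : (∑ t, P t).natDegree ≤ L + I * Q + M * (D * H) := by
    apply natDegree_sum_le_of_forall_le
    intro t _
    by_cases ht : b t = 0
    · simp [P, ht, hQ0]
    rw [hPdeg t ht]
    have a1 : (t.2.1 : ℕ) * Q ≤ I * Q := Nat.mul_le_mul_right _ t.2.1.2.le
    have a2 : t.1 * H * M ≤ M * (D * H) := by
      rw [mul_comm M]; gcongr; exact t.1.2.le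
    have := t.2.2.2
    omega
  have hroot : ∀ x : K, F.eval x ^ (H * (Q + 1)) = c → (∑ t, P t).IsRoot x := by
    intro x hx
    have hFx : F.eval x ≠ 0 := by
      intro h0
      rw [h0, zero_pow (by positivity)] at hx
      exact hc0 hx.symm
    have key : ((∑ t, P t).eval x) ^ Q * F.eval x ^ ((D - 1) * H) = (∑ t, b t • T t).eval x := by
      rw [eval_finset_sum, eval_finset_sum, hQp, sum_pow_char_pow, ← hQp, Finset.sum_mul]
      refine Finset.sum_congr rfl fun t _ => ?_
      simp only [P, T, eval_mul, eval_C, eval_pow, eval_X, eval_smul, smul_eq_mul, mul_pow]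
      rw [← pow_mul, hcard]
      have e1 : (x ^ ((t.2.2 : ℕ) + t.2.1 * Q)) ^ Q = x ^ (t.2.2 * Q + t.2.1 : ℕ) := by
        rw [← pow_mul, add_mul, pow_add, mul_assoc, mul_comm (t.2.1 : ℕ), pow_mul x (Q * Q), hcard,
          ← pow_add]
      have e2 : (F.eval x ^ (t.1 * H : ℕ)) ^ Q * F.eval x ^ ((D - 1) * H) =
          c ^ (t.1 : ℕ) * F.eval x ^ ((D - 1 - t.1) * H) := by
        rw [← hx, ← pow_mul, ← pow_mul, ← pow_add, ← pow_add]
        congr 1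
        obtain ⟨d, hd⟩ : ∃ d, D - 1 = t.1 + d := ⟨D - 1 - t.1, by have := t.1.2; omega⟩
        rw [hd, Nat.add_sub_cancel_left]; ring
      rw [e1, mul_assoc, mul_assoc, e2]; ring
    rw [hT0, eval_zero] at key
    rcases mul_eq_zero.mp key with h | h
    · exact pow_eq_zero_iff hQ0 |>.mp h
    · exact absurd h (pow_ne_zero _ hFx)
  calc _ ≤ (∑ t, P t).roots.toFinset.card := by
        apply Finset.card_le_card
        intro x hx
        rw [Multiset.mem_toFinset, mem_roots hsum]
        exact hroot x (by simpa using hx)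
    _ ≤ Multiset.card (∑ t, P t).roots := Multiset.toFinset_card_le _
    _ ≤ _ := (card_roots' _).trans hdegP

end

section
open Finset Polynomial

theorem stepanov_charsum (p : ℕ) [Fact p.Prime] (hp3 : 3 ≤ p) (F : (ZMod p)[X]) (hF : F.Monic)
    (hc : Nat.Coprime F.natDegree (p - 1)) (ψ : MulChar (ZMod p) ℂ) (hψ : ψ ≠ 1)
    (hψ1 : ∀ x, ‖ψ x‖ ≤ 1) :
    ∃ C : ℝ, ∃ n0 : ℕ, ∀ n ≥ n0, ∀ (K : Type) [Field K] [Fintype K] [Algebra (ZMod p) K],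
      Fintype.card K = p ^ (2 * n) →
      ‖∑ x : K, ψ (Algebra.norm (ZMod p) (aeval x F))‖ ≤ C * (p : ℝ) ^ n := by
  classical
  set M := F.natDegree with hM
  set D := p - 1 with hD
  refine ⟨D * (D * (2 * M + 3) + M), (M + 2 + M * (D * M + 2 * D)) + 1, ?_⟩
  intro n hn K _ _ _ hcard
  have : CharP K p := charP_of_injective_algebraMap (algebraMap (ZMod p) K).injective p
  obtain ⟨Q, hQ⟩ : ∃ Q, Q = p ^ n := ⟨_, rfl⟩
  have hDdvd : D ∣ Q - 1 := by
    have := Nat.sub_dvd_pow_sub_pow p 1 n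
    rwa [one_pow, ← hQ] at this
  obtain ⟨H, hH⟩ := hDdvd
  have hQpos : 0 < Q := by rw [hQ]; exact pow_pos (by omega) n
  have hQ1 : D * H + 1 = Q := by omega
  have hD2 : 2 ≤ D := by omega
  have hHbig : M + 2 + M * (D * M + 2 * D) < H := by
    -- H ≥ n
    have h1 : n ≤ H := by
      have hg : D * n ≤ Q - 1 := by
        have : 1 + n * D ≤ (1 + D) ^ n := by
          have := one_add_mul_le_pow (show (-2:ℤ) ≤ D by omega) n
          exact_mod_cast this
        have h2 : 1 + D = p := by omega
        rw [h2, ← hQ] at this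
        rw [mul_comm]; omega
      rw [hH] at hg
      exact Nat.le_of_mul_le_mul_left hg (by omega)
    omega
  have hcardQ : Fintype.card K = Q * Q := by rw [hcard, hQ, ← pow_add, two_mul]
  have hnormpow : ∀ x : K, algebraMap (ZMod p) K (Algebra.norm (ZMod p) x) = x ^ (H * (Q + 1)) := by
    intro x
    have := FiniteField.algebraMap_norm_eq_pow (K := ZMod p) (K' := K) (x := x)
    rw [this]
    congr 1
    rw [Nat.card_eq_fintype_card, hcardQ, Nat.card_eq_fintype_card, ZMod.card]
    apply Nat.div_eq_of_eq_mul_right (by omega)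
    have : Q * Q - 1 = (Q - 1) * (Q + 1) := by
      obtain ⟨r, rfl⟩ : ∃ r, Q = r + 1 := ⟨Q - 1, by omega⟩
      simp; ring_nf; omega
    rw [this, hH, mul_assoc]
  let N : ZMod p → ℕ := fun c => (univ.filter fun x : K => Algebra.norm (ZMod p) (aeval x F) = c).card
  have hNup : ∀ c, c ≠ 0 → N c ≤ H * Q + (2 * M + 3) * Q := by
    intro c hc0
    have hmap : (F.map (algebraMap (ZMod p) K)).natDegree = M := hF.natDegree_map _
    have := stepanov_core (K := K) p n (Q := Q) (H := H) (D := D) (M := M) (I := H + M + 2) (L := H - M)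
      hQ (fun x => by rw [← hcardQ]; exact FiniteField.pow_card x) hQ1 (by omega) (by omega)
      (F.map (algebraMap (ZMod p) K)) (hF.map _) hmap hc
      (by rw [Nat.sub_add_cancel (by omega)]; omega)
      (by
        obtain ⟨r, rfl⟩ : ∃ r, H = r + M := ⟨H - M, by omega⟩
        rw [Nat.add_sub_cancel, ← hQ1]
        obtain ⟨d, hd⟩ : ∃ d, D = d + 2 := ⟨D - 2, by omega⟩
        rw [hd] at hHbig ⊢
        nlinarith [Nat.zero_le (d * r), Nat.zero_le (d*M), Nat.zero_le (d * M * r), Nat.zero_le (d*M*M)])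
      (algebraMap (ZMod p) K c) (by simpa using hc0)
    have hNeq : N c = (univ.filter fun x : K => (F.map (algebraMap (ZMod p) K)).eval x ^ (H * (Q + 1)) =
        algebraMap (ZMod p) K c).card := by
      simp only [N]
      congr 1
      ext x
      simp only [mem_filter, mem_univ, true_and]
      rw [eval_map_algebraMap, ← hnormpow]
      exact ((algebraMap (ZMod p) K).injective.eq_iff).symm
    rw [hNeq]
    refine this.trans ?_
    have e1 : H ≤ D * H := Nat.le_mul_of_pos_left _ (by omega)
    have e2 : D * H ≤ Q := by omega
    have e3 : M * (D * H) ≤ M * Q := Nat.mul_le_mul_left _ e2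
    have e4 : H - M ≤ Q := by omega
    nlinarith
  have hsumN : Q * Q ≤ M + ∑ c ∈ univ.erase (0 : ZMod p), N c := by
    have h1 : ∑ c, N c = Q * Q := by
      rw [← hcardQ, ← Finset.card_univ]
      exact (Finset.card_eq_sum_card_fiberwise (fun x _ => mem_univ _)).symm
    rw [← h1, ← Finset.add_sum_erase _ _ (mem_univ (0 : ZMod p))]
    gcongr
    have : N 0 ≤ (F.map (algebraMap (ZMod p) K)).roots.toFinset.card := by
      apply Finset.card_le_card
      intro x hx
      simp only [mem_filter, mem_univ, true_and] at hx
      rw [Multiset.mem_toFinset, mem_roots (hF.map _).ne_zero, IsRoot, eval_map_algebraMap]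
      exact Algebra.norm_eq_zero_iff.mp hx
    refine this.trans ((Multiset.toFinset_card_le _).trans ((card_roots' _).trans ?_))
    rw [hF.natDegree_map]
  have hcardD : (univ.erase (0 : ZMod p)).card = D := by
    rw [Finset.card_erase_of_mem (mem_univ _), Finset.card_univ, ZMod.card]
  have hNlow : ∀ c, c ≠ 0 → H * Q ≤ N c + (D * (2 * M + 3) + M) * Q := by
    intro c hc0
    have hmem : c ∈ univ.erase (0 : ZMod p) := by simp [hc0]
    rw [← Finset.add_sum_erase _ _ hmem] at hsumN
    have h2 : ∑ x ∈ (univ.erase (0 : ZMod p)).erase c, N x ≤ (D - 1) * (H * Q + (2 * M + 3) * Q) := by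
      refine (Finset.sum_le_card_nsmul _ _ (H * Q + (2 * M + 3) * Q) ?_).trans ?_
      · intro x hx
        exact hNup x (by simp at hx; exact hx.2)
      · rw [Finset.card_erase_of_mem hmem, hcardD, smul_eq_mul]
    obtain ⟨d, hd⟩ : ∃ d, D = d + 1 := ⟨D - 1, by omega⟩
    rw [hd] at h2 hQ1 ⊢
    simp only [Nat.add_sub_cancel] at h2
    have h3 : Q * Q = (d + 1) * H * Q + Q := by
      nth_rw 1 [← hQ1]; ring
    have hMQ : M ≤ M * Q := Nat.le_mul_of_pos_right _ hQpos
    nlinarith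
  have hsplit : ∑ x : K, ψ (Algebra.norm (ZMod p) (aeval x F)) =
      ∑ c ∈ univ.erase (0 : ZMod p), ψ c * ((N c : ℂ) - (H * Q : ℕ)) := by
    have h0 : ∑ c, ψ c = 0 := MulChar.sum_eq_zero_of_ne_one hψ
    have h1 : ∑ x : K, ψ (Algebra.norm (ZMod p) (aeval x F)) = ∑ c, ψ c * (N c : ℂ) := by
      rw [← Finset.sum_fiberwise (s := univ) (g := fun x : K => Algebra.norm (ZMod p) (aeval x F))]
      refine Finset.sum_congr rfl fun c _ => ?_
      rw [Finset.sum_congr rfl (g := fun _ => ψ c)]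
      · rw [Finset.sum_const, nsmul_eq_mul, mul_comm]
      · intro x hx
        rw [(mem_filter.mp hx).2]
    have h2 : ∑ c, ψ c * ((N c : ℂ) - (H * Q : ℕ)) = ∑ c, ψ c * (N c : ℂ) := by
      simp only [mul_sub, Finset.sum_sub_distrib, ← Finset.sum_mul, h0]
      simp
    rw [h1, ← h2, ← Finset.add_sum_erase _ _ (mem_univ (0 : ZMod p)), MulChar.map_zero, zero_mul,
      zero_add]
  rw [hsplit]
  calc _ ≤ ∑ c ∈ univ.erase (0 : ZMod p), ((D * (2 * M + 3) + M : ℕ) : ℝ) * Q := by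
        refine norm_sum_le_of_le _ fun c hc' => ?_
        have hc0 : c ≠ 0 := (mem_erase.mp hc').1
        rw [norm_mul]
        have hb : ‖(N c : ℂ) - (H * Q : ℕ)‖ ≤ ((D * (2 * M + 3) + M : ℕ) : ℝ) * Q := by
          have : (N c : ℂ) - (H * Q : ℕ) = (((N c : ℝ) - (H * Q : ℕ) : ℝ) : ℂ) := by push_cast; rfl
          rw [this, Complex.norm_real, Real.norm_eq_abs, abs_le]
          have u1 : (N c : ℝ) ≤ (H * Q : ℕ) + (2 * M + 3) * Q := by exact_mod_cast hNup c hc0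
          have u2 : ((H * Q : ℕ) : ℝ) ≤ N c + ((D * (2 * M + 3) + M : ℕ) : ℝ) * Q := by
            exact_mod_cast hNlow c hc0
          constructor
          · linarith
          · have : ((2 * M + 3 : ℝ)) * Q ≤ ((D * (2 * M + 3) + M : ℕ) : ℝ) * Q := by
              have : (2 * M + 3) * Q ≤ (D * (2 * M + 3) + M) * Q :=
                Nat.mul_le_mul_right _ (by nlinarith)
              exact_mod_cast this
            linarith
        calc _ ≤ 1 * (((D * (2 * M + 3) + M : ℕ) : ℝ) * Q) :=
              mul_le_mul (hψ1 c) hb (norm_nonneg _) (by norm_num)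
          _ = _ := one_mul _
    _ = _ := by
        rw [Finset.sum_const, hcardD, nsmul_eq_mul, hQ]
        push_cast; ring

end

section
open Finset Polynomial

theorem lfun_root_bound (G : ℂ[X]) (hG : G ≠ 0) (S : ℕ → ℂ) (q C : ℝ) (hq : 0 < q) (m0 : ℕ)
    (hodd : ∀ j, ¬ Even j → S j = 0) (hS : ∀ m ≥ m0, ‖S (2 * m)‖ ≤ C * q ^ m)
    (hrec : ∀ N : ℕ, (N : ℂ) * G.coeff N = ∑ ij ∈ HasAntidiagonal.antidiagonal N, G.coeff ij.1 * S ij.2)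
    (t0 : ℂ) (ht : t0 ≠ 0) (hroot : G.eval t0 = 0) : 1 / Real.sqrt q ≤ ‖t0‖ := by
  by_contra hlt
  push Not at hlt
  obtain ⟨r, hr1, hr2⟩ := exists_between hlt
  have hr0 : 0 ≤ r := (norm_nonneg _).trans hr1.le
  have hC : 0 ≤ C := by
    have := (norm_nonneg _).trans (hS m0 le_rfl)
    have h2 : 0 < q ^ m0 := by positivity
    exact nonneg_of_mul_nonneg_left this h2
  have hqr : q * r ^ 2 < 1 := by
    have h1 : 0 < Real.sqrt q := Real.sqrt_pos.mpr hq
    rw [lt_div_iff₀ h1] at hr2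
    have h3 : (r * Real.sqrt q) ^ 2 < 1 := by
      rw [sq_lt_one_iff_abs_lt_one, abs_of_nonneg (by positivity)]; exact hr2
    rw [mul_pow, Real.sq_sqrt hq.le] at h3
    linarith
  -- summability at radius r
  have hsumr : Summable (fun j => ‖S j‖ * r ^ j) := by
    have h1 : Summable (fun m => ‖S (2 * m)‖ * r ^ (2 * m)) := by
      refine (summable_nat_add_iff m0).1 ?_
      refine Summable.of_nonneg_of_le (fun m => by positivity)
        (f := fun m => C * (q * r ^ 2) ^ (m + m0)) ?_ ?_
      · intro m
        have := hS (m + m0) (by omega)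
        calc _ ≤ (C * q ^ (m + m0)) * r ^ (2 * (m + m0)) := by gcongr
          _ = _ := by rw [mul_pow, ← pow_mul]; ring
      · refine Summable.mul_left _ ?_
        exact (summable_nat_add_iff m0).2 (summable_geometric_of_lt_one (by positivity) hqr)
    have hinj : Function.Injective (fun m : ℕ => 2 * m) := fun a b h => by simpa using h
    refine (hinj.summable_iff ?_).1 h1
    intro x hx
    have : ¬ Even x := by
      rintro ⟨m, rfl⟩
      exact hx ⟨m, by simp [two_mul]⟩
    simp [hodd x this]
  have hfun : ∀ t : ℂ, ‖t‖ ≤ r → t * G.derivative.eval t = G.eval t * ∑' j, S j * t ^ j := by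
    intro t htr
    have hs : Summable (fun j => ‖S j * t ^ j‖) := by
      refine Summable.of_nonneg_of_le (fun m => by positivity) ?_ hsumr
      intro m
      rw [norm_mul, norm_pow]; gcongr
    have hg : Summable (fun j => ‖G.coeff j * t ^ j‖) := by
      refine summable_of_ne_finset_zero (s := range (G.natDegree + 1)) ?_
      intro b hb
      rw [coeff_eq_zero_of_natDegree_lt (by simpa using hb)]; simp
    have e1 : G.eval t = ∑' j, G.coeff j * t ^ j := by
      rw [eval_eq_sum_range, tsum_eq_sum]
      intro b hb
      rw [coeff_eq_zero_of_natDegree_lt (by simpa using hb)]; simp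
    have e2 : t * G.derivative.eval t = ∑' j : ℕ, (j : ℂ) * G.coeff j * t ^ j := by
      rw [tsum_eq_sum (s := range (G.natDegree + 1)), derivative_eval, Polynomial.sum_over_range,
        mul_sum]
      · refine sum_congr rfl fun j _ => ?_
        rcases j with _ | j
        · simp
        · simp only [Nat.add_sub_cancel]; ring
      · simp
      · intro b hb
        rw [coeff_eq_zero_of_natDegree_lt (by simpa using hb)]; simp
    rw [e1, e2, tsum_mul_tsum_eq_tsum_sum_antidiagonal_of_summable_norm hg hs]
    refine tsum_congr fun N => ?_
    rw [hrec, sum_mul]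
    refine sum_congr rfl fun ij hij => ?_
    rw [← mem_antidiagonal.1 hij, pow_add]; ring
  obtain ⟨k, hk, hndvd⟩ := Polynomial.exists_eq_pow_rootMultiplicity_mul_and_not_dvd G hG t0
  set μ := G.rootMultiplicity t0 with hμ
  have hμ0 : 0 < μ := by rw [hμ, rootMultiplicity_pos hG]; exact hroot
  have hk0 : k.eval t0 ≠ 0 := fun h => hndvd (dvd_iff_isRoot.2 h)
  obtain ⟨ν, hν⟩ : ∃ ν, μ = ν + 1 := ⟨μ - 1, by omega⟩
  set B := ∑' j, ‖S j‖ * r ^ j with hB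
  -- bound
  have hbd : ∀ t : ℂ, ‖t‖ ≤ r → t ≠ t0 →
      ‖t * (μ * k.eval t + (t - t0) * k.derivative.eval t)‖ ≤ ‖t - t0‖ * ‖k.eval t‖ * B := by
    intro t htr htt
    have h1 := hfun t htr
    have hd : G.derivative.eval t =
        (t - t0) ^ ν * (μ * k.eval t + (t - t0) * k.derivative.eval t) := by
      conv_lhs => rw [hk]
      rw [derivative_mul, hν]
      simp [derivative_X_sub_C_pow]
      ring
    have hge : G.eval t = (t - t0) ^ ν * ((t - t0) * k.eval t) := by
      conv_lhs => rw [hk]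
      rw [hν]; simp; ring
    rw [hd, hge] at h1
    have hne : (t - t0) ^ ν ≠ 0 := pow_ne_zero _ (sub_ne_zero.2 htt)
    have h2 : t * (μ * k.eval t + (t - t0) * k.derivative.eval t)
        = (t - t0) * k.eval t * ∑' j, S j * t ^ j := by
      apply mul_left_cancel₀ hne
      linear_combination h1
    rw [h2, norm_mul, norm_mul]
    gcongr
    refine tsum_of_norm_bounded hsumr.hasSum ?_
    intro m
    rw [norm_mul, norm_pow]; gcongr
  -- limit
  have hlim : ‖t0 * (μ * k.eval t0 + (t0 - t0) * k.derivative.eval t0)‖ ≤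
      ‖t0 - t0‖ * ‖k.eval t0‖ * B := by
    have hc1 : Filter.Tendsto (fun t : ℂ => ‖t * (μ * k.eval t + (t - t0) * k.derivative.eval t)‖)
        (nhdsWithin t0 {t0}ᶜ) (nhds (‖t0 * (μ * k.eval t0 + (t0 - t0) * k.derivative.eval t0)‖)) := by
      refine Filter.Tendsto.mono_left (Continuous.tendsto ?_ t0) nhdsWithin_le_nhds
      fun_prop
    have hc2 : Filter.Tendsto (fun t : ℂ => ‖t - t0‖ * ‖k.eval t‖ * B)
        (nhdsWithin t0 {t0}ᶜ) (nhds (‖t0 - t0‖ * ‖k.eval t0‖ * B)) := by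
      refine Filter.Tendsto.mono_left (Continuous.tendsto ?_ t0) nhdsWithin_le_nhds
      fun_prop
    refine le_of_tendsto_of_tendsto hc1 hc2 ?_
    have hball : ∀ᶠ t in nhds t0, ‖t‖ ≤ r := by
      have : ∀ᶠ t in nhds t0, ‖t‖ < r :=
        (continuous_norm.tendsto t0).eventually (gt_mem_nhds hr1) 
      exact this.mono fun t h => h.le
    filter_upwards [self_mem_nhdsWithin, nhdsWithin_le_nhds hball] with t h1 h2
    exact hbd t h2 h1
  simp only [sub_self, norm_zero, zero_mul, add_zero, norm_le_zero_iff] at hlim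
  have : (μ : ℂ) ≠ 0 := by exact_mod_cast hμ0.ne'
  exact (mul_ne_zero ht (mul_ne_zero this hk0)) hlim

theorem lfun_A1_bound (A S : ℕ → ℂ) (n : ℕ) (hA0 : A 0 = 1) (hA : ∀ N ≥ n, A N = 0)
    (q C : ℝ) (hq : 0 < q) (m0 : ℕ) (hS : ∀ m ≥ m0, ‖S (2 * m)‖ ≤ C * q ^ m) (hS0 : S 0 = 0)
    (hrec : ∀ N : ℕ, (N : ℂ) * A N = ∑ ij ∈ HasAntidiagonal.antidiagonal N, A ij.1 * S ij.2) :
    ‖A 1‖ ≤ n * Real.sqrt q := by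
  classical
  set L : ℂ[X] := ∑ i ∈ range n, Polynomial.C (A i) * X ^ i with hL
  have hLc : ∀ N, L.coeff N = A N := by
    intro N
    rw [hL, finsetSum_coeff]
    simp only [coeff_C_mul_X_pow]
    by_cases h : N < n
    · rw [sum_ite_eq]; simp [h]
    · rw [sum_eq_zero, hA N (by omega)]
      intro i hi
      rw [if_neg]; have := mem_range.1 hi; omega
  set L' : ℂ[X] := L.comp (-X) with hL'
  have hLc' : ∀ N, L'.coeff N = (-1) ^ N * A N := by
    intro N; rw [hL', ← hLc]
    rw [show (-X : ℂ[X]) = Polynomial.C (-1) * X by simp, comp_C_mul_X_coeff, mul_comm]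
  set G := L * L' with hG
  have hG0 : G.eval 0 = 1 := by
    rw [← coeff_zero_eq_eval_zero, hG, mul_coeff_zero, hLc, hLc', hA0]; simp
  have hGne : G ≠ 0 := by intro h; rw [h] at hG0; simp at hG0
  -- power series
  let PA : PowerSeries ℂ := PowerSeries.mk A
  let PS : PowerSeries ℂ := PowerSeries.mk S
  let PA' : PowerSeries ℂ := PowerSeries.mk fun N => (-1) ^ N * A N
  let PS' : PowerSeries ℂ := PowerSeries.mk fun N => (-1) ^ N * S N
  have h1 : PowerSeries.X * PowerSeries.derivative ℂ PA = PA * PS := by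
    ext N
    rcases N with _ | N
    · simp [PA, PS, PowerSeries.coeff_mul, hS0]
    · rw [PowerSeries.coeff_succ_X_mul, PowerSeries.coeff_derivative, PowerSeries.coeff_mul]
      simp only [PA, PS, PowerSeries.coeff_mk]
      rw [← hrec]; push_cast; ring
  have h2 : PowerSeries.X * PowerSeries.derivative ℂ PA' = PA' * PS' := by
    ext N
    rcases N with _ | N
    · simp [PA', PS', PowerSeries.coeff_mul, hS0]
    · rw [PowerSeries.coeff_succ_X_mul, PowerSeries.coeff_derivative, PowerSeries.coeff_mul]
      simp only [PA', PS', PowerSeries.coeff_mk]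
      have := hrec (N + 1)
      calc _ = (-1) ^ (N + 1) * (((N + 1 : ℕ) : ℂ) * A (N + 1)) := by push_cast; ring
        _ = _ := by
          rw [this, mul_sum]
          refine sum_congr rfl fun ij hij => ?_
          rw [← mem_antidiagonal.1 hij, pow_add]; ring
  have h3 : PowerSeries.X * PowerSeries.derivative ℂ (PA * PA') = (PA * PA') * (PS + PS') := by
    rw [Derivation.leibniz]
    simp only [smul_eq_mul]
    linear_combination PA * h2 + PA' * h1
  have hGP : (G : PowerSeries ℂ) = PA * PA' := by
    rw [hG, Polynomial.coe_mul]
    congr 1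
    · ext N; simp [PA, hLc]
    · ext N; simp [PA', hLc']
  have hGc : ∀ N, PowerSeries.coeff N (PA * PA') = G.coeff N := by
    intro N; rw [← hGP]; simp
  have hGrec : ∀ N : ℕ, (N : ℂ) * G.coeff N =
      ∑ ij ∈ HasAntidiagonal.antidiagonal N, G.coeff ij.1 * (S ij.2 + (-1) ^ ij.2 * S ij.2) := by
    intro N
    have := congrArg (PowerSeries.coeff N) h3
    rw [PowerSeries.coeff_mul N (PA * PA')] at this
    simp only [hGc] at this
    simp only [PS, PS', map_add, PowerSeries.coeff_mk] at this
    rw [← this]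
    rcases N with _ | N
    · simp
    · rw [PowerSeries.coeff_succ_X_mul, PowerSeries.coeff_derivative, hGc]; push_cast; ring
  have hroots : ∀ t ∈ L.roots, ‖t‖⁻¹ ≤ Real.sqrt q := by
    intro t ht
    have hLt : L.eval t = 0 := (mem_roots'.1 ht).2
    have hGt : G.eval t = 0 := by rw [hG, eval_mul, hLt, zero_mul]
    have ht0 : t ≠ 0 := by rintro rfl; rw [hG0] at hGt; exact one_ne_zero hGt
    have := lfun_root_bound G hGne (fun j => S j + (-1) ^ j * S j) q (2 * C) hq m0 ?_ ?_ hGrec t ht0 hGt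
    · rw [one_div] at this
      exact inv_le_of_inv_le₀ (Real.sqrt_pos.2 hq) this
    · intro j hj
      simp [Odd.neg_one_pow (Nat.not_even_iff_odd.1 hj)]
    · intro m hm
      have := hS m hm
      simp only [pow_mul]
      rw [show S (2*m) + ((-1:ℂ)^2)^m * S (2*m) = 2 * S (2*m) by norm_num; ring, norm_mul]
      simp only [Complex.norm_ofNat]
      linarith
  have hspl := IsAlgClosed.splits L
  have hL0 : L.eval 0 = 1 := by rw [← coeff_zero_eq_eval_zero, hLc, hA0]
  have hder := hspl.eval_derivative_div_eval_of_ne_zero (x := 0) (by rw [hL0]; exact one_ne_zero)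
  have hA1 : A 1 = L.derivative.eval 0 := by
    rw [← coeff_zero_eq_eval_zero, coeff_derivative, hLc]; simp
  rw [hL0, div_one, ← hA1] at hder
  rw [hder]
  have hcard : L.roots.card ≤ n := by
    refine (card_roots' L).trans ?_
    rw [natDegree_le_iff_coeff_eq_zero]
    intro N hN; rw [hLc, hA N (by omega)]
  calc ‖(L.roots.map fun z => 1 / (0 - z)).sum‖
      ≤ ((L.roots.map fun z => 1 / (0 - z)).map norm).sum := norm_multiset_sum_le _
    _ ≤ (((L.roots.map fun z => 1 / (0 - z)).map norm).card) • Real.sqrt q := by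
        refine Multiset.sum_le_card_nsmul _ _ ?_
        intro x hx
        simp only [Multiset.mem_map] at hx
        obtain ⟨_, ⟨z, hz, rfl⟩, rfl⟩ := hx
        simpa using hroots z hz
    _ ≤ _ := by
        simp only [Multiset.card_map, nsmul_eq_mul]
        gcongr

end

section
open Finset Polynomial UniqueFactorizationMonoid

theorem monics_finite (k : Type) [Field k] [Fintype k] (N : ℕ) :
    {h : k[X] | h.Monic ∧ h.natDegree = N}.Finite := by
  have : Finite (degreeLT k N) := Finite.of_equiv _ (degreeLTEquiv k N).toEquiv.symm
  have : Finite {p : k[X] // p.Monic ∧ p.natDegree = N} := Finite.of_equiv _ (monicEquivDegreeLT (R := k) N).symm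
  exact Set.finite_coe_iff.1 this

noncomputable def monicsF (k : Type) [Field k] [Fintype k] (N : ℕ) : Finset k[X] :=
  (monics_finite k N).toFinset

theorem mem_monicsF {k : Type} [Field k] [Fintype k] {N : ℕ} {h : k[X]} :
    h ∈ monicsF k N ↔ h.Monic ∧ h.natDegree = N := by simp [monicsF]

open Classical in
noncomputable def irrsF (k : Type) [Field k] [Fintype k] (N : ℕ) : Finset k[X] :=
  (monicsF k N).filter Irreducible

theorem mem_irrsF {k : Type} [Field k] [Fintype k] {N : ℕ} {h : k[X]} :
    h ∈ irrsF k N ↔ (h.Monic ∧ h.natDegree = N) ∧ Irreducible h := by simp [irrsF, mem_monicsF]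

open Classical in
theorem natDegree_eq_sum_primes {k : Type} [Field k] [Fintype k] (N : ℕ) (h : k[X])
    (hh : h ∈ monicsF k N) :
    N = ∑ d ∈ Icc 1 N, ∑ P ∈ irrsF k d, ∑ m ∈ Icc 1 N, if P ^ m ∣ h then d else 0 := by
  rw [mem_monicsF] at hh
  obtain ⟨hm, hN⟩ := hh
  have hne : h ≠ 0 := hm.ne_zero
  have e0 : (normalizedFactors h).prod = h := by
    have := leadingCoeff_mul_prod_normalizedFactors h
    rwa [hm.leadingCoeff, C_1, one_mul] at this
  have hmon : ∀ f ∈ normalizedFactors h, f.Monic := fun f hf =>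
    ((Polynomial.mem_normalizedFactors_iff hne).1 hf).2.1
  have e1 : N = ∑ P ∈ (normalizedFactors h).toFinset,
      Multiset.count P (normalizedFactors h) * P.natDegree := by
    rw [← hN]
    conv_lhs => rw [← e0]
    rw [natDegree_multiset_prod_of_monic _ hmon, Finset.sum_multiset_map_count]
    simp
  have hcnt : ∀ P ∈ (normalizedFactors h).toFinset,
      ∑ m ∈ Icc 1 N, (if P ^ m ∣ h then P.natDegree else 0)
        = Multiset.count P (normalizedFactors h) * P.natDegree := by
    intro P hP
    rw [Multiset.mem_toFinset, Polynomial.mem_normalizedFactors_iff hne] at hP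
    obtain ⟨hirr, hPm, hPd⟩ := hP
    rw [← sum_filter, sum_const, smul_eq_mul]
    congr 1
    have hiff : ∀ m, P ^ m ∣ h ↔ m ≤ Multiset.count P (normalizedFactors h) := by
      intro m
      rw [pow_dvd_iff_le_emultiplicity, emultiplicity_eq_count_normalizedFactors hirr hne,
        hPm.normalize_eq_self]
      exact_mod_cast Iff.rfl
    have hle : Multiset.count P (normalizedFactors h) ≤ N := by
      have h1 := (hiff _).2 le_rfl
      have h2 := natDegree_le_of_dvd h1 hne
      rw [natDegree_pow, hN] at h2
      have := hirr.natDegree_pos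
      nlinarith
    have : (Icc 1 N).filter (fun m => P ^ m ∣ h)
        = Icc 1 (Multiset.count P (normalizedFactors h)) := by
      ext m; simp only [mem_filter, mem_Icc, hiff]; omega
    rw [this]; simp
  have e2 : ∑ d ∈ Icc 1 N, ∑ P ∈ irrsF k d, ∑ m ∈ Icc 1 N, (if P ^ m ∣ h then d else 0)
      = ∑ P ∈ (Icc 1 N).biUnion (irrsF k), ∑ m ∈ Icc 1 N, (if P ^ m ∣ h then P.natDegree else 0) := by
    rw [sum_biUnion]
    · refine sum_congr rfl fun d _ => sum_congr rfl fun P hP => ?_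
      rw [(mem_irrsF.1 hP).1.2]
    · intro a _ b _ hab
      rw [Function.onFun, disjoint_left]
      intro P hP hP'
      exact hab ((mem_irrsF.1 hP).1.2.symm.trans (mem_irrsF.1 hP').1.2)
  rw [e2]
  conv_lhs => rw [e1]
  rw [← sum_congr rfl hcnt]
  refine sum_subset ?_ ?_
  · intro P hP
    rw [Multiset.mem_toFinset, Polynomial.mem_normalizedFactors_iff hne] at hP
    rw [mem_biUnion]
    refine ⟨P.natDegree, mem_Icc.2 ⟨hP.1.natDegree_pos, ?_⟩, mem_irrsF.2 ⟨⟨hP.2.1, rfl⟩, hP.1⟩⟩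
    rw [← hN]; exact natDegree_le_of_dvd hP.2.2 hne
  · intro P hP hP'
    refine sum_eq_zero fun m hm' => ?_
    rw [if_neg]
    intro hd
    apply hP'
    obtain ⟨d, _, hd2⟩ := mem_biUnion.1 hP
    rw [mem_irrsF] at hd2
    rw [Multiset.mem_toFinset, Polynomial.mem_normalizedFactors_iff hne]
    refine ⟨hd2.2, hd2.1.1, (dvd_pow_self P ?_).trans hd⟩
    have := (mem_Icc.1 hm').1; omega

theorem sum_divisor_convert (A : ℕ → ℂ) (g : ℕ → ℕ → ℂ) (N : ℕ) :
    ∑ ij ∈ HasAntidiagonal.antidiagonal N, A ij.1 * ∑ d ∈ ij.2.divisors, g d (ij.2 / d)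
      = ∑ d ∈ Icc 1 N, ∑ m ∈ Icc 1 N, if m * d ≤ N then A (N - m * d) * g d m else 0 := by
  have e1 : ∀ ij ∈ HasAntidiagonal.antidiagonal N, A ij.1 * ∑ d ∈ ij.2.divisors, g d (ij.2 / d)
      = ∑ y ∈ ij.2.divisorsAntidiagonal, A ij.1 * g y.1 y.2 := by
    intro ij _
    rw [← Nat.sum_divisorsAntidiagonal (f := g), mul_sum]
  rw [sum_congr rfl e1, sum_sigma', ← sum_product', ← sum_filter]
  refine sum_bij' (fun x _ => x.2) (fun y _ => ⟨(N - y.2 * y.1, y.2 * y.1), y⟩) ?_ ?_ ?_ ?_ ?_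
  · rintro ⟨⟨i, j⟩, ⟨d, m⟩⟩ hx
    simp only [mem_sigma, HasAntidiagonal.mem_antidiagonal, Nat.mem_divisorsAntidiagonal] at hx
    obtain ⟨h1, h2, h3⟩ := hx
    have hd : d ≠ 0 := by rintro rfl; simp at h2; omega
    have hm : m ≠ 0 := by rintro rfl; simp at h2; omega
    have hd1 := Nat.pos_of_ne_zero hd
    have hm1 := Nat.pos_of_ne_zero hm
    simp only [mem_filter, mem_product, mem_Icc]
    refine ⟨⟨⟨by omega, by nlinarith⟩, ⟨by omega, by nlinarith⟩⟩, by nlinarith⟩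
  · rintro ⟨d, m⟩ hy
    simp only [mem_filter, mem_product, mem_Icc] at hy
    simp only [mem_sigma, HasAntidiagonal.mem_antidiagonal, Nat.mem_divisorsAntidiagonal]
    refine ⟨by omega, mul_comm _ _, ?_⟩
    exact Nat.mul_ne_zero (by omega) (by omega)
  · rintro ⟨⟨i, j⟩, ⟨d, m⟩⟩ hx
    simp only [mem_sigma, HasAntidiagonal.mem_antidiagonal, Nat.mem_divisorsAntidiagonal] at hx
    obtain ⟨h1, h2, h3⟩ := hx
    have : m * d = j := by rw [← h2, mul_comm]
    simp only [this, Sigma.mk.injEq, Prod.mk.injEq, heq_eq_eq, and_true]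
    omega
  · rintro ⟨d, m⟩ hy
    rfl
  · rintro ⟨⟨i, j⟩, ⟨d, m⟩⟩ hx
    simp only [mem_sigma, HasAntidiagonal.mem_antidiagonal, Nat.mem_divisorsAntidiagonal] at hx
    obtain ⟨h1, h2, h3⟩ := hx
    have : N - m * d = i := by rw [mul_comm, h2]; omega
    simp only [this]

noncomputable def Acoef {k : Type} [Field k] [Fintype k] (Ψ : k[X] →* ℂ) (N : ℕ) : ℂ :=
  ∑ h ∈ monicsF k N, Ψ h

noncomputable def Scoef {k : Type} [Field k] [Fintype k] (Ψ : k[X] →* ℂ) (j : ℕ) : ℂ :=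
  ∑ d ∈ j.divisors, ∑ P ∈ irrsF k d, (d : ℂ) * Ψ P ^ (j / d)

open Classical in
theorem lfun_rec {k : Type} [Field k] [Fintype k] (Ψ : k[X] →* ℂ) (N : ℕ) :
    (N : ℂ) * Acoef Ψ N
      = ∑ ij ∈ HasAntidiagonal.antidiagonal N, Acoef Ψ ij.1 * Scoef Ψ ij.2 := by
  unfold Scoef
  rw [sum_divisor_convert (Acoef Ψ) (fun d m => ∑ P ∈ irrsF k d, (d : ℂ) * Ψ P ^ m)]
  have hshift : ∀ d ∈ Icc 1 N, ∀ P ∈ irrsF k d, ∀ m ∈ Icc 1 N,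
      ∑ h ∈ monicsF k N, (if P ^ m ∣ h then (d : ℂ) * Ψ h else 0)
        = if m * d ≤ N then Acoef Ψ (N - m * d) * ((d : ℂ) * Ψ P ^ m) else 0 := by
    intro d hd P hP m hm
    obtain ⟨⟨hPm, hPd⟩, hirr⟩ := mem_irrsF.1 hP
    have hPmm : (P ^ m).Monic := hPm.pow m
    have hPmd : (P ^ m).natDegree = m * d := by rw [natDegree_pow, hPd]
    split_ifs with hle
    · rw [← sum_filter, Acoef, sum_mul]
      symm
      refine sum_bij (fun h' _ => P ^ m * h') ?_ ?_ ?_ ?_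
      · intro h' hh'
        rw [mem_monicsF] at hh'
        rw [mem_filter, mem_monicsF]
        refine ⟨⟨hPmm.mul hh'.1, ?_⟩, dvd_mul_right _ _⟩
        rw [hPmm.natDegree_mul hh'.1, hPmd, hh'.2]; omega
      · intro a _ b _ hab
        exact mul_left_cancel₀ hPmm.ne_zero hab
      · intro h hh
        rw [mem_filter, mem_monicsF] at hh
        obtain ⟨⟨h1, h2⟩, h', rfl⟩ := hh
        have h3 : h'.Monic := hPmm.of_mul_monic_left h1
        refine ⟨h', mem_monicsF.2 ⟨h3, ?_⟩, rfl⟩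
        rw [hPmm.natDegree_mul h3, hPmd] at h2; omega
      · intro h' _
        rw [map_mul, map_pow]; ring
    · refine sum_eq_zero fun h hh => ?_
      rw [if_neg]
      intro hdv
      rw [mem_monicsF] at hh
      have := natDegree_le_of_dvd hdv hh.1.ne_zero
      omega
  calc (N : ℂ) * Acoef Ψ N = ∑ h ∈ monicsF k N, ∑ d ∈ Icc 1 N, ∑ P ∈ irrsF k d, ∑ m ∈ Icc 1 N,
        (if P ^ m ∣ h then (d : ℂ) * Ψ h else 0) := by
        rw [Acoef, mul_sum]
        refine sum_congr rfl fun h hh => ?_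
        have := natDegree_eq_sum_primes N h hh
        conv_lhs => rw [this]
        push_cast
        simp only [sum_mul, ite_mul, zero_mul]
    _ = ∑ d ∈ Icc 1 N, ∑ P ∈ irrsF k d, ∑ m ∈ Icc 1 N, ∑ h ∈ monicsF k N,
        (if P ^ m ∣ h then (d : ℂ) * Ψ h else 0) := by
        rw [sum_comm]
        refine sum_congr rfl fun d _ => ?_
        rw [sum_comm]
        refine sum_congr rfl fun P _ => ?_
        rw [sum_comm]
    _ = _ := by
        refine sum_congr rfl fun d hd => ?_
        rw [sum_congr rfl fun P hP => sum_congr rfl fun m hm => hshift d hd P hP m hm, sum_comm]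
        refine sum_congr rfl fun m _ => ?_
        split_ifs
        · rw [mul_sum]
        · simp

end

section
open Finset Polynomial

theorem norm_sub_even {k K : Type} [Field k] [Field K] [Algebra k K] [FiniteDimensional k K]
    (x : K) (a : k) (he : Even (Module.finrank k K)) :
    Algebra.norm k (x - algebraMap k K a)
      = ((minpoly k x).eval a) ^ (Module.finrank k K / (minpoly k x).natDegree) := by
  set y := x - algebraMap k K a with hy
  have hint : IsIntegral k y := Algebra.IsIntegral.isIntegral y
  have hmin : minpoly k y = (minpoly k x).comp (X + C a) := minpoly.sub_algebraMap x a
  have hdeg : (minpoly k y).natDegree = (minpoly k x).natDegree := by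
    rw [hmin, natDegree_comp, natDegree_X_add_C, mul_one]
  have hco : (minpoly k y).coeff 0 = (minpoly k x).eval a := by
    rw [hmin, coeff_zero_eq_eval_zero, eval_comp]; simp
  have hf : (minpoly k y).natDegree * Module.finrank (IntermediateField.adjoin k {y}) K
      = Module.finrank k K := by
    rw [← IntermediateField.adjoin.finrank hint]
    exact Module.finrank_mul_finrank _ _ _
  have hpos : 0 < (minpoly k y).natDegree := minpoly.natDegree_pos hint
  rw [Algebra.norm_eq_norm_adjoin, ← IntermediateField.adjoin.powerBasis_gen hint,
    Algebra.PowerBasis.norm_gen_eq_coeff_zero_minpoly, IntermediateField.adjoin.powerBasis_gen hint,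
    IntermediateField.minpoly_gen, IntermediateField.adjoin.powerBasis_dim, hco, mul_pow, ← pow_mul,
    hf, he.neg_one_pow, one_mul, ← hdeg, ← hf, Nat.mul_div_cancel_left _ hpos]

open Classical in
theorem card_minpoly_fiber (p : ℕ) [Fact p.Prime] {K : Type} [Field K] [Fintype K]
    [Algebra (ZMod p) K] (j : ℕ) (hcard : Fintype.card K = p ^ j)
    (P : (ZMod p)[X]) (hP : P.Monic) (hirr : Irreducible P) (hd : P.natDegree ∣ j) :
    #{x : K | minpoly (ZMod p) x = P} = P.natDegree := by
  have hdvd : P ∣ X ^ Fintype.card K - X := by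
    have := hirr.natDegree_dvd_iff_dvd_X_pow_card_pow_sub_X.1 hd
    rw [Nat.card_eq_fintype_card, ZMod.card, ← hcard] at this
    exact this
  have hne : (map (algebraMap (ZMod p) K) (X ^ Fintype.card K - X)) ≠ 0 := by
    refine Polynomial.map_ne_zero ?_
    exact FiniteField.X_pow_card_sub_X_ne_zero _ Fintype.one_lt_card
  have hspl : (P.map (algebraMap (ZMod p) K)).Splits :=
    (FiniteField.splits_X_pow_card_sub_X p (K := K)).of_dvd hne (Polynomial.map_dvd _ hdvd)
  have hsep : P.Separable := PerfectField.separable_of_irreducible hirr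
  have hnd : (P.aroots K).Nodup := nodup_roots hsep.map
  have hroots : ({x : K | minpoly (ZMod p) x = P} : Finset K) = (P.aroots K).toFinset := by
    ext x
    simp only [mem_filter, mem_univ, true_and, Multiset.mem_toFinset, mem_aroots, hP.ne_zero,
      ne_eq, not_false_eq_true]
    constructor
    · rintro rfl; exact minpoly.aeval _ _
    · intro h; exact (minpoly.eq_of_irreducible_of_monic hirr h hP).symm
  rw [hroots, Multiset.toFinset_card_of_nodup hnd, ← hspl.natDegree_eq_card_roots, natDegree_map]

noncomputable def rootsHom (p : ℕ) [Fact p.Prime] (ψ : MulChar (ZMod p) ℂ) (s : Multiset (ZMod p)) :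
    (ZMod p)[X] →* ℂ where
  toFun h := ψ ((s.map fun a => h.eval a).prod)
  map_one' := by simp
  map_mul' a b := by simp [Multiset.prod_map_mul]

open Classical in
theorem Scoef_eq (p : ℕ) [Fact p.Prime] {K : Type} [Field K] [Fintype K]
    [Algebra (ZMod p) K] (j : ℕ) (hj : j ≠ 0) (hcard : Fintype.card K = p ^ j) (he : Even j)
    (ψ : MulChar (ZMod p) ℂ) (F : (ZMod p)[X]) (hF : F.Monic) (hs : F.Splits) :
    ∑ x : K, ψ (Algebra.norm (ZMod p) (aeval x F)) = Scoef (rootsHom p ψ F.roots) j := by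
  have hfr : Module.finrank (ZMod p) K = j := by
    have := Module.card_eq_pow_finrank (K := ZMod p) (V := K)
    rw [hcard, ZMod.card] at this
    exact (Nat.pow_right_injective (Fact.out : p.Prime).two_le this).symm
  have hx : ∀ x : K, ψ (Algebra.norm (ZMod p) (aeval x F))
      = (rootsHom p ψ F.roots (minpoly (ZMod p) x)) ^ (j / (minpoly (ZMod p) x).natDegree) := by
    intro x
    have hFr : F = (F.roots.map fun a => X - C a).prod := by
      have := hs.eq_prod_roots
      rwa [hF.leadingCoeff, C_1, one_mul] at this
    have h1 : Algebra.norm (ZMod p) (aeval x F)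
        = ((F.roots.map fun a => (minpoly (ZMod p) x).eval a).prod)
          ^ (j / (minpoly (ZMod p) x).natDegree) := by
      conv_lhs => rw [hFr]
      rw [map_multiset_prod, map_multiset_prod, Multiset.map_map, Multiset.map_map,
        ← Multiset.prod_map_pow]
      congr 1
      refine Multiset.map_congr rfl fun a _ => ?_
      simp only [Function.comp_apply, map_sub, aeval_X, aeval_C]
      rw [norm_sub_even x a (by rw [hfr]; exact he), hfr]
    rw [h1, map_pow]; rfl
  have hdeg : ∀ x : K, minpoly (ZMod p) x ∈ (j.divisors).biUnion (irrsF (ZMod p)) := by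
    intro x
    have hint : IsIntegral (ZMod p) x := Algebra.IsIntegral.isIntegral x
    rw [mem_biUnion]
    refine ⟨(minpoly (ZMod p) x).natDegree, ?_, mem_irrsF.2 ⟨⟨minpoly.monic hint, rfl⟩,
      minpoly.irreducible hint⟩⟩
    rw [Nat.mem_divisors]
    exact ⟨by rw [← hfr]; exact minpoly.degree_dvd hint, hj⟩
  rw [sum_congr rfl fun x _ => hx x, ← sum_fiberwise_of_maps_to (fun x _ => hdeg x), Scoef,
    sum_biUnion]
  · refine sum_congr rfl fun d hd => sum_congr rfl fun P hP => ?_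
    obtain ⟨⟨hPm, hPd⟩, hirr⟩ := mem_irrsF.1 hP
    have hc := card_minpoly_fiber p (K := K) j hcard P hPm hirr
      (by rw [hPd]; exact Nat.dvd_of_mem_divisors hd)
    have : ∀ x ∈ ({x : K | minpoly (ZMod p) x = P} : Finset K),
        (rootsHom p ψ F.roots (minpoly (ZMod p) x)) ^ (j / (minpoly (ZMod p) x).natDegree)
         = (rootsHom p ψ F.roots P) ^ (j / d) := by
      intro x hx
      rw [(mem_filter.1 hx).2, hPd]
    rw [sum_congr rfl this, sum_const, hc, hPd, nsmul_eq_mul]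
  · intro a _ b _ hab
    rw [Function.onFun, disjoint_left]
    intro P hP hP'
    exact hab ((mem_irrsF.1 hP).1.2.symm.trans (mem_irrsF.1 hP').1.2)

end

section
open Finset Polynomial

theorem Acoef_zero {k : Type} [Field k] [Fintype k] (Ψ : k[X] →* ℂ) : Acoef Ψ 0 = 1 := by
  have : monicsF k 0 = {1} := by
    ext h
    rw [mem_monicsF, mem_singleton]
    constructor
    · rintro ⟨h1, h2⟩; exact h1.natDegree_eq_zero.1 h2
    · rintro rfl; simp
  simp [Acoef, this]

theorem exists_unit_pow_ne_one (p : ℕ) [Fact p.Prime] (ψ : MulChar (ZMod p) ℂ) (hψ : ψ ≠ 1) (M : ℕ)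
    (hc : Nat.Coprime M (p - 1)) : ∃ l : (ZMod p)ˣ, ψ l ^ M ≠ 1 := by
  by_contra hcon
  push Not at hcon
  apply hψ
  rw [MulChar.eq_one_iff]
  intro a
  have h1 := hcon a
  have h2 : ψ (a : ZMod p) ^ (p - 1) = 1 := by
    rw [← map_pow, ZMod.pow_card_sub_one_eq_one a.ne_zero, map_one]
  have := Nat.eq_one_of_dvd_coprimes hc (orderOf_dvd_of_pow_eq_one h1) (orderOf_dvd_of_pow_eq_one h2)
  exact orderOf_eq_one_iff.1 this

open Classical in
theorem Acoef_vanish (p : ℕ) [Fact p.Prime] (ψ : MulChar (ZMod p) ℂ) (hψ : ψ ≠ 1)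
    (s : Multiset (ZMod p)) (hc : Nat.Coprime (Multiset.card s) (p - 1)) (N : ℕ)
    (hN : s.toFinset.card ≤ N) : Acoef (rootsHom p ψ s) N = 0 := by
  obtain ⟨l, hl⟩ := exists_unit_pow_ne_one p ψ hψ _ hc
  set n := s.toFinset.card with hn
  set f0 : (ZMod p)[X] := ∏ a ∈ s.toFinset, (X - C a) with hf0
  have hf0m : f0.Monic := monic_prod_of_monic _ _ fun a _ => monic_X_sub_C a
  have hf0d : f0.natDegree = n := by
    rw [hf0, natDegree_prod_of_monic _ _ fun a _ => monic_X_sub_C a]; simp [hn]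
  set g := X ^ (N - n) * f0 with hg
  have hgm : g.Monic := (monic_X_pow _).mul hf0m
  have hgd : g.natDegree = N := by
    rw [hg, (monic_X_pow _).natDegree_mul hf0m, hf0d, natDegree_X_pow]; omega
  have hgr : ∀ a ∈ s, g.eval a = 0 := by
    intro a ha
    rw [hg, eval_mul, hf0, eval_prod, prod_eq_zero (Multiset.mem_toFinset.2 ha) (by simp), mul_zero]
  let φ : (ZMod p)[X] → (ZMod p)[X] := fun h => h + C ((l : ZMod p) - 1) * (h - g)
  have hφ : ∀ h ∈ monicsF (ZMod p) N, φ h ∈ monicsF (ZMod p) N := by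
    intro h hh
    rw [mem_monicsF] at hh ⊢
    have hdlt : (C ((l : ZMod p) - 1) * (h - g)).degree < h.degree := by
      have hlt : (h - g).degree < h.degree := by
        refine degree_sub_lt_left ?_ hh.1.ne_zero ?_
        · rw [degree_eq_natDegree hh.1.ne_zero, degree_eq_natDegree hgm.ne_zero, hh.2, hgd]
        · rw [hh.1.leadingCoeff, hgm.leadingCoeff]
      have hle : (C ((l : ZMod p) - 1) * (h - g)).degree ≤ (h - g).degree := by
        rw [← smul_eq_C_mul]; exact degree_smul_le _ _
      exact lt_of_le_of_lt hle hlt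
    refine ⟨hh.1.add_of_left hdlt, ?_⟩
    rw [← hh.2]
    exact natDegree_eq_of_degree_eq (degree_add_eq_left_of_degree_lt hdlt)
  have hinj : Set.InjOn φ (monicsF (ZMod p) N) := by
    intro a _ b _ hab
    have h1 : C (l : ZMod p) * (a - b) = 0 := by
      simp only [φ] at hab
      have : C ((l : ZMod p) - 1) = C (l : ZMod p) - 1 := by simp
      rw [this] at hab
      linear_combination hab
    rcases mul_eq_zero.1 h1 with h | h
    · exact absurd (C_eq_zero.1 h) l.ne_zero
    · exact sub_eq_zero.1 h
  have himg : (monicsF (ZMod p) N).image φ = monicsF (ZMod p) N :=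
    eq_of_subset_of_card_le (image_subset_iff.2 hφ) (by rw [card_image_of_injOn hinj])
  have hval : ∀ h, rootsHom p ψ s (φ h) = ψ l ^ (Multiset.card s) * rootsHom p ψ s h := by
    intro h
    change ψ _ = _ * ψ _
    rw [← map_pow, ← map_mul]
    congr 1
    have : s.map (fun a => (φ h).eval a) = s.map (fun a => (l : ZMod p) * h.eval a) := by
      refine Multiset.map_congr rfl fun a ha => ?_
      simp only [φ, eval_add, eval_mul, eval_sub, eval_C, hgr a ha]; ring
    rw [this, Multiset.prod_map_mul, Multiset.map_const', Multiset.prod_replicate]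
  have key : Acoef (rootsHom p ψ s) N = ψ l ^ (Multiset.card s) * Acoef (rootsHom p ψ s) N := by
    conv_lhs => rw [Acoef, ← himg, sum_image hinj]
    rw [sum_congr rfl fun h _ => hval h, ← mul_sum]; rfl
  have : (1 - ψ l ^ (Multiset.card s)) * Acoef (rootsHom p ψ s) N = 0 := by linear_combination key
  rcases mul_eq_zero.1 this with h | h
  · exact absurd (sub_eq_zero.1 h).symm hl
  · exact h

open Classical in
theorem weil_bound (p : ℕ) [Fact p.Prime] (hp3 : 3 ≤ p) (F : (ZMod p)[X]) (hF : F.Monic)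
    (hs : F.Splits) (hc : Nat.Coprime F.natDegree (p - 1)) (ψ : MulChar (ZMod p) ℂ) (hψ : ψ ≠ 1) :
    ‖∑ x : ZMod p, ψ (F.eval x)‖ ≤ F.roots.toFinset.card * Real.sqrt p := by
  obtain ⟨C0, n0, hst⟩ := stepanov_charsum p hp3 F hF hc ψ hψ (fun x => DirichletCharacter.norm_le_one ψ x)
  set Ψ := rootsHom p ψ F.roots with hΨ
  have hcr : Multiset.card F.roots = F.natDegree := hs.natDegree_eq_card_roots.symm
  have hp0 : (0:ℝ) < p := by positivity
  have hb := lfun_A1_bound (Acoef Ψ) (Scoef Ψ) F.roots.toFinset.card (Acoef_zero Ψ)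
    (fun N hN => Acoef_vanish p ψ hψ F.roots (by rw [hcr]; exact hc) N hN) p C0 hp0 (n0 + 1)
    (by
      intro m hm
      have hm0 : 2 * m ≠ 0 := by omega
      let _ : Fintype (GaloisField p (2 * m)) := Fintype.ofFinite _
      have hcard : Fintype.card (GaloisField p (2 * m)) = p ^ (2 * m) := by
        rw [← Nat.card_eq_fintype_card]; exact GaloisField.card p _ hm0
      rw [← Scoef_eq p (K := GaloisField p (2 * m)) (2 * m) hm0 hcard ⟨m, by ring⟩ ψ F hF hs]
      exact hst m (by omega) _ hcard)
    (by simp [Scoef]) (lfun_rec Ψ)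
  have hA1 : Acoef Ψ 1 = ψ ((-1) ^ F.natDegree) * ∑ x : ZMod p, ψ (F.eval x) := by
    have him : monicsF (ZMod p) 1 = univ.image (fun a : ZMod p => X - C a) := by
      ext h
      rw [mem_monicsF, mem_image]
      constructor
      · rintro ⟨h1, h2⟩
        refine ⟨- h.coeff 0, mem_univ _, ?_⟩
        have := h1.eq_X_add_C h2
        rw [this]; simp
      · rintro ⟨a, _, rfl⟩
        exact ⟨monic_X_sub_C a, natDegree_X_sub_C a⟩
    rw [Acoef, him, sum_image, mul_sum]
    · refine sum_congr rfl fun a _ => ?_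
      change ψ _ = _
      rw [← map_mul]
      congr 1
      have hFr : F = (F.roots.map fun a => X - C a).prod := by
        have := hs.eq_prod_roots
        rwa [hF.leadingCoeff, C_1, one_mul] at this
      have : F.eval a = (F.roots.map fun b => a - b).prod := by
        conv_lhs => rw [hFr]
        rw [eval_multiset_prod, Multiset.map_map]
        simp
      rw [this, ← hcr, ← Multiset.prod_replicate, ← Multiset.map_const', ← Multiset.prod_map_mul]
      congr 1
      refine Multiset.map_congr rfl fun b _ => ?_
      simp
    · intro a _ b _ hab
      simpa using hab
  rw [hA1, norm_mul] at hb
  have h1 : ‖ψ ((-1) ^ F.natDegree)‖ = 1 := by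
    have : IsUnit ((-1 : ZMod p) ^ F.natDegree) := IsUnit.pow _ (isUnit_one.neg)
    obtain ⟨u, hu⟩ := this
    rw [← hu]; exact DirichletCharacter.unit_norm_eq_one ψ u
  rwa [h1, one_mul] at hb

end

section
open Finset Polynomial

theorem inv_eq_pow_mulchar (p : ℕ) [Fact p.Prime] (hp3 : 3 ≤ p) (ψ : MulChar (ZMod p) ℂ)
    (x : ZMod p) : ψ⁻¹ x = ψ (x ^ (p - 2)) := by
  rcases eq_or_ne x 0 with rfl | hx
  · rw [zero_pow (by omega), MulChar.map_nonunit _ (by simp), MulChar.map_nonunit _ (by simp)]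
  · have : x ^ (p - 2) = x⁻¹ := by
      refine eq_inv_of_mul_eq_one_left ?_
      rw [← pow_succ, show p - 2 + 1 = p - 1 by omega]
      exact ZMod.pow_card_sub_one_eq_one hx
    rw [this, MulChar.inv_apply']

theorem norm_mulchar_unit (p : ℕ) [Fact p.Prime] (ψ : MulChar (ZMod p) ℂ)
    (x : ZMod p) (hx : x ≠ 0) : ‖ψ x‖ = 1 := by
  obtain ⟨u, hu⟩ := isUnit_iff_ne_zero.2 hx
  rw [← hu]; exact DirichletCharacter.unit_norm_eq_one ψ u

theorem norm_mulchar_le (p : ℕ) [Fact p.Prime] (ψ : MulChar (ZMod p) ℂ)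
    (x : ZMod p) : ‖ψ x‖ ≤ 1 := DirichletCharacter.norm_le_one ψ x

theorem single_bound (p : ℕ) [Fact p.Prime] (hp3 : 3 ≤ p) (ψ : MulChar (ZMod p) ℂ) (hψ : ψ ≠ 1)
    {ι : Type} [Fintype ι] [DecidableEq ι] (s : Finset ι) (k : ℕ) (hs : #s = k) (hsc : #sᶜ = k)
    (c : ι → ZMod p) (i0 : ι) (hi0 : i0 ∉ s) (hc : ∀ i, i ≠ i0 → c i ≠ c i0) :
    ‖∑ x : ZMod p, ∏ i, (if i ∈ s then ψ (x + c i) else ψ⁻¹ (x + c i))‖ ≤ 2 * k * Real.sqrt p := by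
  classical
  set Y : ι → MulChar (ZMod p) ℂ := fun i => if i ∈ s then ψ else ψ⁻¹ with hY
  have hYe : ∀ i x, (if i ∈ s then ψ x else ψ⁻¹ x) = Y i x := by
    intro i x; simp only [hY]; split_ifs <;> rfl
  simp only [hYe]
  have hYprod : ∏ i, Y i = 1 := by
    simp only [hY]
    rw [prod_ite, prod_const, prod_const]
    have h1 : (univ.filter fun i => i ∈ s) = s := by ext; simp
    have h2 : (univ.filter fun i => i ∉ s) = sᶜ := by ext; simp
    rw [h1, h2, hs, hsc, ← mul_pow, mul_inv_cancel, one_pow]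
  have hYapp : ∀ (t : Finset ι) (x : ZMod p), x ≠ 0 → (∏ i ∈ t, Y i) x = ∏ i ∈ t, Y i x := by
    intro t x hx
    induction t using Finset.induction_on with
    | empty => simp [MulChar.one_apply, hx]
    | insert a t ha ih => rw [prod_insert ha, prod_insert ha, MulChar.mul_apply, ih]
  set d : ι → ZMod p := fun i => c i - c i0 with hd
  set e : ι → ZMod p := fun i => (d i)⁻¹ with he
  set I := univ.erase i0 with hI
  have hdne : ∀ i ∈ I, d i ≠ 0 := by
    intro i hi; exact sub_ne_zero.2 (hc i (ne_of_mem_erase hi))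
  -- translate
  have e1 : ∑ x : ZMod p, ∏ i, Y i (x + c i) = ∑ y : ZMod p, Y i0 y * ∏ i ∈ I, Y i (y + d i) := by
    rw [← (Equiv.subRight (c i0)).sum_comp]
    refine sum_congr rfl fun y _ => ?_
    rw [← mul_prod_erase univ _ (mem_univ i0)]
    simp only [Equiv.subRight_apply]
    congr 1
    · ring_nf
    · refine prod_congr rfl fun i _ => ?_
      simp only [hd]; ring_nf
  set κ0 : ℂ := ∏ i ∈ I, Y i (d i) with hκ
  have hκ1 : ‖κ0‖ ≤ 1 := by
    rw [hκ, norm_prod]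
    exact prod_le_one (fun _ _ => norm_nonneg _) fun i _ => norm_mulchar_le p _ _
  have e2 : ∑ y : ZMod p, Y i0 y * ∏ i ∈ I, Y i (y + d i)
      = κ0 * ((∑ z : ZMod p, ∏ i ∈ I, Y i (z + e i)) - ∏ i ∈ I, Y i (0 + e i)) := by
    rw [← Equiv.sum_comp (Equiv.inv (ZMod p)), ← add_sum_erase univ _ (mem_univ (0 : ZMod p)),
      ← add_sum_erase univ (fun z : ZMod p => ∏ i ∈ I, Y i (z + e i)) (mem_univ (0 : ZMod p))]
    simp only [Equiv.inv_apply, inv_zero]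
    rw [MulChar.map_nonunit _ (by simp), zero_mul, zero_add, add_sub_cancel_left, mul_sum]
    refine sum_congr rfl fun z hz => ?_
    have hz0 : z ≠ 0 := ne_of_mem_erase hz
    have h1 : Y i0 z⁻¹ * ∏ i ∈ I, Y i z⁻¹ = 1 := by
      rw [mul_prod_erase univ (fun i => Y i z⁻¹) (mem_univ i0), ← hYapp univ _ (inv_ne_zero hz0),
        hYprod, MulChar.one_apply (isUnit_iff_ne_zero.2 (inv_ne_zero hz0))]
    have h2 : ∏ i ∈ I, Y i (z⁻¹ + d i) = (∏ i ∈ I, Y i z⁻¹) * (κ0 * ∏ i ∈ I, Y i (z + e i)) := by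
      rw [hκ, ← prod_mul_distrib, ← prod_mul_distrib]
      refine prod_congr rfl fun i hi => ?_
      rw [← map_mul, ← map_mul]
      congr 1
      simp only [he]
      have := hdne i hi
      field_simp
      ring
    rw [h2, ← mul_assoc, h1, one_mul]
  -- polynomial
  set m : ι → ℕ := fun i => if i ∈ s then 1 else p - 2 with hm
  set F : (ZMod p)[X] := ∏ i ∈ I, (X + C (e i)) ^ m i with hF
  have hFm : F.Monic := monic_prod_of_monic _ _ fun i _ => (monic_X_add_C _).pow _
  have hFs : F.Splits := Splits.prod fun i _ => (Splits.X_add_C _).pow _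
  have hsI : s ⊆ I := fun i hi => mem_erase.2 ⟨fun h => hi0 (h ▸ hi), mem_univ _⟩
  have hk1 : 1 ≤ k := by rw [← hsc]; exact card_pos.2 ⟨i0, mem_compl.2 hi0⟩
  have hIs : #(I \ s) = k - 1 := by
    have : I \ s = sᶜ.erase i0 := by ext a; rw [hI, mem_sdiff, mem_erase, mem_erase, mem_compl]; simp
    rw [this, card_erase_of_mem (mem_compl.2 hi0), hsc]
  have hFd : F.natDegree = 1 + (k - 1) * (p - 1) := by
    rw [hF, natDegree_prod_of_monic _ _ fun i _ => (monic_X_add_C _).pow _]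
    have : ∀ i ∈ I, ((X + C (e i)) ^ m i).natDegree = m i := by
      intro i _; rw [natDegree_pow, natDegree_X_add_C, mul_one]
    rw [sum_congr rfl this, ← sum_sdiff hsI]
    have h1 : ∑ i ∈ I \ s, m i = (k - 1) * (p - 2) := by
      rw [sum_congr rfl (g := fun _ => p - 2)]
      · rw [sum_const, hIs, smul_eq_mul]
      · intro i hi; simp only [hm]; rw [if_neg (mem_sdiff.1 hi).2]
    have h2 : ∑ i ∈ s, m i = k := by
      rw [sum_congr rfl (g := fun _ => 1)]
      · rw [sum_const, hs, smul_eq_mul, mul_one]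
      · intro i hi; simp only [hm]; rw [if_pos hi]
    rw [h1, h2]
    obtain ⟨q, rfl⟩ : ∃ q, p = q + 2 := ⟨p - 2, by omega⟩
    obtain ⟨l, rfl⟩ : ∃ l, k = l + 1 := ⟨k - 1, by omega⟩
    simp only [Nat.add_sub_cancel, show q + 2 - 1 = q + 1 by omega]
    ring
  have hcop : Nat.Coprime F.natDegree (p - 1) := by
    rw [hFd]; simp
  have hFev : ∀ z : ZMod p, ψ (F.eval z) = ∏ i ∈ I, Y i (z + e i) := by
    intro z
    rw [hF, eval_prod, map_prod]
    refine prod_congr rfl fun i _ => ?_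
    simp only [hm, hY, eval_pow, eval_add, eval_X, eval_C]
    split_ifs
    · rw [pow_one]
    · rw [inv_eq_pow_mulchar p hp3]
  have hw := weil_bound p hp3 F hFm hFs hcop ψ hψ
  have hcardr : (F.roots.toFinset.card : ℝ) ≤ 2 * k - 1 := by
    have hsub : F.roots.toFinset ⊆ I.image (fun i => - e i) := by
      intro z hz
      rw [Multiset.mem_toFinset, mem_roots'] at hz
      have := hz.2
      rw [IsRoot, hF, eval_prod, prod_eq_zero_iff] at this
      obtain ⟨i, hi, h⟩ := this
      rw [eval_pow] at h
      have h2 := eq_zero_of_pow_eq_zero h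
      exact mem_image.2 ⟨i, hi, by simp at h2; linear_combination -h2⟩
    have h1 : F.roots.toFinset.card ≤ 2 * k - 1 := by
      refine (card_le_card hsub).trans (card_image_le.trans ?_)
      have := card_sdiff_add_card_eq_card hsI
      omega
    have h2 : F.roots.toFinset.card + 1 ≤ 2 * k := by omega
    have h3 : (F.roots.toFinset.card : ℝ) + 1 ≤ 2 * k := by exact_mod_cast h2
    linarith
  rw [sum_congr rfl fun z _ => hFev z] at hw
  have hsq1 : 1 ≤ Real.sqrt p := by
    rw [Real.one_le_sqrt]; exact_mod_cast (by omega : 1 ≤ p)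
  rw [e1, e2, norm_mul]
  have h5 : ‖∏ i ∈ I, Y i (0 + e i)‖ ≤ 1 := by
    rw [norm_prod]
    exact prod_le_one (fun _ _ => norm_nonneg _) fun i _ => norm_mulchar_le p _ _
  calc _ ≤ 1 * (‖∑ z : ZMod p, ∏ i ∈ I, Y i (z + e i)‖ + ‖∏ i ∈ I, Y i (0 + e i)‖) := by
        gcongr; exact norm_sub_le _ _
    _ ≤ 1 * ((2 * k - 1) * Real.sqrt p + 1) := by
        gcongr
        exact hw.trans (by gcongr)
    _ ≤ _ := by linarith

open Classical in
theorem bad_count {ι : Type} [Fintype ι] [DecidableEq ι] [Nonempty ι] (k : ℕ) (hι : Fintype.card ι = 2 * k)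
    {α : Type} (T : Finset α) :
    #((Fintype.piFinset fun _ : ι => T).filter fun c => ∀ i, ∃ j, j ≠ i ∧ c j = c i)
      ≤ #T ^ k * k ^ (2 * k) := by
  have hsub : ((Fintype.piFinset fun _ : ι => T).filter fun c => ∀ i, ∃ j, j ≠ i ∧ c j = c i) ⊆
      ((Fintype.piFinset fun _ : Fin k => T) ×ˢ (univ : Finset (ι → Fin k))).image
        (fun x => x.1 ∘ x.2) := by
    intro c hc
    rw [mem_filter, Fintype.mem_piFinset] at hc
    obtain ⟨hcT, hc⟩ := hc
    have hcard : #(univ.image c) ≤ k := by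
      have h1 : ∀ b ∈ univ.image c, 2 ≤ #{a ∈ (univ : Finset ι) | c a = b} := by
        intro b hb
        obtain ⟨i, _, rfl⟩ := mem_image.1 hb
        obtain ⟨j, hj, hji⟩ := hc i
        exact one_lt_card.2 ⟨i, by simp, j, by simp [hji], hj.symm⟩
      have := card_nsmul_le_sum _ _ _ h1
      rw [← card_eq_sum_card_image, card_univ, hι, smul_eq_mul] at this
      omega
    have hne : Nonempty (univ.image c) :=
      ⟨⟨c (Classical.arbitrary ι), mem_image_of_mem _ (mem_univ _)⟩⟩
    obtain ⟨em⟩ : Nonempty ((univ.image c) ↪ Fin k) := by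
      apply Function.Embedding.nonempty_of_card_le
      simpa using hcard
    rw [mem_image]
    refine ⟨(fun a => ((Function.invFun em a : (univ.image c : Finset α)) : α), fun i => em ⟨c i, mem_image_of_mem _ (mem_univ _)⟩),
      ?_, ?_⟩
    · rw [mem_product]
      refine ⟨?_, mem_univ _⟩
      rw [Fintype.mem_piFinset]
      intro a
      obtain ⟨i, _, hi⟩ := mem_image.1 (Function.invFun em a).2
      change ((Function.invFun em a : (univ.image c : Finset α)) : α) ∈ T
      rw [← hi]; exact hcT i
    · funext i
      simp only [Function.comp_apply]
      rw [Function.leftInverse_invFun em.injective]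
  refine (card_le_card hsub).trans (card_image_le.trans ?_)
  rw [card_product, Fintype.card_piFinset_const, card_univ, Fintype.card_fun, hι]
  simp


open Classical in
theorem moment_bound (p : ℕ) [Fact p.Prime] (hp3 : 3 ≤ p) (χ : MulChar (ZMod p) ℂ) (hχ : χ ≠ 1)
    (T : Finset (ZMod p)) (k : ℕ) (hk : 1 ≤ k) :
    ∑ x : ZMod p, ∑ y : ZMod p, ‖∑ t ∈ T, χ (x + t) * χ⁻¹ (y + t)‖ ^ (2 * k)
      ≤ (#T : ℝ) ^ k * k ^ (2 * k) * p ^ 2 + (2 * k) ^ 2 * p * (#T : ℝ) ^ (2 * k) := by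
  have : Nonempty (Fin k) := ⟨⟨0, hk⟩⟩
  set ι := Fin k ⊕ Fin k with hι
  set sL : Finset ι := univ.filter (fun i => i.isLeft) with hsL
  have hsLc : sLᶜ = univ.filter (fun i : ι => i.isRight) := by
    ext i; rcases i with i | i <;> simp [hsL]
  have hL : #sL = k := by
    have : sL = univ.map Function.Embedding.inl := by
      ext i; rcases i with i | i <;> simp [hsL, Function.Embedding.inl]
      exact ⟨i, rfl⟩
    rw [this]; simp
  have hR : #sLᶜ = k := by
    have : sLᶜ = univ.map Function.Embedding.inr := by
      rw [hsLc]; ext i; rcases i with i | i <;> simp [Function.Embedding.inr]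
      exact ⟨i, rfl⟩
    rw [this]; simp
  have hconj : ∀ z, (starRingEnd ℂ) (χ z) = χ⁻¹ z := by
    intro z; rw [← MulChar.star_eq_inv]; rfl
  have hconj' : ∀ z, (starRingEnd ℂ) (χ⁻¹ z) = χ z := by
    intro z; rw [← hconj, Complex.conj_conj]
  let H : (ι → ZMod p) → ℂ := fun c =>
    ∑ x : ZMod p, ∏ i, (if i ∈ sL then χ (x + c i) else χ⁻¹ (x + c i))
  have hpt : ∀ x y : ZMod p, ((‖∑ t ∈ T, χ (x + t) * χ⁻¹ (y + t)‖ ^ (2 * k) : ℝ) : ℂ)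
      = ∑ c ∈ Fintype.piFinset (fun _ : ι => T),
        (∏ i, (if i ∈ sL then χ (x + c i) else χ⁻¹ (x + c i))) *
        (starRingEnd ℂ) (∏ i, (if i ∈ sL then χ (y + c i) else χ⁻¹ (y + c i))) := by
    intro x y
    set Z := ∑ t ∈ T, χ (x + t) * χ⁻¹ (y + t) with hZ
    have h1 : ((‖Z‖ ^ (2 * k) : ℝ) : ℂ) = Z ^ k * ((starRingEnd ℂ) Z) ^ k := by
      rw [← mul_pow, Complex.mul_conj, pow_mul, Complex.normSq_eq_norm_sq]; push_cast; rfl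
    have h2 : Z ^ k * ((starRingEnd ℂ) Z) ^ k =
        ∏ i : ι, ∑ t ∈ T, (if i ∈ sL then χ (x + t) * χ⁻¹ (y + t) else χ⁻¹ (x + t) * χ (y + t)) := by
      rw [Fintype.prod_sum_type]
      simp only [hsL, mem_filter, mem_univ, true_and, Sum.isLeft_inl, Sum.isLeft_inr, if_true,
        prod_const, card_univ, Fintype.card_fin]
      congr 2
      rw [hZ, map_sum]
      refine sum_congr rfl fun t _ => ?_
      rw [map_mul, hconj, hconj']; simp
    rw [h1, h2, prod_univ_sum]
    refine sum_congr rfl fun c _ => ?_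
    rw [map_prod, ← prod_mul_distrib]
    refine prod_congr rfl fun i _ => ?_
    split_ifs
    · rw [hconj]
    · rw [hconj']
  have hsum : ∑ x : ZMod p, ∑ y : ZMod p, ‖∑ t ∈ T, χ (x + t) * χ⁻¹ (y + t)‖ ^ (2 * k)
      = ∑ c ∈ Fintype.piFinset (fun _ : ι => T), ‖H c‖ ^ 2 := by
    apply Complex.ofReal_injective
    push_cast
    simp only [Complex.ofReal_pow] at hpt
    rw [sum_congr rfl fun x _ => sum_congr rfl fun y _ => hpt x y]
    rw [sum_congr rfl fun x _ => sum_comm, sum_comm]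
    refine sum_congr rfl fun c _ => ?_
    rw [← Complex.ofReal_pow, ← Complex.normSq_eq_norm_sq, ← Complex.mul_conj]
    simp only [H]
    rw [map_sum, sum_mul_sum]
  rw [hsum, ← sum_filter_add_sum_filter_not _ (fun c : ι → ZMod p => ∀ i, ∃ j, j ≠ i ∧ c j = c i)]
  have hp0 : (0:ℝ) ≤ p := by positivity
  refine add_le_add ?_ ?_
  · calc _ ≤ ∑ c ∈ (Fintype.piFinset fun _ : ι => T).filter
            (fun c => ∀ i, ∃ j, j ≠ i ∧ c j = c i), (p : ℝ) ^ 2 := by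
          refine sum_le_sum fun c _ => ?_
          gcongr
          calc ‖H c‖ ≤ ∑ x : ZMod p, (1 : ℝ) := by
                refine norm_sum_le_of_le _ fun x _ => ?_
                rw [norm_prod]
                refine prod_le_one (fun _ _ => norm_nonneg _) fun i _ => ?_
                split_ifs <;> exact norm_mulchar_le p _ _
            _ = p := by simp [ZMod.card]
      _ ≤ _ := by
          rw [sum_const, nsmul_eq_mul]
          have := bad_count (ι := ι) k (by simp [hι, two_mul]) T
          gcongr
          exact_mod_cast this
  · calc _ ≤ ∑ c ∈ (Fintype.piFinset fun _ : ι => T).filter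
            (fun c => ¬ ∀ i, ∃ j, j ≠ i ∧ c j = c i), (2 * k * Real.sqrt p) ^ 2 := by
          refine sum_le_sum fun c hc => ?_
          gcongr
          have hc2 := (mem_filter.1 hc).2
          push Not at hc2
          obtain ⟨i0, hi0⟩ := hc2
          by_cases hmem : i0 ∈ sL
          · have := single_bound p hp3 χ⁻¹ (by simpa using hχ) sLᶜ k hR (by simpa using hL) c i0
              (by simpa using hmem) hi0
            refine le_of_eq_of_le ?_ this
            congr 1
            refine sum_congr rfl fun x _ => ?_
            refine prod_congr rfl fun i _ => ?_
            rw [inv_inv]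
            by_cases h : i ∈ sL <;> simp [h]
          · exact single_bound p hp3 χ hχ sL k hL hR c i0 hmem hi0
      _ ≤ ∑ c ∈ (Fintype.piFinset fun _ : ι => T), (2 * k * Real.sqrt p) ^ 2 :=
          sum_le_sum_of_subset_of_nonneg (filter_subset _ _) fun _ _ _ => by positivity
      _ = _ := by
          rw [sum_const, Fintype.card_piFinset, prod_const, card_univ, nsmul_eq_mul, mul_pow, Real.sq_sqrt hp0]
          simp only [hι, Fintype.card_sum, Fintype.card_fin, ← two_mul]
          push_cast; ring

end

section
open Finset

theorem divisor_bound (ε : ℝ) (hε : 0 < ε) :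
    ∃ C : ℝ, 1 ≤ C ∧ ∀ n : ℕ, n ≠ 0 → (#n.divisors : ℝ) ≤ C * (n : ℝ) ^ ε := by
  have hl2 : 0 < Real.log 2 := Real.log_pos (by norm_num)
  set K : ℝ := 1 + 1 / (ε * Real.log 2) with hK
  have hK1 : 1 ≤ K := by rw [hK]; have : 0 < 1 / (ε * Real.log 2) := by positivity
                         linarith
  set B : ℕ := ⌈(2 : ℝ) ^ (1 / ε)⌉₊ with hB
  refine ⟨K ^ B, one_le_pow₀ hK1, ?_⟩
  intro n hn
  have hloc : ∀ q ∈ n.primeFactors, ((n.factorization q + 1 : ℕ) : ℝ) ≤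
      (if q < B then K else 1) * ((q : ℝ) ^ (n.factorization q)) ^ ε := by
    intro q hq
    have hq2 : 2 ≤ q := (Nat.prime_of_mem_primeFactors hq).two_le
    set e := n.factorization q
    have hq0 : (0:ℝ) ≤ q := by positivity
    have e1 : ((q : ℝ) ^ e) ^ ε = ((q : ℝ) ^ ε) ^ e := by
      rw [← Real.rpow_natCast, ← Real.rpow_natCast, ← Real.rpow_mul hq0, ← Real.rpow_mul hq0,
        mul_comm]
    rw [e1]
    split_ifs with h
    · have h1 : (2:ℝ) ^ ε ≤ (q : ℝ) ^ ε := by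
        apply Real.rpow_le_rpow (by norm_num) (by exact_mod_cast hq2) hε.le
      have h2 : 1 + ε * Real.log 2 * e ≤ ((2:ℝ) ^ ε) ^ e := by
        rw [← Real.rpow_natCast, ← Real.rpow_mul (by norm_num), Real.rpow_def_of_pos (by norm_num)]
        have := Real.add_one_le_exp (Real.log 2 * (ε * e))
        linarith
      have h3 : ((2:ℝ) ^ ε) ^ e ≤ ((q : ℝ) ^ ε) ^ e := by gcongr
      calc ((e + 1 : ℕ) : ℝ) ≤ K * (1 + ε * Real.log 2 * e) := by
            push_cast
            have : K * (1 + ε * Real.log 2 * e) = 1 + e + (ε * Real.log 2 * e + 1 / (ε * Real.log 2)) := by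
              rw [hK]; field_simp; ring
            rw [this]
            have : 0 ≤ (ε * Real.log 2 * e + 1 / (ε * Real.log 2)) := by positivity
            linarith
        _ ≤ _ := by gcongr; linarith
    · have h1 : (2:ℝ) ≤ (q : ℝ) ^ ε := by
        have h4 : (2:ℝ) ^ (1 / ε) ≤ q := (Nat.le_ceil _).trans (by exact_mod_cast not_lt.1 h)
        calc (2:ℝ) = ((2:ℝ) ^ (1 / ε)) ^ ε := by
              rw [← Real.rpow_mul (by norm_num), one_div_mul_cancel hε.ne', Real.rpow_one]
          _ ≤ _ := Real.rpow_le_rpow (by positivity) h4 hε.le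
      rw [one_mul]
      calc ((e + 1 : ℕ) : ℝ) ≤ (2:ℝ) ^ e := by
            have : e + 1 ≤ 2 ^ e := Nat.lt_two_pow_self
            exact_mod_cast this
        _ ≤ _ := by gcongr
  have hprod : (n : ℝ) = ∏ q ∈ n.primeFactors, (q : ℝ) ^ (n.factorization q) := by
    have := Nat.prod_factorization_pow_eq_self hn
    conv_lhs => rw [← this]
    rw [Finsupp.prod]; push_cast; rfl
  rw [Nat.card_divisors hn]
  have hnε : (n : ℝ) ^ ε = ∏ q ∈ n.primeFactors, ((q : ℝ) ^ (n.factorization q)) ^ ε := by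
    conv_lhs => rw [hprod]
    rw [Real.finsetProd_rpow _ _ (fun _ _ => by positivity)]
  rw [hnε]
  push_cast
  calc _ ≤ ∏ q ∈ n.primeFactors, (if q < B then K else 1) * ((q : ℝ) ^ (n.factorization q)) ^ ε := by
        refine prod_le_prod (fun _ _ => by positivity) fun q hq => ?_
        exact_mod_cast hloc q hq
    _ = (∏ q ∈ n.primeFactors, (if q < B then K else 1)) *
          ∏ q ∈ n.primeFactors, ((q : ℝ) ^ (n.factorization q)) ^ ε := prod_mul_distrib
    _ ≤ _ := by
        gcongr
        rw [prod_ite, prod_const, prod_const_one, mul_one]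
        refine pow_le_pow_right₀ hK1 ?_
        calc _ ≤ #(range B) := card_le_card fun q hq => mem_range.2 (mem_filter.1 hq).2
          _ = B := card_range B

theorem spacing (Q : Finset ℝ) (α β : ℝ) (hα : 0 < α) (hβ : 0 ≤ β)
    (h1 : ∀ x ∈ Q, ∀ y ∈ Q, x ≠ y → α ≤ |x - y|) (h2 : ∀ x ∈ Q, ∀ y ∈ Q, |x - y| ≤ β) :
    (#Q : ℝ) ≤ 1 + β / α := by
  rcases Q.eq_empty_or_nonempty with rfl | hne
  · simp; positivity
  · obtain ⟨m, hm, hmin⟩ := exists_min_image Q id hne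
    have hb : 0 ≤ β := (abs_nonneg _).trans (h2 m hm m hm)
    have hmaps : ∀ x ∈ Q, ⌊(x - m) / α⌋₊ ∈ range (⌊β / α⌋₊ + 1) := by
      intro x hx
      rw [mem_range, Nat.lt_succ_iff]
      apply Nat.floor_le_floor
      gcongr
      exact (le_abs_self _).trans (h2 x hx m hm)
    have hinj : Set.InjOn (fun x => ⌊(x - m) / α⌋₊) Q := by
      have key : ∀ x ∈ Q, ∀ y ∈ Q, y < x → ⌊(x - m) / α⌋₊ ≠ ⌊(y - m) / α⌋₊ := by
        intro x hx y hy hxy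
        have h3 := h1 x hx y hy hxy.ne'
        rw [abs_of_pos (by linarith)] at h3
        have h4 : (y - m) / α + 1 ≤ (x - m) / α := by
          rw [div_add_one hα.ne']; gcongr; linarith
        have h5 : 0 ≤ (y - m) / α := div_nonneg (by have := hmin y hy; simp at this; linarith) hα.le
        have := Nat.floor_le_floor h4
        rw [Nat.floor_add_one h5] at this
        omega
      intro x hx y hy hxy
      by_contra hne
      rcases lt_or_gt_of_ne hne with h | h
      · exact key y hy x hx h hxy.symm
      · exact key x hx y hy h hxy
    have hc := card_le_card_of_injOn _ hmaps hinj
    rw [card_range] at hc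
    have : (#Q : ℝ) ≤ ⌊β / α⌋₊ + 1 := by exact_mod_cast hc
    have h6 : (⌊β / α⌋₊ : ℝ) ≤ β / α := Nat.floor_le (by positivity)
    linarith

end

section
open Finset

theorem Sg_bound (M : ℕ) (β : ℝ) (hβ : 1 ≤ β) (P : Finset (ℚ × ℚ))
    (hF : ∀ q ∈ P, (0 ≤ q.1.num ∧ q.1.num ≤ q.1.den ∧ q.1.den ≤ M ∧ (M : ℝ) ≤ β * q.1.den) ∧
      (0 ≤ q.2.num ∧ q.2.num ≤ q.2.den ∧ q.2.den ≤ M))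
    (A B C E : ℤ) (DD : ℕ) (hDD : 0 < DD) (hdet : A * E - B * C = DD ∨ A * E - B * C = -DD)
    (g : ℤ) (hg : g ≠ 0)
    (c : ℕ) (hc : 0 < c) (hcdef : ∀ n : ℤ, g ∣ A * n → g ∣ B * n → g ∣ C * n → g ∣ E * n → g ∣ c * n)
    (h1 : ∀ q ∈ P, A * q.1.den + B * q.1.num = - g * q.2.num)
    (h2 : ∀ q ∈ P, C * q.1.den + E * q.1.num = g * q.2.den) :
    (#P : ℝ) ≤ 1 + c * β ^ 2 * M ^ 2 / √DD := by
  classical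
  have hDDr : (0:ℝ) < √DD := Real.sqrt_pos.2 (by exact_mod_cast hDD)
  rcases Nat.eq_zero_or_pos M with hM | hM
  · have : P = ∅ := by
      apply eq_empty_of_forall_notMem
      intro q hq
      have := (hF q hq).1.2.2.1
      have := q.1.den_pos
      omega
    subst this; simp; positivity
  have hMr : (0:ℝ) < M := by exact_mod_cast hM
  have hinj : Set.InjOn (fun q : ℚ × ℚ => (q.1 : ℝ)) P := by
    intro q hq r hr h
    have h0 : q.1 = r.1 := by simpa using h
    have e1 := h1 q hq; have e2 := h2 q hq
    rw [h0] at e1 e2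
    have e3 := (h1 r hr).symm.trans e1
    have e4 := (h2 r hr).symm.trans e2
    have e5 := mul_left_cancel₀ (neg_ne_zero.2 hg) e3
    have e6 := mul_left_cancel₀ hg e4
    refine Prod.ext h0 (Rat.ext e5.symm (by exact_mod_cast e6.symm))
  have hgr : (0:ℝ) < |(g:ℝ)| := abs_pos.2 (by exact_mod_cast hg)
  have hcr : (0:ℝ) < c := by exact_mod_cast hc
  have hdiff : ∀ x y : ℚ, ((x : ℝ) - y) = ((x.num * y.den - y.num * x.den : ℤ) : ℝ) / (x.den * y.den) := by
    intro x y
    have hx : (x:ℝ) = x.num / x.den := by exact_mod_cast (Rat.num_div_den x).symm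
    have hy : (y:ℝ) = y.num / y.den := by exact_mod_cast (Rat.num_div_den y).symm
    have : (x.den:ℝ) ≠ 0 := by exact_mod_cast x.den_nz
    have : (y.den:ℝ) ≠ 0 := by exact_mod_cast y.den_nz
    rw [hx, hy]; push_cast; field_simp
  have hden1 : ∀ x : ℚ, (0:ℝ) < x.den := fun x => by exact_mod_cast x.den_pos
  rw [← card_image_of_injOn hinj]
  have habs : ∀ x y x' y' : ℤ, 0 ≤ x → x ≤ x' → x' ≤ M → 0 ≤ y → y ≤ y' → y' ≤ M →
      |((x * y' - y * x' : ℤ) : ℝ)| ≤ M ^ 2 := by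
    intro x y x' y' a1 a2 a3 b1 b2 b3
    have : |x * y' - y * x'| ≤ (M:ℤ) ^ 2 := by
      rw [abs_le]; constructor <;> nlinarith
    exact_mod_cast this
  refine (spacing _ ((|(g:ℝ)| / c) / M ^ 2) (|(g:ℝ)| * β ^ 2 / √DD) (by positivity) (by positivity) ?_ ?_).trans ?_
  · intro x hx y hy hxy
    simp only [mem_image] at hx hy
    obtain ⟨q, hq, rfl⟩ := hx
    obtain ⟨r, hr, rfl⟩ := hy
    set Δ : ℤ := q.1.num * r.1.den - r.1.num * q.1.den with hΔ
    have hne : Δ ≠ 0 := by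
      intro h0
      apply hxy
      have := hdiff q.1 r.1
      rw [← hΔ, h0] at this
      simp at this
      exact_mod_cast sub_eq_zero.1 this
    have hd : g ∣ c * Δ := by
      have e1 := h1 q hq; have e2 := h2 q hq
      have f1 := h1 r hr; have f2 := h2 r hr
      apply hcdef
      · exact ⟨q.2.num * r.1.num - r.2.num * q.1.num, by linear_combination -r.1.num * e1 + q.1.num * f1⟩
      · exact ⟨-q.2.num * r.1.den + r.2.num * q.1.den, by linear_combination r.1.den * e1 - q.1.den * f1⟩
      · exact ⟨-q.2.den * r.1.num + r.2.den * q.1.num, by linear_combination -r.1.num * e2 + q.1.num * f2⟩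
      · exact ⟨q.2.den * r.1.den - r.2.den * q.1.den, by linear_combination r.1.den * e2 - q.1.den * f2⟩
    have hle : |(g:ℝ)| ≤ c * |(Δ:ℝ)| := by
      have : |g| ≤ |c * Δ| := Int.le_of_dvd (abs_pos.2 (mul_ne_zero (by exact_mod_cast hc.ne') hne)) (by rwa [abs_dvd, dvd_abs])
      rw [abs_mul, Nat.abs_cast] at this
      exact_mod_cast this
    rw [hdiff, ← hΔ, abs_div, abs_of_pos (mul_pos (hden1 _) (hden1 _))]
    have hq1 : (q.1.den : ℝ) ≤ M := by exact_mod_cast (hF q hq).1.2.2.1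
    have hr1 : (r.1.den : ℝ) ≤ M := by exact_mod_cast (hF r hr).1.2.2.1
    apply div_le_div₀ (abs_nonneg _) _ (mul_pos (hden1 _) (hden1 _))
    · rw [pow_two]; gcongr
    · rw [div_le_iff₀ hcr]; linarith
  · intro x hx y hy
    simp only [mem_image] at hx hy
    obtain ⟨q, hq, rfl⟩ := hx
    obtain ⟨r, hr, rfl⟩ := hy
    set Δ : ℤ := q.1.num * r.1.den - r.1.num * q.1.den with hΔ
    set Δ' : ℤ := q.2.num * r.2.den - r.2.num * q.2.den with hΔ'
    obtain ⟨⟨a1, a2, a3, a4⟩, a5, a6, a7⟩ := hF q hq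
    obtain ⟨⟨b1, b2, b3, b4⟩, b5, b6, b7⟩ := hF r hr
    have l1 : |(Δ:ℝ)| ≤ M ^ 2 := habs _ _ _ _ a1 a2 (by exact_mod_cast a3) b1 b2 (by exact_mod_cast b3)
    have l2 : |(Δ':ℝ)| ≤ M ^ 2 := habs _ _ _ _ a5 a6 (by exact_mod_cast a7) b5 b6 (by exact_mod_cast b7)
    have e1 := h1 q hq; have e2 := h2 q hq
    have f1 := h1 r hr; have f2 := h2 r hr
    have key : (A * E - B * C) * Δ = g ^ 2 * Δ' := by
      rw [hΔ, hΔ']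
      have : (A * r.1.den + B * r.1.num) * (C * q.1.den + E * q.1.num) - (A * q.1.den + B * q.1.num) * (C * r.1.den + E * r.1.num) = g ^ 2 * Δ' := by
        rw [e1, e2, f1, f2]; ring
      rw [hΔ'] at this
      linear_combination this
    have keyr : (DD:ℝ) * |(Δ:ℝ)| = |(g:ℝ)| ^ 2 * |(Δ':ℝ)| := by
      have h3 : |A * E - B * C| = (DD : ℤ) := by
        rcases hdet with h | h <;> rw [h] <;> simp
      have := congrArg abs key
      rw [abs_mul, abs_mul, h3, abs_pow] at this
      exact_mod_cast this
    have hsq : √(DD:ℝ) * √DD = DD := Real.mul_self_sqrt (by positivity)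
    have l3 : |(Δ:ℝ)| ≤ M ^ 2 * |(g:ℝ)| / √DD := by
      rw [le_div_iff₀ hDDr]
      rcases le_total (√(DD:ℝ)) |(g:ℝ)| with h | h
      · gcongr
      · have : √(DD:ℝ) * (|(Δ:ℝ)| * √DD) ≤ √DD * (M ^ 2 * |(g:ℝ)|) := by
          calc √(DD:ℝ) * (|(Δ:ℝ)| * √DD) = DD * |(Δ:ℝ)| := by linear_combination |(Δ:ℝ)| * hsq
            _ = |(g:ℝ)| * |(g:ℝ)| * |(Δ':ℝ)| := by rw [keyr]; ring
            _ ≤ √DD * |(g:ℝ)| * M ^ 2 := by gcongr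
            _ = _ := by ring
        exact le_of_mul_le_mul_left this hDDr
    rw [hdiff, ← hΔ, abs_div, abs_of_pos (mul_pos (hden1 _) (hden1 _)), div_le_iff₀ (mul_pos (hden1 _) (hden1 _))]
    refine l3.trans ?_
    rw [div_mul_eq_mul_div]
    have : (M:ℝ) ^ 2 ≤ (β * q.1.den) * (β * r.1.den) := by rw [pow_two]; gcongr
    apply div_le_div_of_nonneg_right _ hDDr.le
    calc (M:ℝ) ^ 2 * |(g:ℝ)| ≤ (β * q.1.den) * (β * r.1.den) * |(g:ℝ)| := by gcongr
      _ = _ := by ring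
  · apply le_of_eq
    field_simp

theorem J_bound (M : ℕ) (β : ℝ) (hβ : 1 ≤ β) (F : Finset ℚ)
    (hF : ∀ q ∈ F, 0 ≤ q.num ∧ q.num ≤ q.den ∧ q.den ≤ M ∧ (M : ℝ) ≤ β * q.den)
    (u v z1 z2 u' v' z1' z2' : ℤ) (D D' : ℕ) (hD : (D:ℤ) = z2 * u - z1 * v) (hD0 : 0 < D)
    (hD' : (D':ℤ) = z2' * u' - z1' * v') (hD0' : 0 < D')
    (c : ℕ) (hc : c = Int.gcd (Int.gcd (z1 * u' - u * z1') (z2 * u' - v * z1'))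
        (Int.gcd (z1 * v' - u * z2') (z2 * v' - v * z2'))) (hc0 : 0 < c) :
    (#{q ∈ F ×ˢ F | (z1 * q.1.den + z2 * q.1.num) * (u' * q.2.den + v' * q.2.num) =
        (z1' * q.2.den + z2' * q.2.num) * (u * q.1.den + v * q.1.num)} : ℝ) ≤
      2 * #(D * D').divisors * (1 + c * β ^ 2 * M ^ 2 / √((D * D' : ℕ) : ℝ)) := by
  classical
  set A := z1 * u' - u * z1' with hA
  set B := z2 * u' - v * z1' with hB
  set C := z1 * v' - u * z2' with hC
  set E := z2 * v' - v * z2' with hE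
  have hdet : A * E - B * C = ((D * D' : ℕ) : ℤ) ∨ A * E - B * C = -((D * D' : ℕ) : ℤ) := by
    push_cast
    rw [hA, hB, hC, hE, hD, hD']
    left; ring
  set P := {q ∈ F ×ˢ F | (z1 * q.1.den + z2 * q.1.num) * (u' * q.2.den + v' * q.2.num) =
        (z1' * q.2.den + z2' * q.2.num) * (u * q.1.den + v * q.1.num)} with hP
  let f : ℚ × ℚ → ℤ := fun q => (C * q.1.den + E * q.1.num) / q.2.den
  have hden : ∀ x : ℚ, (x.den:ℤ) ≠ 0 := fun x => by exact_mod_cast x.den_nz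
  have hf : ∀ q ∈ P, C * q.1.den + E * q.1.num = f q * q.2.den ∧
      A * q.1.den + B * q.1.num = - f q * q.2.num := by
    intro q hq
    have h := (mem_filter.1 hq).2
    have h0 : (A * q.1.den + B * q.1.num) * q.2.den = -(C * q.1.den + E * q.1.num) * q.2.num := by
      rw [hA, hB, hC, hE]; linear_combination h
    have hcop : IsCoprime (q.2.den : ℤ) q.2.num := by
      rw [Int.isCoprime_iff_gcd_eq_one, Int.gcd_comm]
      exact q.2.reduced
    have hdvd : (q.2.den : ℤ) ∣ C * q.1.den + E * q.1.num := by
      apply hcop.dvd_of_dvd_mul_right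
      exact ⟨-(A * q.1.den + B * q.1.num), by linear_combination h0⟩
    have e1 : C * q.1.den + E * q.1.num = f q * q.2.den := (Int.ediv_mul_cancel hdvd).symm
    refine ⟨e1, ?_⟩
    rw [e1] at h0
    apply mul_right_cancel₀ (hden q.2)
    linear_combination h0
  have hDDne : ((D * D' : ℕ) : ℤ) ≠ 0 := by exact_mod_cast (Nat.mul_pos hD0 hD0').ne'
  have hdetne : A * E - B * C ≠ 0 := by
    rcases hdet with h | h <;> rw [h]
    · exact hDDne
    · exact neg_ne_zero.2 hDDne
  have hfdvd : ∀ q ∈ P, f q ∣ ((D * D' : ℕ) : ℤ) := by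
    intro q hq
    obtain ⟨e1, e2⟩ := hf q hq
    have d1 : f q ∣ (A * E - B * C) * q.1.den :=
      ⟨-(q.2.num * E) - B * q.2.den, by linear_combination E * e2 - B * e1⟩
    have d2 : f q ∣ (A * E - B * C) * q.1.num :=
      ⟨q.2.num * C + A * q.2.den, by linear_combination -C * e2 + A * e1⟩
    have hcop : IsCoprime (q.1.den : ℤ) q.1.num := by
      rw [Int.isCoprime_iff_gcd_eq_one, Int.gcd_comm]
      exact q.1.reduced
    obtain ⟨a, b, hab⟩ := hcop
    have d3 : f q ∣ A * E - B * C := by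
      have : A * E - B * C = a * ((A * E - B * C) * q.1.den) + b * ((A * E - B * C) * q.1.num) := by
        linear_combination -(A * E - B * C) * hab
      rw [this]
      exact dvd_add (d1.mul_left _) (d2.mul_left _)
    rcases hdet with h | h <;> rw [h] at d3
    · exact d3
    · exact (dvd_neg.1 d3)
  let G : Finset ℤ := (D * D').divisors.image (fun n : ℕ => (n:ℤ)) ∪ (D * D').divisors.image (fun n : ℕ => -(n:ℤ))
  have hG : ∀ q ∈ P, f q ∈ G := by
    intro q hq
    have h := hfdvd q hq
    have h' : (f q).natAbs ∈ (D * D').divisors := by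
      rw [Nat.mem_divisors]
      exact ⟨Int.natCast_dvd_natCast.1 (by rwa [Int.natAbs_dvd]), (Nat.mul_pos hD0 hD0').ne'⟩
    rw [mem_union, mem_image, mem_image]
    rcases Int.natAbs_eq (f q) with h2 | h2
    · exact Or.inl ⟨_, h', h2.symm⟩
    · exact Or.inr ⟨_, h', h2.symm⟩
  have hGc : #G ≤ 2 * #(D * D').divisors := by
    refine (card_union_le _ _).trans ?_
    have := card_image_le (s := (D * D').divisors) (f := fun n : ℕ => (n:ℤ))
    have := card_image_le (s := (D * D').divisors) (f := fun n : ℕ => -(n:ℤ))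
    omega
  have hsum : (#P : ℝ) = ∑ g ∈ G, (#{q ∈ P | f q = g} : ℝ) := by
    exact_mod_cast card_eq_sum_card_fiberwise hG
  rw [hsum]
  have hX : 0 ≤ 1 + c * β ^ 2 * M ^ 2 / √((D * D' : ℕ) : ℝ) := by positivity
  calc _ ≤ ∑ g ∈ G, (1 + c * β ^ 2 * M ^ 2 / √((D * D' : ℕ) : ℝ)) := by
        apply sum_le_sum
        intro g _
        by_cases hg : g = 0
        · have : {q ∈ P | f q = g} = ∅ := by
            apply eq_empty_of_forall_notMem
            intro q hq
            rw [mem_filter] at hq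
            have := hfdvd q hq.1
            rw [hq.2, hg, zero_dvd_iff] at this
            exact hDDne this
          rw [this]; simpa using hX
        apply Sg_bound M β hβ _ _ A B C E (D * D') (Nat.mul_pos hD0 hD0') hdet g hg c hc0
        · intro n n1 n2 n3 n4
          rw [hc]
          have h1 : g ∣ (Int.gcd A B : ℤ) * n := by
            rw [Int.gcd_eq_gcd_ab A B]
            have : (A * A.gcdA B + B * A.gcdB B) * n = A * n * A.gcdA B + B * n * A.gcdB B := by ring
            rw [this]; exact dvd_add (n1.mul_right _) (n2.mul_right _)
          have h2 : g ∣ (Int.gcd C E : ℤ) * n := by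
            rw [Int.gcd_eq_gcd_ab C E]
            have : (C * C.gcdA E + E * C.gcdB E) * n = C * n * C.gcdA E + E * n * C.gcdB E := by ring
            rw [this]; exact dvd_add (n3.mul_right _) (n4.mul_right _)
          rw [Int.gcd_eq_gcd_ab (Int.gcd A B : ℤ)]
          generalize (Int.gcd A B : ℤ) = X at *
          generalize (Int.gcd C E : ℤ) = Y at *
          have : (X * X.gcdA Y + Y * X.gcdB Y) * n = X * n * X.gcdA Y + Y * n * X.gcdB Y := by ring
          rw [this]; exact dvd_add (h1.mul_right _) (h2.mul_right _)
        · intro q hq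
          rw [mem_filter] at hq
          have := (hf q hq.1).2
          rwa [hq.2] at this
        · intro q hq
          rw [mem_filter] at hq
          have := (hf q hq.1).1
          rwa [hq.2] at this
        · intro q hq
          rw [mem_filter, hP, mem_filter, mem_product] at hq
          obtain ⟨a1, a2, a3, a4⟩ := hF _ hq.1.1.2
          exact ⟨hF _ hq.1.1.1, a1, a2, a3⟩
    _ = #G * (1 + c * β ^ 2 * M ^ 2 / √((D * D' : ℕ) : ℝ)) := by rw [sum_const, nsmul_eq_mul]
    _ ≤ _ := by
        apply mul_le_mul_of_nonneg_right _ hX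
        exact_mod_cast hGc

end

section
open Finset

theorem window_count (S : Finset ℤ) (a m e : ℤ) (hm : 0 < m)
    (h1 : ∀ y ∈ S, a ≤ y ∧ y < a + m) (h2 : ∀ y ∈ S, ∀ y' ∈ S, m ∣ e * (y - y')) :
    #S ≤ Int.gcd e m := by
  have hg : 0 < Int.gcd e m := Int.gcd_pos_of_ne_zero_right _ hm.ne'
  obtain ⟨k, hk⟩ : ((Int.gcd e m : ℕ) : ℤ) ∣ m := Int.gcd_dvd_right _ _
  set g : ℤ := ((Int.gcd e m : ℕ) : ℤ) with hgdef
  have hg' : 0 < g := by rw [hgdef]; exact_mod_cast hg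
  have hk0 : 0 < k := by
    by_contra h; push Not at h; nlinarith
  have key : ∀ y ∈ S, ∀ y' ∈ S, k ∣ y - y' := by
    intro y hy y' hy'
    have h := h2 y hy y' hy'
    have h3 : m ∣ g * (y - y') := by
      rw [hgdef, Int.gcd_eq_gcd_ab]
      have : (e * e.gcdA m + m * e.gcdB m) * (y - y') = e * (y - y') * e.gcdA m + m * (e.gcdB m * (y - y')) := by ring
      rw [this]
      exact dvd_add (h.mul_right _) (dvd_mul_right _ _)
    rw [hk] at h3
    exact (mul_dvd_mul_iff_left hg'.ne').1 h3
  have hmaps : ∀ y ∈ S, (y - a) / k ∈ Ico 0 g := by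
    intro y hy
    have := h1 y hy
    rw [mem_Ico]
    refine ⟨Int.ediv_nonneg (by linarith) hk0.le, ?_⟩
    rw [Int.ediv_lt_iff_lt_mul hk0]
    linarith
  have hinj : Set.InjOn (fun y => (y - a) / k) S := by
    intro y hy y' hy' h
    simp only at h
    obtain ⟨d, hd⟩ := key y hy y' hy'
    have : y - a = y' - a + k * d := by linarith
    rw [this, Int.add_mul_ediv_left _ _ hk0.ne'] at h
    have : d = 0 := by linarith
    subst this; linarith
  have := card_le_card_of_injOn _ hmaps hinj
  simpa [hgdef] using this

theorem inner_sum_farey {ι : Type*} (Y : Finset ι) (D : ι → ℕ) (N g : ℕ) (hD : ∀ y ∈ Y, 1 ≤ D y ∧ D y ≤ N)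
    (hfib : ∀ n : ℕ, #{y ∈ Y | D y = n} ≤ g) (d : ℕ) :
    ∑ y ∈ Y with d ∣ D y, (d : ℝ) / D y ≤ g * (1 + Real.log N) := by
  classical
  have hmaps : ∀ y ∈ {y ∈ Y | d ∣ D y}, D y / d ∈ Icc 1 N := by
    intro y hy
    rw [mem_filter] at hy
    obtain ⟨hy, k, hk⟩ := hy
    have h1 := hD y hy
    have hd0 : 0 < d := by
      rcases Nat.eq_zero_or_pos d with h | h
      · subst h; simp at hk; omega
      · exact h
    rw [mem_Icc]
    constructor
    · exact Nat.div_pos (Nat.le_of_dvd (by omega) ⟨k, hk⟩) hd0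
    · exact (Nat.div_le_self _ _).trans h1.2
  rw [← sum_fiberwise_of_maps_to hmaps]
  have hh := harmonic_le_one_add_log N
  rw [harmonic_eq_sum_Icc] at hh
  push_cast at hh
  calc _ ≤ ∑ m ∈ Icc 1 N, (g : ℝ) * ((m:ℝ))⁻¹ := by
        apply sum_le_sum
        intro m hm
        rw [mem_Icc] at hm
        calc _ ≤ ∑ y ∈ Y with D y = d * m, ((m:ℝ))⁻¹ := by
              rw [filter_filter]
              have hsub : {y ∈ Y | d ∣ D y ∧ D y / d = m} ⊆ {y ∈ Y | D y = d * m} := by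
                intro y hy
                rw [mem_filter] at hy ⊢
                refine ⟨hy.1, ?_⟩
                rw [← hy.2.2, Nat.mul_div_cancel' hy.2.1]
              refine le_trans ?_ (sum_le_sum_of_subset_of_nonneg hsub (fun _ _ _ => by positivity))
              apply sum_le_sum
              intro y hy
              have hy' := hsub hy
              rw [mem_filter] at hy'
              rw [hy'.2]
              have := hD y hy'.1
              have hd0 : (d:ℝ) ≠ 0 := by
                intro h
                have : d = 0 := by exact_mod_cast h
                rw [this] at hy'; simp at hy'; omega
              have hm0 : (m:ℝ) ≠ 0 := by norm_cast; omega
              push_cast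
              apply le_of_eq
              field_simp
          _ = #{y ∈ Y | D y = d * m} * ((m:ℝ))⁻¹ := by rw [sum_const, nsmul_eq_mul]
          _ ≤ _ := by
              gcongr
              exact hfib _
    _ ≤ _ := by
        rw [← mul_sum]
        gcongr

theorem gcd_sum (R V : ℕ) (τ : ℝ) (hτ : ∀ n : ℕ, n ≠ 0 → n ≤ V → (#n.divisors : ℝ) ≤ τ) :
    ∑ x ∈ Icc (1:ℤ) R ×ˢ Icc (1:ℤ) V, (Int.gcd x.1 x.2 : ℝ) ≤ V * R * τ := by
  rw [sum_product_right]
  have : ∀ w ∈ Icc (1:ℤ) V, ∑ z ∈ Icc (1:ℤ) R, (Int.gcd z w : ℝ) ≤ R * τ := by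
    intro w hw
    rw [mem_Icc] at hw
    obtain ⟨n, rfl⟩ := Int.eq_ofNat_of_zero_le (by linarith : 0 ≤ w)
    have hn : n ≠ 0 := by intro h; subst h; simp at hw
    have hn2 : n ≤ V := by exact_mod_cast hw.2
    calc _ ≤ ∑ z ∈ Icc (1:ℤ) R, ∑ e ∈ n.divisors, if (e:ℤ) ∣ z then (e:ℝ) else 0 := by
          apply sum_le_sum
          intro z hz
          have hmem : Int.gcd z n ∈ n.divisors := by
            rw [Nat.mem_divisors]
            exact ⟨Int.natCast_dvd_natCast.1 (Int.gcd_dvd_right _ _), hn⟩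
          refine le_trans ?_ (single_le_sum (f := fun e : ℕ => if (e:ℤ) ∣ z then (e:ℝ) else 0) (fun e _ => by split_ifs <;> positivity) hmem)
          rw [if_pos (Int.gcd_dvd_left _ _)]
      _ = ∑ e ∈ n.divisors, ∑ z ∈ Icc (1:ℤ) R, if (e:ℤ) ∣ z then (e:ℝ) else 0 := sum_comm
      _ ≤ ∑ e ∈ n.divisors, (R:ℝ) := by
          apply sum_le_sum
          intro e he
          have he0 : 0 < e := Nat.pos_of_mem_divisors he
          rw [← sum_filter, sum_const, nsmul_eq_mul]
          have hc : #{z ∈ Icc (1:ℤ) R | (e:ℤ) ∣ z} ≤ R / e := by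
            have := Int.Ioc_filter_dvd_card (0:ℤ) (R:ℤ) (r := (e:ℤ)) (by exact_mod_cast he0)
            have h2 : Icc (1:ℤ) R = Ioc 0 (R:ℤ) := by ext x; simp [Int.lt_iff_add_one_le]
            rw [h2]
            have h3 : ⌊((R:ℤ):ℚ) / ((e:ℤ):ℚ)⌋ = ((R / e : ℕ) : ℤ) := by
              push_cast; exact_mod_cast Rat.floor_natCast_div_natCast R e
            have h0 : ⌊((0:ℤ):ℚ) / ((e:ℤ):ℚ)⌋ = 0 := by simp
            rw [h3, h0, sub_zero, max_eq_left (by positivity)] at this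
            exact_mod_cast this.le
          calc ((#{z ∈ Icc (1:ℤ) R | (e:ℤ) ∣ z} : ℕ) : ℝ) * e ≤ ((R / e : ℕ) : ℝ) * e := by gcongr
            _ ≤ R := by exact_mod_cast Nat.div_mul_le_self R e
      _ = R * #n.divisors := by rw [sum_const, nsmul_eq_mul]; ring
      _ ≤ R * τ := by gcongr; exact hτ n hn hn2
  calc _ ≤ ∑ w ∈ Icc (1:ℤ) V, (R:ℝ) * τ := sum_le_sum this
    _ = _ := by simp; ring

end

section
open Finset

def Wd (x y : ℤ × ℤ) : ℤ := x.1 * y.2 - x.2 * y.1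

theorem c_part {ι : Type*} (X : Finset ι) (D : ι → ℕ) (π π' : ι → ℤ × ℤ) (B : Finset (ℤ × ℤ))
    (hπ : ∀ a ∈ X, π a ∈ B) (hπ' : ∀ a ∈ X, π' a ∈ B) (K : ℤ × ℤ → ℝ)
    (h1 : ∀ x ∈ B, ∀ d : ℕ, ∑ a ∈ X with π a = x, (if d ∣ D a then (d:ℝ) / D a else 0) ≤ K x)
    (h2 : ∀ x ∈ B, ∀ d : ℕ, ∑ a ∈ X with π' a = x, (if d ∣ D a then (d:ℝ) / D a else 0) ≤ K x)
    (τ : ℝ) (hτ : ∀ x ∈ B, ∀ y ∈ B, (#(Wd x y).natAbs.divisors : ℝ) ≤ τ) (c : ι → ι → ℕ) :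
    ∑ a ∈ X, ∑ b ∈ X, (if Wd (π a) (π' b) ≠ 0 ∧ (c a b : ℤ) ∣ Wd (π a) (π' b) ∧ c a b ∣ D a ∧ c a b ∣ D b
      then (c a b : ℝ) ^ 2 / (D a * D b) else 0) ≤ τ * (∑ x ∈ B, K x) ^ 2 := by
  classical
  have hK : ∀ x ∈ B, 0 ≤ K x := fun x hx => (sum_nonneg (fun _ _ => by split_ifs <;> positivity)).trans (h1 x hx 0)
  let f : ℕ → ι → ℝ := fun d a => if d ∣ D a then (d:ℝ) / D a else 0
  have hf : ∀ d a, 0 ≤ f d a := fun d a => by simp only [f]; split_ifs <;> positivity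
  calc _ ≤ ∑ a ∈ X, ∑ b ∈ X, ∑ d ∈ (Wd (π a) (π' b)).natAbs.divisors, f d a * f d b := by
        apply sum_le_sum; intro a _
        apply sum_le_sum; intro b _
        split_ifs with h
        · obtain ⟨q1, q2, q3, q4⟩ := h
          have hm : c a b ∈ (Wd (π a) (π' b)).natAbs.divisors := by
            rw [Nat.mem_divisors]
            exact ⟨Int.natCast_dvd.1 q2, by simpa using q1⟩
          refine le_trans ?_ (single_le_sum (f := fun d => f d a * f d b) (fun d _ => mul_nonneg (hf _ _) (hf _ _)) hm)
          simp only [f, if_pos q3, if_pos q4]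
          apply le_of_eq
          rw [div_mul_div_comm, pow_two]
        · exact sum_nonneg (fun d _ => mul_nonneg (hf _ _) (hf _ _))
    _ = ∑ x ∈ B, ∑ y ∈ B, ∑ d ∈ (Wd x y).natAbs.divisors,
          (∑ a ∈ X with π a = x, f d a) * (∑ b ∈ X with π' b = y, f d b) := by
        rw [← sum_fiberwise_of_maps_to hπ]
        apply sum_congr rfl; intro x _
        have : ∀ a ∈ {a ∈ X | π a = x}, ∑ b ∈ X, ∑ d ∈ (Wd (π a) (π' b)).natAbs.divisors, f d a * f d b
            = ∑ y ∈ B, ∑ d ∈ (Wd x y).natAbs.divisors, f d a * (∑ b ∈ X with π' b = y, f d b) := by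
          intro a ha
          rw [← sum_fiberwise_of_maps_to hπ']
          apply sum_congr rfl; intro y _
          simp_rw [mul_sum]
          rw [sum_comm (s := (Wd x y).natAbs.divisors)]
          apply sum_congr rfl; intro b hb
          rw [(mem_filter.1 ha).2, (mem_filter.1 hb).2]
        rw [sum_congr rfl this, sum_comm]
        apply sum_congr rfl; intro y _
        rw [sum_comm]
        apply sum_congr rfl; intro d _
        rw [sum_mul]
    _ ≤ ∑ x ∈ B, ∑ y ∈ B, ∑ d ∈ (Wd x y).natAbs.divisors, K x * K y := by
        apply sum_le_sum; intro x hx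
        apply sum_le_sum; intro y hy
        apply sum_le_sum; intro d _
        exact mul_le_mul (h1 x hx d) (h2 y hy d) (sum_nonneg (fun _ _ => hf _ _)) (hK x hx)
    _ ≤ ∑ x ∈ B, ∑ y ∈ B, τ * (K x * K y) := by
        apply sum_le_sum; intro x hx
        apply sum_le_sum; intro y hy
        rw [sum_const, nsmul_eq_mul]
        exact mul_le_mul_of_nonneg_right (hτ x hx y hy) (mul_nonneg (hK x hx) (hK y hy))
    _ = _ := by
        rw [pow_two, sum_mul_sum, mul_sum]
        apply sum_congr rfl; intro x _
        rw [mul_sum]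

/-- box of quadruples, columns `(z1,u)` and `(z2,v)` -/
noncomputable def Xset (V R : ℕ) : Finset ((ℤ × ℤ) × (ℤ × ℤ)) :=
  {X ∈ (Icc (1:ℤ) R ×ˢ Icc (1:ℤ) (4 * V : ℕ)) ×ˢ (Icc (1:ℤ) R ×ˢ Icc (1:ℤ) (4 * V : ℕ)) |
    (V < X.1.2 ∧ X.1.2 ≤ 2 * V ∧ 2 * V ≤ X.2.2 ∧ X.2.2 < 2 * V + X.1.2) ∧
    IsCoprime X.1.2 X.2.2 ∧ 0 < Wd X.2 X.1}

def Dd (X : (ℤ × ℤ) × (ℤ × ℤ)) : ℕ := (Wd X.2 X.1).toNat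

def cc (X Y : (ℤ × ℤ) × (ℤ × ℤ)) : ℕ :=
  Int.gcd (Int.gcd (Wd X.1 Y.1) (Wd X.2 Y.1)) (Int.gcd (Wd X.1 Y.2) (Wd X.2 Y.2))

theorem cc_props (V R : ℕ) (X Y) (hX : X ∈ Xset V R) (hY : Y ∈ Xset V R) :
    0 < cc X Y ∧ cc X Y ∣ Dd X ∧ cc X Y ∣ Dd Y ∧ ((cc X Y : ℤ) ∣ Wd X.1 Y.1 ∧ (cc X Y : ℤ) ∣ Wd X.2 Y.1
      ∧ (cc X Y : ℤ) ∣ Wd X.1 Y.2 ∧ (cc X Y : ℤ) ∣ Wd X.2 Y.2) ∧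
      (Wd X.1 Y.1 ≠ 0 ∨ Wd X.2 Y.1 ≠ 0 ∨ Wd X.1 Y.2 ≠ 0 ∨ Wd X.2 Y.2 ≠ 0) := by
  have hX1 := (mem_filter.1 hX).2
  have hY1 := (mem_filter.1 hY).2
  obtain ⟨-, hXc, hX0⟩ := hX1
  obtain ⟨-, hYc, hY0⟩ := hY1
  have hdet : Wd X.1 Y.1 * Wd X.2 Y.2 - Wd X.2 Y.1 * Wd X.1 Y.2 = Wd X.2 X.1 * Wd Y.2 Y.1 := by
    simp only [Wd]; ring
  have hne : (Wd X.1 Y.1 ≠ 0 ∨ Wd X.2 Y.1 ≠ 0 ∨ Wd X.1 Y.2 ≠ 0 ∨ Wd X.2 Y.2 ≠ 0) := by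
    by_contra h
    push Not at h
    obtain ⟨a, b, c, d⟩ := h
    rw [a, b, c, d] at hdet
    have := mul_pos hX0 hY0
    simp at hdet
    rcases hdet with h | h <;> omega
  have d1 : (cc X Y : ℤ) ∣ Wd X.1 Y.1 := (Int.gcd_dvd_left _ _).trans (Int.gcd_dvd_left _ _)
  have d2 : (cc X Y : ℤ) ∣ Wd X.2 Y.1 := (Int.gcd_dvd_left _ _).trans (Int.gcd_dvd_right _ _)
  have d3 : (cc X Y : ℤ) ∣ Wd X.1 Y.2 := (Int.gcd_dvd_right _ _).trans (Int.gcd_dvd_left _ _)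
  have d4 : (cc X Y : ℤ) ∣ Wd X.2 Y.2 := (Int.gcd_dvd_right _ _).trans (Int.gcd_dvd_right _ _)
  have h0 : 0 < cc X Y := by
    rcases Nat.eq_zero_or_pos (cc X Y) with h | h
    · rw [h] at d1 d2 d3 d4
      simp only [Nat.cast_zero, zero_dvd_iff] at d1 d2 d3 d4
      exfalso; tauto
    · exact h
  have e1 : (Dd X : ℤ) = Wd X.2 X.1 := Int.toNat_of_nonneg hX0.le
  have e2 : (Dd Y : ℤ) = Wd Y.2 Y.1 := Int.toNat_of_nonneg hY0.le
  refine ⟨h0, ?_, ?_, ⟨d1, d2, d3, d4⟩, hne⟩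
  · apply Int.natCast_dvd_natCast.1
    rw [e1]
    obtain ⟨a, b, hab⟩ := hYc
    have : Wd X.2 X.1 = a * (X.1.2 * Wd X.2 Y.1 - X.2.2 * Wd X.1 Y.1) + b * (X.1.2 * Wd X.2 Y.2 - X.2.2 * Wd X.1 Y.2) := by
      simp only [Wd]
      linear_combination -(X.2.1 * X.1.2 - X.2.2 * X.1.1) * hab
    rw [this]
    exact dvd_add (Dvd.dvd.mul_left (dvd_sub (d2.mul_left _) (d1.mul_left _)) _)
      (Dvd.dvd.mul_left (dvd_sub (d4.mul_left _) (d3.mul_left _)) _)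
  · apply Int.natCast_dvd_natCast.1
    rw [e2]
    obtain ⟨a, b, hab⟩ := hXc
    have : Wd Y.2 Y.1 = a * (Y.2.2 * Wd X.1 Y.1 - Y.1.2 * Wd X.1 Y.2) + b * (Y.2.2 * Wd X.2 Y.1 - Y.1.2 * Wd X.2 Y.2) := by
      simp only [Wd]
      linear_combination -(Y.2.1 * Y.1.2 - Y.2.2 * Y.1.1) * hab
    rw [this]
    exact dvd_add (Dvd.dvd.mul_left (dvd_sub (d1.mul_left _) (d3.mul_left _)) _)
      (Dvd.dvd.mul_left (dvd_sub (d2.mul_left _) (d4.mul_left _)) _)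

end

section
open Finset

theorem Xset_bounds (V R : ℕ) (X) (hX : X ∈ Xset V R) :
    X.1 ∈ Icc (1:ℤ) R ×ˢ Icc (1:ℤ) (4 * V : ℕ) ∧ X.2 ∈ Icc (1:ℤ) R ×ˢ Icc (1:ℤ) (4 * V : ℕ) ∧
      1 ≤ Dd X ∧ Dd X ≤ 2 * V * R ∧ (Dd X : ℤ) = X.2.1 * X.1.2 - X.1.1 * X.2.2 := by
  obtain ⟨h1, h2, h3, h4⟩ := mem_filter.1 hX
  rw [mem_product] at h1
  have e : (Dd X : ℤ) = Wd X.2 X.1 := Int.toNat_of_nonneg h4.le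
  have e' : (Dd X : ℤ) = X.2.1 * X.1.2 - X.1.1 * X.2.2 := by rw [e]; simp only [Wd]; ring
  refine ⟨h1.1, h1.2, by omega, ?_, e'⟩
  simp only [mem_product, mem_Icc] at h1
  zify
  rw [e']
  nlinarith [h1.1.1.1, h1.1.2.1, h1.2.1.1, h1.2.1.2, h1.2.2.1, h2.2.1, mul_nonneg (sub_nonneg.2 h1.2.1.2) (sub_nonneg.2 h2.2.1)]

theorem fib1 (V R : ℕ) (x : ℤ × ℤ) (n : ℕ) :
    #{X ∈ {X ∈ Xset V R | X.1 = x} | Dd X = n} ≤ Int.gcd x.1 x.2 := by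
  classical
  set P := {X ∈ {X ∈ Xset V R | X.1 = x} | Dd X = n} with hP
  have hmem : ∀ X ∈ P, X ∈ Xset V R ∧ X.1 = x ∧ Dd X = n := by
    intro X hX; rw [hP, mem_filter, mem_filter] at hX; tauto
  rcases P.eq_empty_or_nonempty with h | ⟨X0, hX0⟩
  · rw [h]; simp
  have hx2 : V < x.2 ∧ 0 < x.2 := by
    obtain ⟨a, b, c⟩ := hmem X0 hX0
    have := (mem_filter.1 a).2.1.1
    rw [b] at this
    exact ⟨this, by omega⟩
  have key : ∀ X ∈ P, ∀ Y ∈ P, x.1 * (X.2.2 - Y.2.2) = x.2 * (X.2.1 - Y.2.1) := by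
    intro X hX Y hY
    obtain ⟨a, b, c⟩ := hmem X hX
    obtain ⟨a', b', c'⟩ := hmem Y hY
    have h1 := (Xset_bounds V R X a).2.2.2.2
    have h2 := (Xset_bounds V R Y a').2.2.2.2
    rw [b, c] at h1; rw [b', c'] at h2
    linear_combination h1 - h2
  have hinj : Set.InjOn (fun X : (ℤ × ℤ) × (ℤ × ℤ) => X.2.2) P := by
    intro X hX Y hY h
    simp only at h
    have := key X hX Y hY
    rw [h, sub_self, mul_zero] at this
    have h3 : X.2.1 = Y.2.1 := by
      rcases mul_eq_zero.1 this.symm with h | h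
      · omega
      · omega
    exact Prod.ext ((hmem X hX).2.1.trans (hmem Y hY).2.1.symm) (Prod.ext h3 h)
  rw [← card_image_of_injOn hinj]
  apply window_count _ (2 * V) x.2 x.1 hx2.2
  · intro y hy
    obtain ⟨X, hX, rfl⟩ := mem_image.1 hy
    obtain ⟨a, b, c⟩ := hmem X hX
    have := (mem_filter.1 a).2.1
    rw [b] at this
    exact ⟨this.2.2.1, this.2.2.2⟩
  · intro y hy y' hy'
    obtain ⟨X, hX, rfl⟩ := mem_image.1 hy
    obtain ⟨Y, hY, rfl⟩ := mem_image.1 hy'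
    rw [key X hX Y hY]
    exact dvd_mul_right _ _

theorem fib2 (V R : ℕ) (x : ℤ × ℤ) (n : ℕ) :
    #{X ∈ {X ∈ Xset V R | X.2 = x} | Dd X = n} ≤ Int.gcd x.1 x.2 := by
  classical
  set P := {X ∈ {X ∈ Xset V R | X.2 = x} | Dd X = n} with hP
  have hmem : ∀ X ∈ P, X ∈ Xset V R ∧ X.2 = x ∧ Dd X = n := by
    intro X hX; rw [hP, mem_filter, mem_filter] at hX; tauto
  rcases P.eq_empty_or_nonempty with h | ⟨X0, hX0⟩
  · rw [h]; simp
  have hx2 : 2 * V ≤ x.2 ∧ 0 < x.2 := by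
    obtain ⟨a, b, c⟩ := hmem X0 hX0
    have := (mem_filter.1 a).2.1
    rw [b] at this
    exact ⟨this.2.2.1, by omega⟩
  have key : ∀ X ∈ P, ∀ Y ∈ P, x.1 * (X.1.2 - Y.1.2) = x.2 * (X.1.1 - Y.1.1) := by
    intro X hX Y hY
    obtain ⟨a, b, c⟩ := hmem X hX
    obtain ⟨a', b', c'⟩ := hmem Y hY
    have h1 := (Xset_bounds V R X a).2.2.2.2
    have h2 := (Xset_bounds V R Y a').2.2.2.2
    rw [b, c] at h1; rw [b', c'] at h2
    linear_combination h2 - h1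
  have hinj : Set.InjOn (fun X : (ℤ × ℤ) × (ℤ × ℤ) => X.1.2) P := by
    intro X hX Y hY h
    simp only at h
    have := key X hX Y hY
    rw [h, sub_self, mul_zero] at this
    have h3 : X.1.1 = Y.1.1 := by
      rcases mul_eq_zero.1 this.symm with h | h
      · omega
      · omega
    exact Prod.ext (Prod.ext h3 h) ((hmem X hX).2.1.trans (hmem Y hY).2.1.symm)
  rw [← card_image_of_injOn hinj]
  apply window_count _ (V + 1) x.2 x.1 hx2.2
  · intro y hy
    obtain ⟨X, hX, rfl⟩ := mem_image.1 hy
    obtain ⟨a, b, c⟩ := hmem X hX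
    have := (mem_filter.1 a).2.1
    rw [b] at this
    omega
  · intro y hy y' hy'
    obtain ⟨X, hX, rfl⟩ := mem_image.1 hy
    obtain ⟨Y, hY, rfl⟩ := mem_image.1 hy'
    rw [key X hX Y hY]
    exact dvd_mul_right _ _

theorem c_sum (V R N : ℕ) (hN : 4 * V * R ≤ N) (hR : 1 ≤ R) (hV : 1 ≤ V) (τ : ℝ) (hτ : ∀ n : ℕ, n ≤ N → (#n.divisors : ℝ) ≤ τ)
    (hlog : 1 + Real.log N ≤ τ) :
    ∑ X ∈ Xset V R, ∑ Y ∈ Xset V R, (cc X Y : ℝ) ^ 2 / (Dd X * Dd Y) ≤ 4 * τ * (4 * V * R * τ ^ 2) ^ 2 := by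
  classical
  set B := Icc (1:ℤ) R ×ˢ Icc (1:ℤ) (4 * V : ℕ) with hB
  have hN1 : 1 ≤ N := le_trans (by nlinarith) hN
  have hlog0 : (0:ℝ) ≤ Real.log N := Real.log_nonneg (by exact_mod_cast hN1)
  have hτ1 : 1 ≤ τ := by linarith
  let K : ℤ × ℤ → ℝ := fun x => Int.gcd x.1 x.2 * (1 + Real.log N)
  have hK : ∑ x ∈ B, K x ≤ 4 * V * R * τ ^ 2 := by
    simp only [K]
    rw [← sum_mul]
    have := gcd_sum R (4 * V) τ (fun n _ h => hτ n (h.trans (le_trans (by nlinarith) hN)))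
    push_cast at this
    calc _ ≤ (4 * V * R * τ) * τ := by
          apply mul_le_mul _ hlog (by positivity) (by positivity)
          rw [hB]; push_cast; exact this
      _ = _ := by ring
  have hb1 : ∀ a ∈ Xset V R, 1 ≤ Dd a ∧ Dd a ≤ N := by
    intro a ha
    have := Xset_bounds V R a ha
    exact ⟨this.2.2.1, this.2.2.2.1.trans (le_trans (by nlinarith) hN)⟩
  have h1 : ∀ x ∈ B, ∀ d : ℕ, ∑ a ∈ Xset V R with a.1 = x, (if d ∣ Dd a then (d:ℝ) / Dd a else 0) ≤ K x := by
    intro x _ d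
    rw [← sum_filter]
    exact inner_sum_farey _ Dd N _ (fun y hy => hb1 y (mem_filter.1 hy).1) (fib1 V R x) d
  have h2 : ∀ x ∈ B, ∀ d : ℕ, ∑ a ∈ Xset V R with a.2 = x, (if d ∣ Dd a then (d:ℝ) / Dd a else 0) ≤ K x := by
    intro x _ d
    rw [← sum_filter]
    exact inner_sum_farey _ Dd N _ (fun y hy => hb1 y (mem_filter.1 hy).1) (fib2 V R x) d
  have hW : ∀ x ∈ B, ∀ y ∈ B, (#(Wd x y).natAbs.divisors : ℝ) ≤ τ := by
    intro x hx y hy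
    apply hτ
    simp only [hB, mem_product, mem_Icc] at hx hy
    push_cast at hx hy
    refine le_trans ?_ hN
    zify
    rw [abs_le]
    obtain ⟨⟨a1, a2⟩, a3, a4⟩ := hx
    obtain ⟨⟨b1, b2⟩, b3, b4⟩ := hy
    simp only [Wd]
    have p1 : x.1 * y.2 ≤ R * (4 * V) := mul_le_mul a2 b4 (by linarith) (by linarith)
    have p2 : x.2 * y.1 ≤ (4 * V) * R := mul_le_mul a4 b2 (by linarith) (by linarith)
    have p3 : 0 ≤ x.1 * y.2 := mul_nonneg (by linarith) (by linarith)
    have p4 : 0 ≤ x.2 * y.1 := mul_nonneg (by linarith) (by linarith)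
    constructor <;> nlinarith
  have m1 : ∀ a ∈ Xset V R, a.1 ∈ B := fun a ha => (Xset_bounds V R a ha).1
  have m2 : ∀ a ∈ Xset V R, a.2 ∈ B := fun a ha => (Xset_bounds V R a ha).2.1
  have c11 := c_part (Xset V R) Dd (fun a => a.1) (fun a => a.1) B m1 m1 K h1 h1 τ hW cc
  have c12 := c_part (Xset V R) Dd (fun a => a.1) (fun a => a.2) B m1 m2 K h1 h2 τ hW cc
  have c21 := c_part (Xset V R) Dd (fun a => a.2) (fun a => a.1) B m2 m1 K h2 h1 τ hW cc
  have c22 := c_part (Xset V R) Dd (fun a => a.2) (fun a => a.2) B m2 m2 K h2 h2 τ hW cc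
  have hK0 : 0 ≤ ∑ x ∈ B, K x := sum_nonneg (fun x _ => by simp only [K]; positivity)
  have hsq : τ * (∑ x ∈ B, K x) ^ 2 ≤ τ * (4 * V * R * τ ^ 2) ^ 2 := by gcongr
  have hmain : ∑ X ∈ Xset V R, ∑ Y ∈ Xset V R, (cc X Y : ℝ) ^ 2 / (Dd X * Dd Y) ≤ _ :=
    le_trans ?_ (add_le_add (add_le_add c11 c12) (add_le_add c21 c22))
  · linarith
  · simp_rw [← sum_add_distrib]
    apply sum_le_sum; intro X hX
    apply sum_le_sum; intro Y hY
    obtain ⟨q0, q1, q2, ⟨d1, d2, d3, d4⟩, hne⟩ := cc_props V R X Y hX hY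
    have hpos : 0 ≤ (cc X Y : ℝ) ^ 2 / (Dd X * Dd Y) := by positivity
    have hi : ∀ (P : Prop) [Decidable P], 0 ≤ (if P then (cc X Y : ℝ) ^ 2 / (Dd X * Dd Y) else 0) := by
      intro P _; split_ifs <;> positivity
    have hj : ∀ (P : Prop) [Decidable P], P → (if P then (cc X Y : ℝ) ^ 2 / (Dd X * Dd Y) else 0) = (cc X Y : ℝ) ^ 2 / (Dd X * Dd Y) := by
      intro P _ h; rw [if_pos h]
    rcases hne with h | h | h | h
    · rw [hj _ (⟨h, d1, q1, q2⟩ : Wd X.1 Y.1 ≠ 0 ∧ _)]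
      have := hi (Wd X.1 Y.2 ≠ 0 ∧ (cc X Y : ℤ) ∣ Wd X.1 Y.2 ∧ cc X Y ∣ Dd X ∧ cc X Y ∣ Dd Y)
      have := hi (Wd X.2 Y.1 ≠ 0 ∧ (cc X Y : ℤ) ∣ Wd X.2 Y.1 ∧ cc X Y ∣ Dd X ∧ cc X Y ∣ Dd Y)
      have := hi (Wd X.2 Y.2 ≠ 0 ∧ (cc X Y : ℤ) ∣ Wd X.2 Y.2 ∧ cc X Y ∣ Dd X ∧ cc X Y ∣ Dd Y)
      linarith
    · rw [hj _ (⟨h, d2, q1, q2⟩ : Wd X.2 Y.1 ≠ 0 ∧ _)]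
      have := hi (Wd X.1 Y.2 ≠ 0 ∧ (cc X Y : ℤ) ∣ Wd X.1 Y.2 ∧ cc X Y ∣ Dd X ∧ cc X Y ∣ Dd Y)
      have := hi (Wd X.1 Y.1 ≠ 0 ∧ (cc X Y : ℤ) ∣ Wd X.1 Y.1 ∧ cc X Y ∣ Dd X ∧ cc X Y ∣ Dd Y)
      have := hi (Wd X.2 Y.2 ≠ 0 ∧ (cc X Y : ℤ) ∣ Wd X.2 Y.2 ∧ cc X Y ∣ Dd X ∧ cc X Y ∣ Dd Y)
      linarith
    · rw [hj _ (⟨h, d3, q1, q2⟩ : Wd X.1 Y.2 ≠ 0 ∧ _)]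
      have := hi (Wd X.1 Y.1 ≠ 0 ∧ (cc X Y : ℤ) ∣ Wd X.1 Y.1 ∧ cc X Y ∣ Dd X ∧ cc X Y ∣ Dd Y)
      have := hi (Wd X.2 Y.1 ≠ 0 ∧ (cc X Y : ℤ) ∣ Wd X.2 Y.1 ∧ cc X Y ∣ Dd X ∧ cc X Y ∣ Dd Y)
      have := hi (Wd X.2 Y.2 ≠ 0 ∧ (cc X Y : ℤ) ∣ Wd X.2 Y.2 ∧ cc X Y ∣ Dd X ∧ cc X Y ∣ Dd Y)
      linarith
    · rw [hj _ (⟨h, d4, q1, q2⟩ : Wd X.2 Y.2 ≠ 0 ∧ _)]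
      have := hi (Wd X.1 Y.2 ≠ 0 ∧ (cc X Y : ℤ) ∣ Wd X.1 Y.2 ∧ cc X Y ∣ Dd X ∧ cc X Y ∣ Dd Y)
      have := hi (Wd X.2 Y.1 ≠ 0 ∧ (cc X Y : ℤ) ∣ Wd X.2 Y.1 ∧ cc X Y ∣ Dd X ∧ cc X Y ∣ Dd Y)
      have := hi (Wd X.1 Y.1 ≠ 0 ∧ (cc X Y : ℤ) ∣ Wd X.1 Y.1 ∧ cc X Y ∣ Dd X ∧ cc X Y ∣ Dd Y)
      linarith

end

section
open Finset

def Pv (X : (ℤ × ℤ) × (ℤ × ℤ)) (q : ℚ) : ℤ := X.1.1 * q.den + X.2.1 * q.num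
def Qv (X : (ℤ × ℤ) × (ℤ × ℤ)) (q : ℚ) : ℤ := X.1.2 * q.den + X.2.2 * q.num

theorem card_Xset (V R : ℕ) : (#(Xset V R) : ℝ) ≤ 16 * V ^ 2 * R ^ 2 := by
  have : #(Xset V R) ≤ 16 * V ^ 2 * R ^ 2 := by
    refine (card_filter_le _ _).trans ?_
    rw [card_product, card_product, Int.card_Icc, Int.card_Icc]
    have e1 : ((R:ℤ) + 1 - 1).toNat = R := by omega
    have e2 : (((4 * V : ℕ):ℤ) + 1 - 1).toNat = 4 * V := by omega
    rw [e1, e2]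
    apply le_of_eq; ring
  exact_mod_cast this

theorem E_bound (V M N : ℕ) (hN : 1156 * M ^ 3 * V ≤ N) (hV : 1 ≤ V) (hVM : V ≤ M) (τ : ℝ)
    (hτ : ∀ n : ℕ, n ≤ N → (#n.divisors : ℝ) ≤ τ) (hlog : 1 + Real.log N ≤ τ)
    (β : ℝ) (hβ : 1 ≤ β) (F : Finset ℚ)
    (hF : ∀ q ∈ F, 0 ≤ q.num ∧ q.num ≤ q.den ∧ q.den ≤ M ∧ (M : ℝ) ≤ β * q.den) :
    ∑ X ∈ Xset V (17 * M), ∑ Y ∈ Xset V (17 * M),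
      (#{q ∈ F ×ˢ F | Pv X q.1 * Qv Y q.2 = Pv Y q.2 * Qv X q.1} : ℝ) ^ 2 ≤
      2 * 10 ^ 8 * τ ^ 7 * β ^ 4 * V ^ 2 * M ^ 6 := by
  have hM : 1 ≤ M := hV.trans hVM
  have hVM2 : V * M ≤ M ^ 3 * V := by
    calc V * M = V * M * 1 := by ring
      _ ≤ V * M * M ^ 2 := by gcongr; exact Nat.one_le_pow _ _ hM
      _ = _ := by ring
  have hVM3 : V ^ 2 * M ^ 2 ≤ M ^ 3 * V := by
    calc V ^ 2 * M ^ 2 = V * (V * M ^ 2) := by ring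
      _ ≤ V * (M * M ^ 2) := by gcongr
      _ = _ := by ring
  have hN1 : 1 ≤ N := le_trans (by nlinarith) hN
  have hlog0 : (0:ℝ) ≤ Real.log N := Real.log_nonneg (by exact_mod_cast hN1)
  have hτ1 : 1 ≤ τ := by linarith
  have hcs := c_sum V (17 * M) N (le_trans (by nlinarith) hN) (by omega) hV τ hτ hlog
  have hcX := card_Xset V (17 * M)
  have hterm : ∀ X ∈ Xset V (17 * M), ∀ Y ∈ Xset V (17 * M),
      (#{q ∈ F ×ˢ F | Pv X q.1 * Qv Y q.2 = Pv Y q.2 * Qv X q.1} : ℝ) ^ 2 ≤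
      8 * τ ^ 2 + 8 * τ ^ 2 * β ^ 4 * M ^ 4 * ((cc X Y : ℝ) ^ 2 / (Dd X * Dd Y)) := by
    intro X hX Y hY
    have bX := Xset_bounds V (17 * M) X hX
    have bY := Xset_bounds V (17 * M) Y hY
    have hc := cc_props V (17 * M) X Y hX hY
    have hJ := J_bound M β hβ F hF X.1.2 X.2.2 X.1.1 X.2.1 Y.1.2 Y.2.2 Y.1.1 Y.2.1 (Dd X) (Dd Y)
      bX.2.2.2.2 bX.2.2.1 bY.2.2.2.2 bY.2.2.1 (cc X Y) rfl hc.1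
    have hdiv : (#(Dd X * Dd Y).divisors : ℝ) ≤ τ := by
      apply hτ
      calc Dd X * Dd Y ≤ (2 * V * (17 * M)) * (2 * V * (17 * M)) := Nat.mul_le_mul bX.2.2.2.1 bY.2.2.2.1
        _ = 1156 * (V ^ 2 * M ^ 2) := by ring
        _ ≤ 1156 * (M ^ 3 * V) := by gcongr
        _ ≤ N := by linarith
    set s := √((Dd X * Dd Y : ℕ) : ℝ) with hs
    have hs2 : s ^ 2 = Dd X * Dd Y := by rw [hs, Real.sq_sqrt (by positivity)]; push_cast; ring
    have hs0 : 0 < s := Real.sqrt_pos.2 (by exact_mod_cast Nat.mul_pos bX.2.2.1 bY.2.2.1)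
    have hJ2 : (#{q ∈ F ×ˢ F | Pv X q.1 * Qv Y q.2 = Pv Y q.2 * Qv X q.1} : ℝ) ≤
        2 * τ * (1 + cc X Y * β ^ 2 * M ^ 2 / s) := by
      refine hJ.trans ?_
      gcongr
    calc _ ≤ (2 * τ * (1 + cc X Y * β ^ 2 * M ^ 2 / s)) ^ 2 := by gcongr
      _ = 4 * τ ^ 2 * (1 + cc X Y * β ^ 2 * M ^ 2 / s) ^ 2 := by ring
      _ ≤ 4 * τ ^ 2 * (2 * (1 ^ 2 + (cc X Y * β ^ 2 * M ^ 2 / s) ^ 2)) := by gcongr; exact add_sq_le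
      _ = _ := by rw [← hs2]; ring
  calc _ ≤ ∑ X ∈ Xset V (17 * M), ∑ Y ∈ Xset V (17 * M),
      (8 * τ ^ 2 + 8 * τ ^ 2 * β ^ 4 * M ^ 4 * ((cc X Y : ℝ) ^ 2 / (Dd X * Dd Y))) :=
        sum_le_sum fun X hX => sum_le_sum fun Y hY => hterm X hX Y hY
    _ = 8 * τ ^ 2 * (#(Xset V (17 * M)) : ℝ) ^ 2 + 8 * τ ^ 2 * β ^ 4 * M ^ 4 *
        ∑ X ∈ Xset V (17 * M), ∑ Y ∈ Xset V (17 * M), (cc X Y : ℝ) ^ 2 / (Dd X * Dd Y) := by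
        simp_rw [sum_add_distrib, mul_sum]
        congr 1
        simp only [sum_const, nsmul_eq_mul]; ring
    _ ≤ 8 * τ ^ 2 * (16 * V ^ 2 * (17 * M : ℕ) ^ 2) ^ 2 + 8 * τ ^ 2 * β ^ 4 * M ^ 4 *
        (4 * τ * (4 * V * (17 * M : ℕ) * τ ^ 2) ^ 2) := by gcongr
    _ = 171051008 * (τ ^ 2 * 1) * (V ^ 2 * V ^ 2 * M ^ 4) + 147968 * τ ^ 7 * β ^ 4 * V ^ 2 * M ^ 6 := by push_cast; ring
    _ ≤ 171051008 * (τ ^ 7 * β ^ 4) * (V ^ 2 * M ^ 2 * M ^ 4) + 147968 * τ ^ 7 * β ^ 4 * V ^ 2 * M ^ 6 := by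
        gcongr
        · norm_num
        · exact one_le_pow₀ hβ
    _ ≤ _ := by
        have : 0 ≤ τ ^ 7 * β ^ 4 * V ^ 2 * M ^ 6 := by positivity
        nlinarith

theorem holder_count {ι α : Type*} [Fintype α] [DecidableEq α] (I : Finset ι) (φ : ι → α) (g : α → ℝ)
    (hg : ∀ a, 0 ≤ g a) (k : ℕ) (hk : 1 ≤ k) :
    (∑ i ∈ I, g (φ i)) ^ (2 * k) ≤ (#I : ℝ) ^ (2 * (k - 1)) *
      (∑ i ∈ I, (#{j ∈ I | φ j = φ i} : ℝ)) * ∑ a, g a ^ (2 * k) := by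
  obtain ⟨n, rfl⟩ : ∃ n, k = n + 1 := ⟨k - 1, by omega⟩
  have h1 : (∑ i ∈ I, g (φ i)) ^ (n + 1) ≤ (#I : ℝ) ^ n * ∑ i ∈ I, g (φ i) ^ (n + 1) := by
    rcases I.eq_empty_or_nonempty with rfl | hne
    · simp
    have hc : (0:ℝ) < (#I : ℝ) ^ n := by have := hne.card_pos; positivity
    have := pow_sum_div_card_le_sum_pow (s := I) (f := fun i => g (φ i)) (fun i _ => hg _) n
    rw [div_le_iff₀ hc] at this
    linarith
  have h2 : ∑ i ∈ I, g (φ i) ^ (n + 1) = ∑ a, (#{j ∈ I | φ j = a} : ℝ) * g a ^ (n + 1) := by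
    rw [← sum_fiberwise_of_maps_to (t := univ) (g := φ) (fun _ _ => mem_univ _)]
    apply sum_congr rfl; intro a _
    rw [← nsmul_eq_mul, ← sum_const]
    apply sum_congr rfl; intro i hi
    rw [(mem_filter.1 hi).2]
  have h3 : ∑ i ∈ I, (#{j ∈ I | φ j = φ i} : ℝ) = ∑ a, (#{j ∈ I | φ j = a} : ℝ) ^ 2 := by
    rw [← sum_fiberwise_of_maps_to (t := univ) (g := φ) (fun _ _ => mem_univ _)]
    apply sum_congr rfl; intro a _
    have : ∀ i ∈ {i ∈ I | φ i = a}, (#{j ∈ I | φ j = φ i} : ℝ) = #{j ∈ I | φ j = a} := by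
      intro i hi
      rw [(mem_filter.1 hi).2]
    rw [sum_congr rfl this, sum_const, nsmul_eq_mul, pow_two]
  have h4 : (∑ a, (#{j ∈ I | φ j = a} : ℝ) * g a ^ (n + 1)) ^ 2 ≤
      (∑ a, (#{j ∈ I | φ j = a} : ℝ) ^ 2) * ∑ a, (g a ^ (n + 1)) ^ 2 := sum_mul_sq_le_sq_mul_sq _ _ _
  have h5 : ∑ a, (g a ^ (n + 1)) ^ 2 = ∑ a, g a ^ (2 * (n + 1)) := by
    apply sum_congr rfl; intro a _; rw [← pow_mul]; congr 1; ring
  rw [h5, ← h3, ← h2] at h4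
  have h0 : 0 ≤ ∑ i ∈ I, g (φ i) := sum_nonneg (fun _ _ => hg _)
  calc _ = ((∑ i ∈ I, g (φ i)) ^ (n + 1)) ^ 2 := by rw [← pow_mul]; congr 1; ring
    _ ≤ ((#I : ℝ) ^ n * ∑ i ∈ I, g (φ i) ^ (n + 1)) ^ 2 := by gcongr
    _ = (#I : ℝ) ^ (2 * n) * (∑ i ∈ I, g (φ i) ^ (n + 1)) ^ 2 := by rw [mul_pow, ← pow_mul]; congr 2; ring
    _ ≤ (#I : ℝ) ^ (2 * n) * ((∑ i ∈ I, (#{j ∈ I | φ j = φ i} : ℝ)) * ∑ a, g a ^ (2 * (n + 1))) := by gcongr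
    _ = _ := by rw [mul_assoc]; simp

end

section
open Finset

theorem energy_prod {A B α : Type*} [DecidableEq α] (X : Finset A) (F : Finset B) (f : A → B → α) :
    ∑ i ∈ X ×ˢ (F ×ˢ F), (#{j ∈ X ×ˢ (F ×ˢ F) |
      ((f j.1 j.2.1, f j.1 j.2.2) : α × α) = (f i.1 i.2.1, f i.1 i.2.2)} : ℝ) =
    ∑ x ∈ X, ∑ y ∈ X, (#{q ∈ F ×ˢ F | f x q.1 = f y q.2} : ℝ) ^ 2 := by
  classical
  have h1 : ∀ x y : A, (#{q ∈ F ×ˢ F | f x q.1 = f y q.2} : ℝ) =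
      ∑ a ∈ F, ∑ b ∈ F, if f y b = f x a then (1:ℝ) else 0 := by
    intro x y
    rw [card_filter, sum_product]
    push_cast
    simp_rw [eq_comm]
  have h2 : ∀ x y : A, ∀ a b : B, (∑ a' ∈ F, ∑ b' ∈ F,
      if ((f y a', f y b') : α × α) = (f x a, f x b) then (1:ℝ) else 0) =
      (∑ a' ∈ F, if f y a' = f x a then (1:ℝ) else 0) * (∑ b' ∈ F, if f y b' = f x b then (1:ℝ) else 0) := by
    intro x y a b
    rw [sum_mul_sum]
    refine sum_congr rfl fun a' _ => sum_congr rfl fun b' _ => ?_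
    simp only [Prod.mk.injEq]
    by_cases h : f y a' = f x a <;> by_cases h' : f y b' = f x b <;> simp [h, h']
  simp_rw [h1, card_filter]
  push_cast
  rw [sum_product]
  refine sum_congr rfl fun x _ => ?_
  rw [sum_product]
  simp_rw [sum_product, h2]
  calc _ = ∑ y ∈ X, ∑ a ∈ F, ∑ b ∈ F, (∑ a' ∈ F, if f y a' = f x a then (1:ℝ) else 0) * (∑ b' ∈ F, if f y b' = f x b then (1:ℝ) else 0) := by
        rw [sum_comm]
        simp_rw [sum_comm (s := X)]
        rw [sum_comm]
    _ = _ := by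
        refine sum_congr rfl fun y _ => ?_
        rw [pow_two, sum_mul_sum]

theorem PQ_bounds (V M : ℕ) (X) (hX : X ∈ Xset V (17 * M)) (q : ℚ)
    (hF : 0 ≤ q.num ∧ q.num ≤ q.den ∧ q.den ≤ M) :
    0 < Pv X q ∧ Pv X q ≤ 34 * M ^ 2 ∧ 0 < Qv X q ∧ Qv X q ≤ 6 * V * M := by
  obtain ⟨h1, h2, h3, h4⟩ := mem_filter.1 hX
  simp only [mem_product, mem_Icc] at h1
  push_cast at h1
  obtain ⟨⟨⟨a1, a2⟩, a3, a4⟩, ⟨b1, b2⟩, b3, b4⟩ := h1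
  obtain ⟨f1, f2, f3⟩ := hF
  have hd : (1:ℤ) ≤ q.den := by exact_mod_cast q.den_pos
  have hM : (q.den:ℤ) ≤ M := by exact_mod_cast f3
  have hn : q.num ≤ M := f2.trans hM
  have p1 : X.1.1 * q.den ≤ (17 * M) * M := mul_le_mul a2 hM (by linarith) (by linarith)
  have p2 : X.2.1 * q.num ≤ (17 * M) * M := mul_le_mul b2 hn (by linarith) (by linarith)
  have p3 : X.1.2 * q.den ≤ (2 * V) * M := mul_le_mul h2.2.1 hM (by linarith) (by linarith)
  have p4 : X.2.2 * q.num ≤ (4 * V) * M := mul_le_mul b4 hn (by linarith) (by linarith)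
  have n1 : 0 < X.1.1 * q.den := mul_pos (by linarith) (by linarith)
  have n2 : 0 ≤ X.2.1 * q.num := mul_nonneg (by linarith) (by linarith)
  have n3 : 0 < X.1.2 * q.den := mul_pos (by linarith) (by linarith)
  have n4 : 0 ≤ X.2.2 * q.num := mul_nonneg (by linarith) (by linarith)
  simp only [Pv, Qv]
  refine ⟨by linarith, by linarith, by linarith, by linarith⟩

theorem Qv_ne (p : ℕ) [Fact p.Prime] (V M : ℕ) (hp : 1156 * M ^ 3 * V < p) (X) (hX : X ∈ Xset V (17 * M)) (q : ℚ)
    (hF : 0 ≤ q.num ∧ q.num ≤ q.den ∧ q.den ≤ M) : ((Qv X q : ℤ) : ZMod p) ≠ 0 := by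
  obtain ⟨-, -, h3, h4⟩ := PQ_bounds V M X hX q hF
  have hM : 1 ≤ M := le_trans q.den_pos hF.2.2
  intro h
  rw [ZMod.intCast_zmod_eq_zero_iff_dvd] at h
  have := Int.le_of_dvd h3 h
  have hV : V * M ≤ M ^ 3 * V := by
    calc V * M = V * M * 1 := by ring
      _ ≤ V * M * M ^ 2 := by gcongr; exact Nat.one_le_pow _ _ hM
      _ = _ := by ring
  zify at hp hV
  nlinarith

theorem Z_bound (p : ℕ) [Fact p.Prime] (hp3 : 3 ≤ p) (χ : MulChar (ZMod p) ℂ) (hχ : χ ≠ 1)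
    (T : Finset (ZMod p)) (k : ℕ) (hk : 1 ≤ k)
    (V M : ℕ) (hp : 1156 * M ^ 3 * V < p) (hV : 1 ≤ V) (hVM : V ≤ M) (τ : ℝ)
    (hτ : ∀ n : ℕ, n ≤ p → (#n.divisors : ℝ) ≤ τ) (hlog : 1 + Real.log p ≤ τ)
    (β : ℝ) (hβ : 1 ≤ β) (F : Finset ℚ)
    (hF : ∀ q ∈ F, 0 ≤ q.num ∧ q.num ≤ q.den ∧ q.den ≤ M ∧ (M : ℝ) ≤ β * q.den) :
    (∑ X ∈ Xset V (17 * M), ∑ a ∈ F, ∑ b ∈ F,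
      ‖∑ t ∈ T, χ (-((Pv X a : ZMod p) * (Qv X a : ZMod p)⁻¹) + t) *
        χ⁻¹ (-((Pv X b : ZMod p) * (Qv X b : ZMod p)⁻¹) + t)‖) ^ (2 * k) ≤
    (16 * V ^ 2 * (17 * M) ^ 2 * (#F : ℝ) ^ 2) ^ (2 * (k - 1)) *
      (2 * 10 ^ 8 * τ ^ 7 * β ^ 4 * V ^ 2 * M ^ 6) *
      ((#T : ℝ) ^ k * k ^ (2 * k) * p ^ 2 + (2 * k) ^ 2 * p * (#T : ℝ) ^ (2 * k)) := by
  classical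
  let f : ((ℤ × ℤ) × (ℤ × ℤ)) → ℚ → ZMod p := fun X a => -((Pv X a : ZMod p) * (Qv X a : ZMod p)⁻¹)
  let g : ZMod p × ZMod p → ℝ := fun x => ‖∑ t ∈ T, χ (x.1 + t) * χ⁻¹ (x.2 + t)‖
  have hH := holder_count (Xset V (17 * M) ×ˢ (F ×ˢ F)) (fun i => (f i.1 i.2.1, f i.1 i.2.2)) g
    (fun _ => norm_nonneg _) k hk
  have hmom := moment_bound p hp3 χ hχ T k hk
  rw [sum_product] at hH
  simp_rw [sum_product (s := F)] at hH
  rw [energy_prod] at hH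
  rw [Fintype.sum_prod_type] at hH
  have hE := E_bound V M p hp.le hV hVM τ hτ hlog β hβ F hF
  have hcount : ∑ x ∈ Xset V (17 * M), ∑ y ∈ Xset V (17 * M), (#{q ∈ F ×ˢ F | f x q.1 = f y q.2} : ℝ) ^ 2 ≤
      2 * 10 ^ 8 * τ ^ 7 * β ^ 4 * V ^ 2 * M ^ 6 := by
    refine le_trans ?_ hE
    refine sum_le_sum fun X hX => sum_le_sum fun Y hY => ?_
    gcongr 2
    apply card_le_card
    intro q hq
    rw [mem_filter, mem_product] at hq ⊢
    refine ⟨hq.1, ?_⟩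
    obtain ⟨⟨m1, m2⟩, h⟩ := hq
    have hq1 : 0 ≤ q.1.num ∧ q.1.num ≤ q.1.den ∧ q.1.den ≤ M := by have := hF _ m1; tauto
    have hq2 : 0 ≤ q.2.num ∧ q.2.num ≤ q.2.den ∧ q.2.den ≤ M := by have := hF _ m2; tauto
    have n1 := Qv_ne p V M hp X hX q.1 hq1
    have n2 := Qv_ne p V M hp Y hY q.2 hq2
    obtain ⟨x1, x2, x3, x4⟩ := PQ_bounds V M X hX q.1 hq1
    obtain ⟨y1, y2, y3, y4⟩ := PQ_bounds V M Y hY q.2 hq2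
    simp only [f, neg_inj] at h
    have h' : ((Pv X q.1 * Qv Y q.2 : ℤ) : ZMod p) = ((Pv Y q.2 * Qv X q.1 : ℤ) : ZMod p) := by
      push_cast
      field_simp at h
      rw [h]; ring
    rw [ZMod.intCast_eq_intCast_iff_dvd_sub] at h'
    have l1 : Pv X q.1 * Qv Y q.2 ≤ (34 * M ^ 2) * (6 * V * M) := mul_le_mul x2 y4 y3.le (by positivity)
    have l2 : Pv Y q.2 * Qv X q.1 ≤ (34 * M ^ 2) * (6 * V * M) := mul_le_mul y2 x4 x3.le (by positivity)
    have l3 := mul_pos x1 y3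
    have l4 := mul_pos y1 x3
    have hp' : (34 * M ^ 2) * (6 * V * M) < (p:ℤ) := by
      have : (34 * M ^ 2) * (6 * V * M) ≤ 1156 * M ^ 3 * V := by nlinarith [Nat.zero_le (M ^ 3 * V)]
      exact_mod_cast this.trans_lt hp
    have := Int.eq_zero_of_abs_lt_dvd h' (by rw [abs_lt]; constructor <;> linarith)
    linarith
  have hcard : ((#(Xset V (17 * M) ×ˢ (F ×ˢ F)) : ℕ) : ℝ) ≤ 16 * V ^ 2 * (17 * M) ^ 2 * (#F : ℝ) ^ 2 := by
    rw [card_product, card_product]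
    push_cast
    have := card_Xset V (17 * M)
    push_cast at this
    rw [← pow_two]
    gcongr
  have hlog0 : (0:ℝ) ≤ Real.log p := Real.log_nonneg (by exact_mod_cast (by omega : 1 ≤ p))
  have hτ1 : 1 ≤ τ := by linarith
  calc _ ≤ _ := hH
    _ ≤ _ := by
      gcongr

end

section
open Finset

theorem gram_bound {A : Type*} (T : Finset ℕ) (F : Finset A) (e : A → ℂ) (he : ∀ a ∈ F, ‖e a‖ ≤ 1)
    (f : A → ℕ → ℂ) :
    ∑ t ∈ T, ‖∑ a ∈ F, e a * f a t‖ ^ 2 ≤ ∑ a ∈ F, ∑ b ∈ F, ‖∑ t ∈ T, f a t * (starRingEnd ℂ) (f b t)‖ := by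
  have h1 : ((∑ t ∈ T, ‖∑ a ∈ F, e a * f a t‖ ^ 2 : ℝ) : ℂ) =
      ∑ a ∈ F, ∑ b ∈ F, (e a * (starRingEnd ℂ) (e b)) * ∑ t ∈ T, f a t * (starRingEnd ℂ) (f b t) := by
    push_cast
    simp_rw [← Complex.mul_conj', map_sum, sum_mul_sum, mul_sum]
    rw [sum_comm]
    refine sum_congr rfl fun a _ => ?_
    rw [sum_comm]
    refine sum_congr rfl fun b _ => sum_congr rfl fun t _ => ?_
    rw [map_mul]; ring
  have h2 : ∑ t ∈ T, ‖∑ a ∈ F, e a * f a t‖ ^ 2 = ‖((∑ t ∈ T, ‖∑ a ∈ F, e a * f a t‖ ^ 2 : ℝ) : ℂ)‖ := by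
    rw [Complex.norm_real, Real.norm_of_nonneg (by positivity)]
  rw [h2, h1]
  refine (norm_sum_le _ _).trans (sum_le_sum fun a ha => (norm_sum_le _ _).trans (sum_le_sum fun b hb => ?_))
  rw [norm_mul, norm_mul, RCLike.norm_conj]
  have : ‖e a‖ * ‖e b‖ ≤ 1 := mul_le_one₀ (he a ha) (norm_nonneg _) (he b hb)
  exact mul_le_of_le_one_left (norm_nonneg _) this

theorem le_tau_totient (n : ℕ) : n ≤ #n.divisors * Nat.totient n := by
  rcases Nat.eq_zero_or_pos n with rfl | hn
  · simp
  conv_lhs => rw [← Nat.sum_totient n]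
  rw [← smul_eq_mul, ← sum_const]
  apply sum_le_sum
  intro d hd
  exact Nat.le_of_dvd (Nat.totient_pos.2 hn) (Nat.totient_dvd_of_dvd (Nat.dvd_of_mem_divisors hd))

noncomputable def Uset (V : ℕ) : Finset (ℕ × ℕ) :=
  {w ∈ Ioc V (2 * V) ×ˢ Ico (2 * V) (4 * V) | w.2 < 2 * V + w.1 ∧ Nat.Coprime w.1 w.2}

theorem card_Uset (V : ℕ) (τ : ℝ) (hτ : ∀ n : ℕ, n ≤ 2 * V → (#n.divisors : ℝ) ≤ τ) :
    (V : ℝ) ^ 2 ≤ τ * #(Uset V) := by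
  have h1 : #(Uset V) = ∑ u ∈ Ioc V (2 * V), Nat.totient u := by
    rw [Uset, card_filter, sum_product]
    apply sum_congr rfl
    intro u hu
    rw [mem_Ioc] at hu
    rw [← Nat.filter_coprime_Ico_eq_totient u (2 * V), card_filter]
    rw [← card_filter, ← card_filter]
    congr 1
    ext v
    simp only [mem_filter, mem_Ico]
    constructor
    · rintro ⟨⟨a, b⟩, c, d⟩; exact ⟨⟨a, by omega⟩, d⟩
    · rintro ⟨⟨a, b⟩, c⟩; exact ⟨⟨a, by omega⟩, by omega, c⟩
  rw [h1]
  push_cast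
  rw [mul_sum]
  calc (V:ℝ) ^ 2 = ∑ u ∈ Ioc V (2 * V), (V:ℝ) := by
        rw [sum_const, Nat.card_Ioc, nsmul_eq_mul, pow_two]; congr; omega
    _ ≤ _ := by
        apply sum_le_sum
        intro u hu
        rw [mem_Ioc] at hu
        have h := le_tau_totient u
        calc (V:ℝ) ≤ u := by exact_mod_cast hu.1.le
          _ ≤ #u.divisors * Nat.totient u := by exact_mod_cast h
          _ ≤ _ := by gcongr; exact hτ u hu.2

theorem shift_bound (p : ℕ) (χ : MulChar (ZMod p) ℂ) (V M T0 t : ℕ) (ht1 : T0 < t) (ht2 : t ≤ 2 * T0)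
    (hT1 : M < T0 * V) (hT2 : T0 * V ≤ 2 * M) (F F' : Finset ℚ)
    (hF : ∀ q ∈ F, 0 ≤ q.num ∧ q.num ≤ q.den ∧ q.den ≤ M) (e : ℚ → ℂ) :
    #(Uset V) * ∑ r ∈ F, ‖∑ a ∈ F', e a * χ ((r.num * a.den - a.num * r.den : ℤ) : ZMod p)‖ ^ 2 ≤
      ∑ X ∈ Xset V (17 * M), ‖∑ a ∈ F', e a * χ ((t * Qv X a - Pv X a : ℤ) : ZMod p)‖ ^ 2 := by
  classical
  let m : (ℕ × ℕ) × ℚ → (ℤ × ℤ) × (ℤ × ℤ) := fun i =>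
    ((t * i.1.1 - i.2.num, i.1.1), (t * i.1.2 + i.2.den, i.1.2))
  have hinj : Set.InjOn m (Uset V ×ˢ F : Finset _) := by
    intro i _ j _ h
    simp only [m, Prod.mk.injEq] at h
    obtain ⟨⟨a1, a2⟩, a3, a4⟩ := h
    rw [a2] at a1; rw [a4] at a3
    refine Prod.ext (Prod.ext (by exact_mod_cast a2) (by exact_mod_cast a4)) (Rat.ext (by linarith) ?_)
    have : (i.2.den : ℤ) = j.2.den := by linarith
    exact_mod_cast this
  have hmaps : ∀ i ∈ Uset V ×ˢ F, m i ∈ Xset V (17 * M) := by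
    intro i hi
    rw [mem_product] at hi
    obtain ⟨hw, hr⟩ := hi
    simp only [Uset, mem_filter, mem_product, mem_Ioc, mem_Ico] at hw
    obtain ⟨⟨⟨u1, u2⟩, v1, v2⟩, v3, hc⟩ := hw
    obtain ⟨r1, r2, r3⟩ := hF _ hr
    have hd := i.2.den_pos
    have hden : (1:ℤ) ≤ i.2.den := by exact_mod_cast hd
    have hdM : (i.2.den:ℤ) ≤ M := by exact_mod_cast r3
    have k1 : T0 * V ≤ t * i.1.1 := Nat.mul_le_mul ht1.le u1.le
    have k2 : t * i.1.1 ≤ (2 * T0) * (2 * V) := Nat.mul_le_mul ht2 u2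
    have k3 : t * i.1.2 ≤ (2 * T0) * (4 * V) := Nat.mul_le_mul ht2 v2.le
    have k4 : (t * i.1.1 : ℤ) > M := by exact_mod_cast hT1.trans_le k1
    have k5 : (t * i.1.1 : ℤ) ≤ 8 * M := by
      have : t * i.1.1 ≤ 8 * M := by nlinarith
      exact_mod_cast this
    have k6 : (t * i.1.2 : ℤ) ≤ 16 * M := by
      have : t * i.1.2 ≤ 16 * M := by nlinarith
      exact_mod_cast this
    have k7 : (0:ℤ) ≤ t * i.1.2 := by positivity
    rw [Xset, mem_filter]
    simp only [mem_product, mem_Icc, m, Wd]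
    push_cast
    refine ⟨⟨⟨⟨by linarith, by linarith⟩, by omega, by omega⟩, ⟨by linarith, by linarith⟩, by omega, by omega⟩,
      ⟨by omega, by omega, by omega, by omega⟩, ?_, ?_⟩
    · exact Nat.isCoprime_iff_coprime.2 hc
    · have q1 : (0:ℤ) < i.1.1 := by omega
      have q2 : (0:ℤ) ≤ i.1.2 := by omega
      have := mul_pos q1 (by linarith : (0:ℤ) < i.2.den)
      have := mul_nonneg q2 r1
      linarith
  have hval : ∀ i ∈ Uset V ×ˢ F, ∀ a : ℚ, t * Qv (m i) a - Pv (m i) a = i.2.num * a.den - a.num * i.2.den := by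
    intro i _ a
    simp only [Qv, Pv, m]; ring
  calc _ = ∑ i ∈ Uset V ×ˢ F, ‖∑ a ∈ F', e a * χ ((t * Qv (m i) a - Pv (m i) a : ℤ) : ZMod p)‖ ^ 2 := by
        have h0 : ∀ i ∈ Uset V ×ˢ F, ‖∑ a ∈ F', e a * χ ((t * Qv (m i) a - Pv (m i) a : ℤ) : ZMod p)‖ ^ 2 =
            ‖∑ a ∈ F', e a * χ ((i.2.num * a.den - a.num * i.2.den : ℤ) : ZMod p)‖ ^ 2 := by
          intro i hi
          rw [sum_congr rfl (fun a _ => by rw [hval i hi a])]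
        rw [sum_congr rfl h0, sum_product]
        simp only [sum_const, nsmul_eq_mul]
    _ = ∑ X ∈ (Uset V ×ˢ F).image m, ‖∑ a ∈ F', e a * χ ((t * Qv X a - Pv X a : ℤ) : ZMod p)‖ ^ 2 := by
        rw [sum_image hinj]
    _ ≤ _ := by
        apply sum_le_sum_of_subset_of_nonneg
        · intro X hX
          obtain ⟨i, hi, rfl⟩ := mem_image.1 hX
          exact hmaps i hi
        · intros; positivity

theorem G_bound (p : ℕ) [Fact p.Prime] (χ : MulChar (ZMod p) ℂ) (V M T0 : ℕ)
    (hT1 : M < T0 * V) (hT2 : T0 * V ≤ 2 * M) (hp : 1156 * M ^ 3 * V < p) (F F' : Finset ℚ) (hT0 : 2 * T0 < p)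
    (hF : ∀ q ∈ F, 0 ≤ q.num ∧ q.num ≤ q.den ∧ q.den ≤ M) (hF' : F' ⊆ F) (e : ℚ → ℂ) (he : ∀ a, ‖e a‖ ≤ 1) :
    ∃ T : Finset (ZMod p), #T = T0 ∧
    T0 * (#(Uset V) * ∑ r ∈ F, ‖∑ a ∈ F', e a * χ ((r.num * a.den - a.num * r.den : ℤ) : ZMod p)‖ ^ 2) ≤
      ∑ X ∈ Xset V (17 * M), ∑ a ∈ F', ∑ b ∈ F',
      ‖∑ t ∈ T, χ (-((Pv X a : ZMod p) * (Qv X a : ZMod p)⁻¹) + t) *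
        χ⁻¹ (-((Pv X b : ZMod p) * (Qv X b : ZMod p)⁻¹) + t)‖ := by
  classical
  have hinj : Set.InjOn (fun t : ℕ => (t : ZMod p)) (Ioc T0 (2 * T0) : Finset ℕ) := by
    intro s hs t ht h
    simp only [coe_Ioc, Set.mem_Ioc] at hs ht h
    have := (ZMod.natCast_eq_natCast_iff' _ _ _).1 h
    rwa [Nat.mod_eq_of_lt (by omega), Nat.mod_eq_of_lt (by omega)] at this
  refine ⟨(Ioc T0 (2 * T0)).image (fun t : ℕ => (t : ZMod p)), ?_, ?_⟩
  · rw [card_image_of_injOn hinj, Nat.card_Ioc]; omega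
  calc _ = ∑ t ∈ Ioc T0 (2 * T0), (#(Uset V) * ∑ r ∈ F, ‖∑ a ∈ F', e a * χ ((r.num * a.den - a.num * r.den : ℤ) : ZMod p)‖ ^ 2) := by
        rw [sum_const, Nat.card_Ioc, nsmul_eq_mul]
        congr 2; omega
    _ ≤ ∑ t ∈ Ioc T0 (2 * T0), ∑ X ∈ Xset V (17 * M), ‖∑ a ∈ F', e a * χ ((t * Qv X a - Pv X a : ℤ) : ZMod p)‖ ^ 2 := by
        apply sum_le_sum
        intro t ht
        rw [mem_Ioc] at ht
        exact shift_bound p χ V M T0 t ht.1 ht.2 hT1 hT2 F F' hF e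
    _ = ∑ X ∈ Xset V (17 * M), ∑ t ∈ Ioc T0 (2 * T0), ‖∑ a ∈ F', e a * χ ((t * Qv X a - Pv X a : ℤ) : ZMod p)‖ ^ 2 := sum_comm
    _ ≤ _ := by
        apply sum_le_sum
        intro X hX
        have hval : ∀ a ∈ F', ∀ t : ℕ, e a * χ ((t * Qv X a - Pv X a : ℤ) : ZMod p) =
            (e a * χ (Qv X a : ZMod p)) * χ (-((Pv X a : ZMod p) * (Qv X a : ZMod p)⁻¹) + t) := by
          intro a ha t
          have := Qv_ne p V M hp X hX a (hF a (hF' ha))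
          rw [mul_assoc, ← map_mul]
          congr 2
          push_cast
          field_simp
          ring
        rw [sum_congr rfl (fun t _ => by rw [sum_congr rfl (fun a ha => hval a ha t)])]
        refine (gram_bound _ _ _ ?_ _).trans ?_
        · intro a _
          rw [norm_mul]
          exact mul_le_one₀ (he a) (norm_nonneg _) (norm_mulchar_le p χ _)
        · apply le_of_eq
          refine sum_congr rfl fun a _ => sum_congr rfl fun b _ => ?_
          rw [sum_image hinj]
          congr 1
          refine sum_congr rfl fun t _ => ?_
          congr 1
          rw [← MulChar.star_eq_inv]; rfl

end

section
open Finset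

theorem farey_card (Q : Finset ℚ) (L : ℕ) (h : ∀ q ∈ Q, 0 ≤ q.num ∧ q.num ≤ q.den ∧ q.den ≤ L) :
    (#Q : ℝ) ≤ 2 * L ^ 2 := by
  have hmaps : ∀ q ∈ Q, (q.num.toNat, q.den) ∈ range (L + 1) ×ˢ Icc 1 L := by
    intro q hq
    have := h q hq
    have := q.den_pos
    rw [mem_product, mem_range, mem_Icc]
    simp only
    omega
  have hinj : Set.InjOn (fun q : ℚ => (q.num.toNat, q.den)) Q := by
    intro q hq r hr h'
    simp only [Prod.mk.injEq] at h'
    have := h q hq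
    have := h r hr
    exact Rat.ext (by omega) h'.2
  have := card_le_card_of_injOn _ hmaps hinj
  rw [card_product, card_range, Nat.card_Icc] at this
  have h2 : #Q ≤ 2 * L ^ 2 := by
    refine this.trans ?_
    rcases Nat.eq_zero_or_pos L with rfl | hL
    · simp
    · have : L + 1 - 1 = L := by omega
      rw [this]; nlinarith
  exact_mod_cast h2

theorem farey_mem (R : ℝ) (q : ℚ) (hq : q ∈ fareySet R) : 0 ≤ q.num ∧ q.num ≤ q.den ∧ q.den ≤ ⌊R⌋₊ := by
  rw [fareySet, mem_image] at hq
  obtain ⟨⟨r, s⟩, hrs, rfl⟩ := hq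
  simp only [mem_filter, mem_product, mem_Icc] at hrs
  obtain ⟨⟨⟨h1, h2⟩, h3, h4⟩, h5, h6⟩ := hrs
  simp only
  have e1 : ((r:ℚ) / s).num = r := by
    have := Rat.num_div_eq_of_coprime (a := (r:ℤ)) (b := (s:ℤ)) (by exact_mod_cast h3) (by simpa using h6)
    rw [Int.cast_natCast, Int.cast_natCast] at this
    exact this
  have e2 : ((r:ℚ) / s).den = s := by
    have := Rat.den_div_eq_of_coprime (a := (r:ℤ)) (b := (s:ℤ)) (by exact_mod_cast h3) (by simpa using h6)
    rw [Int.cast_natCast, Int.cast_natCast] at this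
    exact Int.natCast_inj.1 this
  rw [e1, e2]
  refine ⟨by positivity, by exact_mod_cast h5, h4⟩

theorem den_ne (p : ℕ) [Fact p.Prime] (M : ℕ) (hM : M < p) (q : ℚ) (hq : q.den ≤ M) : (q.den : ZMod p) ≠ 0 := by
  intro h
  rw [ZMod.natCast_eq_zero_iff] at h
  have := Nat.le_of_dvd q.den_pos h
  omega

theorem farey_char (p : ℕ) [Fact p.Prime] (χ : MulChar (ZMod p) ℂ) (M : ℕ) (hM : M < p) (q r : ℚ) (hq : q.den ≤ M) (hr : r.den ≤ M) :
    χ (fareyEmb p q - fareyEmb p r) = χ⁻¹ (q.den : ZMod p) * χ⁻¹ (r.den : ZMod p) *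
      χ ((q.num * r.den - r.num * q.den : ℤ) : ZMod p) := by
  have h1 := den_ne p M hM q hq
  have h2 := den_ne p M hM r hr
  rw [MulChar.inv_apply', MulChar.inv_apply', ← map_mul, ← map_mul]
  congr 1
  simp only [fareyEmb]
  push_cast
  field_simp

theorem emb_inj (p : ℕ) [Fact p.Prime] (M : ℕ) (hM : M ^ 2 < p) (F : Finset ℚ)
    (hF : ∀ q ∈ F, 0 ≤ q.num ∧ q.num ≤ q.den ∧ q.den ≤ M) : Set.InjOn (fareyEmb p) F := by
  intro q hq r hr h
  obtain ⟨a1, a2, a3⟩ := hF q hq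
  obtain ⟨b1, b2, b3⟩ := hF r hr
  have hMp : M < p := lt_of_le_of_lt (Nat.le_self_pow (by norm_num) M) hM
  have h1 := den_ne p M hMp q a3
  have h2 := den_ne p M hMp r b3
  simp only [fareyEmb] at h
  have h' : ((q.num * r.den : ℤ) : ZMod p) = ((r.num * q.den : ℤ) : ZMod p) := by
    push_cast
    field_simp at h
    rw [h]; ring
  rw [ZMod.intCast_eq_intCast_iff_dvd_sub] at h'
  have c1 : (q.den:ℤ) ≤ M := by exact_mod_cast a3
  have c2 : (r.den:ℤ) ≤ M := by exact_mod_cast b3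
  have l1 : q.num * r.den ≤ M * M := mul_le_mul (a2.trans c1) c2 (by positivity) (by positivity)
  have l2 : r.num * q.den ≤ M * M := mul_le_mul (b2.trans c2) c1 (by positivity) (by positivity)
  have l3 : 0 ≤ q.num * r.den := by positivity
  have l4 : 0 ≤ r.num * q.den := by positivity
  have hM2 : (M * M : ℤ) < p := by rw [← pow_two]; exact_mod_cast hM
  have := Int.eq_zero_of_abs_lt_dvd h' (by rw [abs_lt]; constructor <;> linarith)
  have e : (q.num : ℚ) * r.den = r.num * q.den := by exact_mod_cast (by linarith : q.num * r.den = r.num * q.den)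
  rw [← Rat.num_div_den q, ← Rat.num_div_den r]
  have hq0 : (q.den:ℚ) ≠ 0 := by exact_mod_cast q.den_nz
  have hr0 : (r.den:ℚ) ≠ 0 := by exact_mod_cast r.den_nz
  field_simp
  linarith

theorem ortho (p : ℕ) [Fact p.Prime] (χ : MulChar (ZMod p) ℂ) (hχ : χ ≠ 1) (a b : ZMod p) (hab : a ≠ b) :
    ‖∑ x : ZMod p, χ (x - a) * χ⁻¹ (x - b)‖ ≤ 1 := by
  have hne : b - a ≠ 0 := sub_ne_zero.2 hab.symm
  have hneg : (-1 : ZMod p) ≠ 0 := by simp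
  have h1 : ∑ x : ZMod p, χ (x - a) * χ⁻¹ (x - b) = χ⁻¹ (-1) * jacobiSum χ χ⁻¹ := by
    rw [jacobiSum, mul_sum]
    symm
    refine Fintype.sum_equiv ((Equiv.mulLeft₀ (b - a) hne).trans (Equiv.addRight a)) _ _ ?_
    intro y
    have e0 : ((Equiv.mulLeft₀ (b - a) hne).trans (Equiv.addRight a)) y = (b - a) * y + a := rfl
    simp only [e0, add_sub_cancel_right]
    have e1 : (b - a) * y + a - b = (b - a) * (-1) * (1 - y) := by ring
    rw [e1, map_mul, map_mul, map_mul, MulChar.inv_apply' χ (b - a)]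
    have : χ (b - a) * χ (b - a)⁻¹ = 1 := by rw [← map_mul, mul_inv_cancel₀ hne, map_one]
    linear_combination -χ y * χ⁻¹ (-1) * χ⁻¹ (1 - y) * this
  rw [h1, jacobiSum_nontrivial_inv hχ, norm_mul, norm_neg, norm_mulchar_unit p _ _ hneg, norm_mulchar_unit p _ _ hneg]
  norm_num

theorem large_bound (p : ℕ) [Fact p.Prime] (χ : MulChar (ZMod p) ℂ) (hχ : χ ≠ 1) (M : ℕ) (hM : M ^ 2 < p) (F : Finset ℚ)
    (hF : ∀ q ∈ F, 0 ≤ q.num ∧ q.num ≤ q.den ∧ q.den ≤ M) (ξ ζ : ℚ → ℂ) (hξ : ∀ ρ, ‖ξ ρ‖ ≤ 1) (hζ : ∀ ρ, ‖ζ ρ‖ ≤ 1) :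
    ‖∑ ρ ∈ F, ∑ r ∈ F, ξ ρ * ζ r * χ (fareyEmb p ρ - fareyEmb p r)‖ ≤ 4 * √p * M ^ 2 := by
  classical
  have hinj := emb_inj p M hM F hF
  have hc := farey_card F M hF
  let G : ZMod p → ℂ := fun x => ∑ r ∈ F, ζ r * χ (x - fareyEmb p r)
  have hG : ∑ x : ZMod p, ‖G x‖ ^ 2 ≤ p * #F + (#F : ℝ) ^ 2 := by
    have h1 : ((∑ x : ZMod p, ‖G x‖ ^ 2 : ℝ) : ℂ) = ∑ a ∈ F, ∑ b ∈ F, (ζ a * (starRingEnd ℂ) (ζ b)) *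
        ∑ x : ZMod p, χ (x - fareyEmb p a) * χ⁻¹ (x - fareyEmb p b) := by
      push_cast
      simp only [G]
      simp_rw [← Complex.mul_conj', map_sum, sum_mul_sum, mul_sum]
      rw [sum_comm]
      refine sum_congr rfl fun a _ => ?_
      rw [sum_comm]
      refine sum_congr rfl fun b _ => sum_congr rfl fun t _ => ?_
      rw [map_mul]
      have : (starRingEnd ℂ) (χ (t - fareyEmb p b)) = χ⁻¹ (t - fareyEmb p b) := by
        rw [← MulChar.star_eq_inv]; rfl
      rw [this]; ring
    have h2 : ∑ x : ZMod p, ‖G x‖ ^ 2 = ‖((∑ x : ZMod p, ‖G x‖ ^ 2 : ℝ) : ℂ)‖ := by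
      rw [Complex.norm_real, Real.norm_of_nonneg (by positivity)]
    rw [h2, h1]
    calc _ ≤ ∑ a ∈ F, ∑ b ∈ F, ((if a = b then (p:ℝ) else 0) + 1) := by
          refine (norm_sum_le _ _).trans (sum_le_sum fun a ha => (norm_sum_le _ _).trans (sum_le_sum fun b hb => ?_))
          rw [norm_mul, norm_mul, RCLike.norm_conj]
          have h3 : ‖ζ a‖ * ‖ζ b‖ ≤ 1 := mul_le_one₀ (hζ a) (norm_nonneg _) (hζ b)
          refine (mul_le_of_le_one_left (norm_nonneg _) h3).trans ?_
          split_ifs with hab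
          · have : ‖∑ x : ZMod p, χ (x - fareyEmb p a) * χ⁻¹ (x - fareyEmb p b)‖ ≤ ∑ x : ZMod p, (1:ℝ) := by
              refine (norm_sum_le _ _).trans (sum_le_sum fun x _ => ?_)
              rw [norm_mul]
              exact mul_le_one₀ (norm_mulchar_le p _ _) (norm_nonneg _) (norm_mulchar_le p _ _)
            simp [ZMod.card] at this
            simpa using this.trans (by linarith)
          · rw [zero_add]
            exact ortho p χ hχ _ _ (fun h => hab (hinj ha hb h))
      _ = _ := by
          simp_rw [sum_add_distrib, sum_ite_eq]
          simp
          ring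
  have hS : ‖∑ ρ ∈ F, ∑ r ∈ F, ξ ρ * ζ r * χ (fareyEmb p ρ - fareyEmb p r)‖ ≤ ∑ ρ ∈ F, ‖G (fareyEmb p ρ)‖ := by
    refine (norm_sum_le _ _).trans (sum_le_sum fun ρ _ => ?_)
    simp_rw [mul_assoc]
    rw [← mul_sum, norm_mul]
    exact mul_le_of_le_one_left (norm_nonneg _) (hξ ρ)
  have hCS : (∑ ρ ∈ F, ‖G (fareyEmb p ρ)‖) ^ 2 ≤ #F * ∑ ρ ∈ F, ‖G (fareyEmb p ρ)‖ ^ 2 := sq_sum_le_card_mul_sum_sq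
  have hsub : ∑ ρ ∈ F, ‖G (fareyEmb p ρ)‖ ^ 2 ≤ ∑ x : ZMod p, ‖G x‖ ^ 2 := by
    rw [← sum_image (f := fun x => ‖G x‖ ^ 2) hinj]
    exact sum_le_sum_of_subset_of_nonneg (subset_univ _) (fun _ _ _ => by positivity)
  have hM' : (M:ℝ) ^ 2 ≤ p := by exact_mod_cast hM.le
  have hsqrt : √(p:ℝ) ^ 2 = p := Real.sq_sqrt (by positivity)
  apply hS.trans
  refine (sq_le_sq₀ (sum_nonneg fun _ _ => norm_nonneg _) (by positivity)).1 ?_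
  calc _ ≤ _ := hCS
    _ ≤ #F * (p * #F + (#F : ℝ) ^ 2) := by gcongr; exact hsub.trans hG
    _ = (#F:ℝ) ^ 2 * (p + #F) := by ring
    _ ≤ (2 * M ^ 2 : ℝ) ^ 2 * (p + 2 * p) := by gcongr; linarith
    _ ≤ _ := by
        have : (4 * √p * M ^ 2 : ℝ) ^ 2 = 16 * p * M ^ 4 := by rw [mul_pow, mul_pow, hsqrt]; ring
        rw [this]
        have : (0:ℝ) ≤ p * M ^ 4 := by positivity
        nlinarith

end

section
open Finset

theorem mom_simp (k : ℕ) (hk : 1 ≤ k) (T p : ℝ) (hp : 0 ≤ p) (hT : 0 ≤ T) (h : p ≤ T ^ k) :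
    T ^ k * k ^ (2 * k) * p ^ 2 + (2 * k) ^ 2 * p * T ^ (2 * k) ≤ 5 * k ^ (2 * k) * p * T ^ (2 * k) := by
  have hk1 : (1:ℝ) ≤ k := by exact_mod_cast hk
  have h1 : (k:ℝ) ^ 2 ≤ k ^ (2 * k) := pow_le_pow_right₀ hk1 (by omega)
  have h2 : T ^ (2 * k) = T ^ k * T ^ k := by rw [← pow_add]; congr 1; omega
  have h3 : T ^ k * k ^ (2 * k) * p ^ 2 ≤ k ^ (2 * k) * p * T ^ (2 * k) := by
    rw [h2]
    have : T ^ k * k ^ (2 * k) * p ^ 2 = (k ^ (2 * k) * p * T ^ k) * p := by ring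
    rw [this]
    have e : (k ^ (2 * k) * p * (T ^ k * T ^ k) : ℝ) = (k ^ (2 * k) * p * T ^ k) * T ^ k := by ring
    rw [e]
    exact mul_le_mul_of_nonneg_left h (by positivity)
  have h4 : (2 * k) ^ 2 * p * T ^ (2 * k) ≤ 4 * k ^ (2 * k) * p * T ^ (2 * k) := by
    have : ((2 * k) ^ 2 : ℝ) ≤ 4 * k ^ (2 * k) := by linarith [mul_pow (2:ℝ) k 2]
    gcongr
  linarith

theorem core_alg (k : ℕ) (hk : 1 ≤ k) (V M T p τ β Z S f mom : ℝ) (hV : 0 < V) (hM : 0 < M) (hT : 0 < T) (hp : 0 ≤ p)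
    (hτ : 0 ≤ τ) (hβ : 0 ≤ β) (hf : 0 ≤ f) (hfM : f ≤ 2 * M ^ 2) (hS : 0 ≤ S) (hm : 0 ≤ mom)
    (hmom : mom ≤ 5 * k ^ (2 * k) * p * T ^ (2 * k))
    (hZ : Z ^ (2 * k) ≤ (16 * V ^ 2 * (17 * M) ^ 2 * f ^ 2) ^ (2 * (k - 1)) *
      (2 * 10 ^ 8 * τ ^ 7 * β ^ 4 * V ^ 2 * M ^ 6) * mom)
    (hSZ : T * V ^ 2 * S ^ 2 ≤ 2 * M ^ 2 * τ * Z) :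
    S ^ (4 * k) * (V ^ 2 * M ^ 6) ≤ (36992 * k * τ * M ^ 8) ^ (2 * k) * (10 ^ 9 * τ ^ 7 * β ^ 4 * p) := by
  set W := V ^ 2 * M ^ 6 with hW
  have hWp : 0 < W := by positivity
  have h1 : Z ^ (2 * k) ≤ (18496 * W) ^ (2 * (k - 1)) * (2 * 10 ^ 8 * τ ^ 7 * β ^ 4 * W) * (5 * k ^ (2 * k) * p * T ^ (2 * k)) := by
    refine hZ.trans ?_
    have e1 : 16 * V ^ 2 * (17 * M) ^ 2 * f ^ 2 ≤ 18496 * W := by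
      calc _ ≤ 16 * V ^ 2 * (17 * M) ^ 2 * (2 * M ^ 2) ^ 2 := by gcongr
        _ = _ := by rw [hW]; ring
    have e2 : 2 * 10 ^ 8 * τ ^ 7 * β ^ 4 * V ^ 2 * M ^ 6 = 2 * 10 ^ 8 * τ ^ 7 * β ^ 4 * W := by rw [hW]; ring
    rw [e2]
    gcongr
  have h2 : Z ^ (2 * k) * W ≤ (18496 * W) ^ (2 * k) * (10 ^ 9 * τ ^ 7 * β ^ 4 * p) * (k ^ (2 * k) * T ^ (2 * k)) := by
    have hpw : (18496 * W) ^ (2 * k) = (18496 * W) ^ (2 * (k - 1)) * (18496 * W) ^ 2 := by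
      rw [← pow_add]; congr 1; omega
    calc Z ^ (2 * k) * W ≤ ((18496 * W) ^ (2 * (k - 1)) * (2 * 10 ^ 8 * τ ^ 7 * β ^ 4 * W) * (5 * k ^ (2 * k) * p * T ^ (2 * k))) * W := by gcongr
      _ = (18496 * W) ^ (2 * (k - 1)) * (W ^ 2) * (10 ^ 9 * τ ^ 7 * β ^ 4 * p) * (k ^ (2 * k) * T ^ (2 * k)) := by ring
      _ ≤ (18496 * W) ^ (2 * (k - 1)) * ((18496 * W) ^ 2) * (10 ^ 9 * τ ^ 7 * β ^ 4 * p) * (k ^ (2 * k) * T ^ (2 * k)) := by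
          have : W ^ 2 ≤ (18496 * W) ^ 2 := by gcongr; linarith
          gcongr
      _ = _ := by rw [hpw]
  have h3 : (T * V ^ 2 * S ^ 2) ^ (2 * k) ≤ (2 * M ^ 2 * τ * Z) ^ (2 * k) := by gcongr
  have hc : 0 < (T * V ^ 2) ^ (2 * k) := by positivity
  refine le_of_mul_le_mul_left ?_ hc
  calc (T * V ^ 2) ^ (2 * k) * (S ^ (4 * k) * W) = (T * V ^ 2 * S ^ 2) ^ (2 * k) * W := by
        have : S ^ (4 * k) = (S ^ 2) ^ (2 * k) := by rw [← pow_mul]; congr 1; omega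
        rw [this, mul_pow (T * V ^ 2)]; ring
    _ ≤ (2 * M ^ 2 * τ * Z) ^ (2 * k) * W := by gcongr
    _ = (2 * M ^ 2 * τ) ^ (2 * k) * (Z ^ (2 * k) * W) := by rw [mul_pow _ Z]; ring
    _ ≤ (2 * M ^ 2 * τ) ^ (2 * k) * ((18496 * W) ^ (2 * k) * (10 ^ 9 * τ ^ 7 * β ^ 4 * p) * (k ^ (2 * k) * T ^ (2 * k))) := by gcongr
    _ = ((2 * M ^ 2 * τ) * (18496 * W) * k * T) ^ (2 * k) * (10 ^ 9 * τ ^ 7 * β ^ 4 * p) := by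
        rw [mul_pow _ T, mul_pow _ (k:ℝ), mul_pow _ (18496 * W)]; ring
    _ = _ := by
        have : (2 * M ^ 2 * τ) * (18496 * W) * k * T = (T * V ^ 2) * (36992 * k * τ * M ^ 8) := by rw [hW]; ring
        rw [this, mul_pow (T * V ^ 2)]; ring

theorem small_core (p : ℕ) [Fact p.Prime] (hp3 : 3 ≤ p) (χ : MulChar (ZMod p) ℂ) (hχ : χ ≠ 1)
    (k : ℕ) (hk : 1 ≤ k) (V M T0 : ℕ) (hT1 : M < T0 * V) (hT2 : T0 * V ≤ 2 * M) (hT0 : 2 * T0 < p)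
    (hp : 1156 * M ^ 3 * V < p) (hV : 1 ≤ V) (hVM : V ≤ M) (τ : ℝ) (hpT : p ≤ T0 ^ k)
    (hτ : ∀ n : ℕ, n ≤ p → (#n.divisors : ℝ) ≤ τ) (hlog : 1 + Real.log p ≤ τ)
    (β : ℝ) (hβ : 1 ≤ β) (F F' : Finset ℚ) (hF : ∀ q ∈ F, 0 ≤ q.num ∧ q.num ≤ q.den ∧ q.den ≤ M)
    (hF' : F' ⊆ F) (hFβ : ∀ q ∈ F', (M : ℝ) ≤ β * q.den)
    (ξ ζ : ℚ → ℂ) (hξ : ∀ ρ, ‖ξ ρ‖ ≤ 1) (hζ : ∀ ρ, ‖ζ ρ‖ ≤ 1) :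
    ‖∑ ρ ∈ F, ∑ r ∈ F', ξ ρ * ζ r * χ (fareyEmb p ρ - fareyEmb p r)‖ ^ (4 * k) * ((V:ℝ) ^ 2 * M ^ 6) ≤
      (36992 * k * τ * M ^ 8) ^ (2 * k) * (10 ^ 9 * τ ^ 7 * β ^ 4 * p) := by
  have hM1 : 1 ≤ M := hV.trans hVM
  have hMp : M < p := by
    have : M ≤ M ^ 3 := Nat.le_self_pow (by norm_num) M
    have : M ^ 3 ≤ M ^ 3 * V := Nat.le_mul_of_pos_right _ hV
    have h2 : 1156 * M ^ 3 * V = 1156 * (M ^ 3 * V) := by ring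
    omega
  have hVp : 2 * V ≤ p := by
    have : M ≤ M ^ 3 := Nat.le_self_pow (by norm_num) M
    have : M ^ 3 ≤ M ^ 3 * V := Nat.le_mul_of_pos_right _ hV
    have h2 : 1156 * M ^ 3 * V = 1156 * (M ^ 3 * V) := by ring
    omega
  have hT0' : 1 ≤ T0 := by
    rcases Nat.eq_zero_or_pos T0 with h | h
    · subst h; omega
    · exact h
  let e : ℚ → ℂ := fun a => ζ a * χ⁻¹ (a.den : ZMod p)
  have he : ∀ a, ‖e a‖ ≤ 1 := fun a => by
    simp only [e]; rw [norm_mul]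
    exact mul_le_one₀ (hζ a) (norm_nonneg _) (norm_mulchar_le p _ _)
  obtain ⟨T, hTc, hG⟩ := G_bound p χ V M T0 hT1 hT2 hp F F' hT0 hF hF' e he
  have hZ := Z_bound p hp3 χ hχ T k hk V M hp hV hVM τ hτ hlog β hβ F' (fun q hq => by
    obtain ⟨a, b, c⟩ := hF q (hF' hq); exact ⟨a, b, c, hFβ q hq⟩)
  have hU := card_Uset V τ (fun n hn => hτ n (hn.trans hVp))
  rw [hTc] at hZ
  set Z := ∑ X ∈ Xset V (17 * M), ∑ a ∈ F', ∑ b ∈ F',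
      ‖∑ t ∈ T, χ (-((Pv X a : ZMod p) * (Qv X a : ZMod p)⁻¹) + t) *
        χ⁻¹ (-((Pv X b : ZMod p) * (Qv X b : ZMod p)⁻¹) + t)‖
  set Gs := ∑ r ∈ F, ‖∑ a ∈ F', e a * χ ((r.num * a.den - a.num * r.den : ℤ) : ZMod p)‖ ^ 2
  have hGs : 0 ≤ Gs := sum_nonneg fun _ _ => by positivity
  have hτ0 : 0 ≤ τ := by
    have := hτ 0 (by omega); simpa using this
  have hS : ‖∑ ρ ∈ F, ∑ r ∈ F', ξ ρ * ζ r * χ (fareyEmb p ρ - fareyEmb p r)‖ ≤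
      ∑ r ∈ F, ‖∑ a ∈ F', e a * χ ((r.num * a.den - a.num * r.den : ℤ) : ZMod p)‖ := by
    refine (norm_sum_le _ _).trans (sum_le_sum fun ρ hρ => ?_)
    have : ∑ r ∈ F', ξ ρ * ζ r * χ (fareyEmb p ρ - fareyEmb p r) =
        (ξ ρ * χ⁻¹ (ρ.den : ZMod p)) * ∑ a ∈ F', e a * χ ((ρ.num * a.den - a.num * ρ.den : ℤ) : ZMod p) := by
      rw [mul_sum]
      refine sum_congr rfl fun a ha => ?_
      rw [farey_char p χ M hMp ρ a (hF ρ hρ).2.2 (hF a (hF' ha)).2.2]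
      simp only [e]; ring
    rw [this, norm_mul, norm_mul]
    exact mul_le_of_le_one_left (norm_nonneg _) (mul_le_one₀ (hξ ρ) (norm_nonneg _) (norm_mulchar_le p _ _))
  have hS2 : ‖∑ ρ ∈ F, ∑ r ∈ F', ξ ρ * ζ r * χ (fareyEmb p ρ - fareyEmb p r)‖ ^ 2 ≤ 2 * M ^ 2 * Gs := by
    calc _ ≤ (∑ r ∈ F, ‖∑ a ∈ F', e a * χ ((r.num * a.den - a.num * r.den : ℤ) : ZMod p)‖) ^ 2 := by gcongr
      _ ≤ #F * Gs := sq_sum_le_card_mul_sum_sq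
      _ ≤ _ := by gcongr; exact farey_card F M hF
  have hpT' : (p:ℝ) ≤ (T0:ℝ) ^ k := by exact_mod_cast hpT
  refine core_alg k hk V M T0 p τ β Z _ #F' _ (by exact_mod_cast hV) (by exact_mod_cast hM1) (by exact_mod_cast hT0')
    (by positivity) hτ0 (by linarith) (by positivity) (farey_card F' M fun q hq => hF q (hF' hq)) (norm_nonneg _)
    (by positivity) (mom_simp k hk T0 p (by positivity) (by positivity) hpT') hZ ?_
  calc (T0:ℝ) * V ^ 2 * ‖∑ ρ ∈ F, ∑ r ∈ F', ξ ρ * ζ r * χ (fareyEmb p ρ - fareyEmb p r)‖ ^ 2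
      ≤ (T0:ℝ) * (τ * #(Uset V)) * (2 * M ^ 2 * Gs) := by gcongr
    _ = 2 * M ^ 2 * τ * (T0 * (#(Uset V) * Gs)) := by ring
    _ ≤ _ := by gcongr

end

section
open Finset

theorem num_alg (k : ℕ) (hk : 1 ≤ k) (S W K c u M b P w : ℝ) (hS : 0 ≤ S) (hK : 1 ≤ K) (hc : 1 ≤ c)
    (hu : 0 < u) (hM : 0 ≤ M) (hb : 0 < b) (hP : 0 < P) (hw : 0 < w)
    (hub : u ^ (2 * k + 7) = b) (hwb : w ^ (4 * k) * b = 1) (hW : P * b ^ 6 ≤ 256 * W)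
    (h : S ^ (4 * k) * W ≤ (K * (c * u) * M ^ 8) ^ (2 * k) * (10 ^ 9 * (c * u) ^ 7 * b ^ 4 * P)) :
    S ≤ (256 * (K * c) ^ (2 * k) * (10 ^ 9 * c ^ 7)) * (M ^ 4 * w) := by
  set D := 256 * (K * c) ^ (2 * k) * (10 ^ 9 * c ^ 7) with hD
  have hD1 : 1 ≤ D := by
    have h1 : 1 ≤ (K * c) ^ (2 * k) := one_le_pow₀ (one_le_mul_of_one_le_of_one_le hK hc)
    have h2 : 1 ≤ c ^ 7 := one_le_pow₀ hc
    have := one_le_mul_of_one_le_of_one_le h1 h2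
    rw [hD]; nlinarith
  have h1 : S ^ (4 * k) * (P * b ^ 6) ≤ D * M ^ (16 * k) * (P * b ^ 5) := by
    calc S ^ (4 * k) * (P * b ^ 6) ≤ S ^ (4 * k) * (256 * W) := by gcongr
      _ = 256 * (S ^ (4 * k) * W) := by ring
      _ ≤ 256 * ((K * (c * u) * M ^ 8) ^ (2 * k) * (10 ^ 9 * (c * u) ^ 7 * b ^ 4 * P)) := by gcongr
      _ = D * M ^ (16 * k) * (P * (b ^ 4 * u ^ (2 * k + 7))) := by
          have e1 : M ^ (16 * k) = (M ^ 8) ^ (2 * k) := by rw [← pow_mul]; congr 1; omega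
          have e2 : (K * (c * u) * M ^ 8) ^ (2 * k) = (K * c) ^ (2 * k) * u ^ (2 * k) * (M ^ 8) ^ (2 * k) := by
            rw [← mul_pow, ← mul_pow]; congr 1; ring
          rw [e1, e2, hD, pow_add u]; ring
      _ = _ := by rw [hub]; ring
  have h2 : S ^ (4 * k) * b ≤ D * M ^ (16 * k) := by
    refine le_of_mul_le_mul_right ?_ (show 0 < P * b ^ 5 by positivity)
    calc _ = S ^ (4 * k) * (P * b ^ 6) := by ring
      _ ≤ _ := h1
  have h3 : S ^ (4 * k) ≤ (D * (M ^ 4 * w)) ^ (4 * k) := by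
    refine le_of_mul_le_mul_right ?_ hb
    refine h2.trans ?_
    have e : (D * (M ^ 4 * w)) ^ (4 * k) * b = D ^ (4 * k) * M ^ (16 * k) * (w ^ (4 * k) * b) := by
      rw [mul_pow D, mul_pow (M ^ 4), ← pow_mul M, show 4 * (4 * k) = 16 * k by ring]; ring
    rw [e, hwb, mul_one]
    have : D ≤ D ^ (4 * k) := le_self_pow₀ hD1 (by omega)
    gcongr
  exact (pow_le_pow_iff_left₀ hS (by positivity) (by omega)).1 h3

set_option maxHeartbeats 2000000 in
theorem small_final (η : ℝ) (hη : 0 < η) : ∃ κ : ℝ, 0 < κ ∧ ∃ C : ℝ, 0 < C ∧ ∀ (p : ℕ) [Fact p.Prime], 3 ≤ p →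
      ∀ (R : ℝ), (p : ℝ) ^ ((1 : ℝ) / 8 + η) ≤ R → 1156 * ⌊R⌋₊ ^ 3 * ⌊(p:ℝ) ^ ((1:ℝ)/8)⌋₊ < p →
      ∀ (χ : MulChar (ZMod p) ℂ), χ ≠ 1 →
      ∀ (ξ ζ : ℚ → ℂ), (∀ ρ, ‖ξ ρ‖ ≤ 1) → (∀ ϱ, ‖ζ ϱ‖ ≤ 1) →
      ‖∑ ρ ∈ fareySet R, ∑ ϱ ∈ fareySet R,
          ξ ρ * ζ ϱ * χ (fareyEmb p ρ - fareyEmb p ϱ)‖ ≤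
        C * R ^ 4 * (p : ℝ) ^ (-κ) := by
  classical
  set k := ⌈1 / η⌉₊ with hkdef
  have hkη : 1 / η ≤ k := Nat.le_ceil _
  have hk : 1 ≤ k := Nat.one_le_ceil_iff.2 (by positivity)
  have hk' : (1:ℝ) ≤ k := by exact_mod_cast hk
  set ε := η / (2 * k + 7) with hε
  have hεp : 0 < ε := by positivity
  obtain ⟨C1, hC1, hdiv⟩ := divisor_bound ε hεp
  set c := C1 + 1 + 1 / ε with hcdef
  have hinv : 0 < 1 / ε := by positivity
  have hc : 1 ≤ c := by linarith
  set κ := η / (4 * k) with hκ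
  have hκp : 0 < κ := by positivity
  set D := 256 * (36992 * k * c) ^ (2 * k) * (10 ^ 9 * c ^ 7) with hD
  have hDp : 0 < D := by positivity
  refine ⟨κ, hκp, D + 4, by positivity, ?_⟩
  intro p _ hp3 R hR hsm χ hχ ξ ζ hξ hζ
  have hP : (0:ℝ) < p := by positivity
  have hP1 : (1:ℝ) ≤ p := by exact_mod_cast (by omega : 1 ≤ p)
  set v := (p:ℝ) ^ ((1:ℝ)/8) with hv
  set b := (p:ℝ) ^ η with hb
  set u := (p:ℝ) ^ ε with hu
  set w := (p:ℝ) ^ (-κ) with hw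
  have hv1 : 1 ≤ v := Real.one_le_rpow hP1 (by norm_num)
  have hb1 : 1 ≤ b := Real.one_le_rpow hP1 hη.le
  have hu1 : 1 ≤ u := Real.one_le_rpow hP1 hεp.le
  have hw0 : 0 < w := Real.rpow_pos_of_pos hP _
  have hw1 : w ≤ 1 := Real.rpow_le_one_of_one_le_of_nonpos hP1 (by linarith)
  have hv8 : v ^ 8 = p := by
    rw [hv, ← Real.rpow_natCast, ← Real.rpow_mul hP.le]; norm_num
  have hub : u ^ (2 * k + 7) = b := by
    rw [hu, hb, ← Real.rpow_natCast, ← Real.rpow_mul hP.le, hε]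
    congr 1; push_cast; field_simp
  have hwb : w ^ (4 * k) * b = 1 := by
    rw [hw, hb, ← Real.rpow_natCast, ← Real.rpow_mul hP.le, ← Real.rpow_add hP]
    have : -κ * ((4 * k : ℕ):ℝ) + η = 0 := by rw [hκ]; push_cast; field_simp; ring
    rw [this, Real.rpow_zero]
  have hpow : (p : ℝ) ^ ((1 : ℝ) / 8 + η) = v * b := Real.rpow_add hP _ _
  rw [hpow] at hR
  have hvb : v ≤ v * b := le_mul_of_one_le_right (by linarith) hb1
  have hR1 : 1 ≤ R := by linarith
  set M := ⌊R⌋₊ with hM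
  set V := ⌊v⌋₊ with hV
  have hV1 : 1 ≤ V := Nat.one_le_floor_iff _ |>.2 hv1
  have hVM : V ≤ M := Nat.floor_le_floor (by linarith)
  have hM1 : 1 ≤ M := hV1.trans hVM
  have hMR : (M:ℝ) ≤ R := Nat.floor_le (by linarith)
  have hRM : R < M + 1 := Nat.lt_floor_add_one R
  have hVv : (V:ℝ) ≤ v := Nat.floor_le (by linarith)
  have hvV : v < V + 1 := Nat.lt_floor_add_one v
  have hV1' : (1:ℝ) ≤ V := by exact_mod_cast hV1
  have hM1' : (1:ℝ) ≤ M := by exact_mod_cast hM1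
  set T0 := M / V + 1 with hT0
  have hT1 : M < T0 * V := by
    rw [hT0]; exact Nat.lt_mul_of_div_lt (Nat.lt_succ_self _) hV1
  have hT2 : T0 * V ≤ 2 * M := by
    rw [hT0, add_mul, one_mul]
    have := Nat.div_mul_le_self M V
    omega
  have hT3 : 2 * T0 < p := by
    have h1 : M / V ≤ M := Nat.div_le_self _ _
    have : M ≤ M ^ 3 := Nat.le_self_pow (by norm_num) M
    have : M ^ 3 ≤ M ^ 3 * V := Nat.le_mul_of_pos_right _ hV1
    have h2 : 1156 * M ^ 3 * V = 1156 * (M ^ 3 * V) := by ring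
    omega
  have hbT : b ≤ T0 := by
    have h1 : (M:ℝ) + 1 ≤ T0 * V := by exact_mod_cast hT1
    have h2 : v * b ≤ v * T0 := by
      have : (T0:ℝ) * V ≤ T0 * v := by gcongr
      linarith
    exact le_of_mul_le_mul_left h2 (by linarith)
  have hpT : p ≤ T0 ^ k := by
    have : (p:ℝ) ≤ (T0:ℝ) ^ k := by
      calc (p:ℝ) = (p:ℝ) ^ (1:ℝ) := (Real.rpow_one _).symm
        _ ≤ (p:ℝ) ^ (η * k) := Real.rpow_le_rpow_of_exponent_le hP1 (by
            rw [div_le_iff₀ hη] at hkη; linarith)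
        _ = b ^ k := by rw [hb, ← Real.rpow_natCast, ← Real.rpow_mul hP.le]
        _ ≤ _ := by gcongr
    exact_mod_cast this
  have hτ : ∀ n : ℕ, n ≤ p → (#n.divisors : ℝ) ≤ c * u := by
    intro n hn
    rcases Nat.eq_zero_or_pos n with rfl | hn0
    · simp; positivity
    · refine (hdiv n hn0.ne').trans ?_
      have : (n:ℝ) ^ ε ≤ u := Real.rpow_le_rpow (by positivity) (by exact_mod_cast hn) hεp.le
      have hcc : C1 ≤ c := by linarith
      gcongr
  have hlog : 1 + Real.log p ≤ c * u := by
    have h1 := Real.log_le_rpow_div hP.le hεp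
    have h2 : (p:ℝ) ^ ε / ε = 1 / ε * u := by rw [hu]; ring
    rw [h2] at h1
    have : c * u = C1 * u + u + 1 / ε * u := by rw [hcdef]; ring
    have h3 : 0 ≤ C1 * u := mul_nonneg (by linarith) (by linarith)
    linarith
  set F := fareySet R with hFdef
  have hF : ∀ q ∈ F, 0 ≤ q.num ∧ q.num ≤ q.den ∧ q.den ≤ M := fun q hq => farey_mem R q hq
  set F' := F.filter (fun q => (M:ℝ) ≤ b * q.den) with hF'
  have hsub : F' ⊆ F := filter_subset _ _
  have hcore := small_core p hp3 χ hχ k hk V M T0 hT1 hT2 hT3 hsm hV1 hVM (c * u) hpT hτ hlog b hb1 F F' hF hsub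
    (fun q hq => (mem_filter.1 hq).2) ξ ζ hξ hζ
  have hW : (p:ℝ) * b ^ 6 ≤ 256 * ((V:ℝ) ^ 2 * M ^ 6) := by
    have h1 : v ≤ 2 * V := by linarith
    have h2 : v * b ≤ 2 * M := by linarith
    have h3 : (p:ℝ) * b ^ 6 = v ^ 2 * (v * b) ^ 6 := by
      rw [← hv8]; ring
    have h4 : v ^ 2 * (v * b) ^ 6 ≤ (2 * (V:ℝ)) ^ 2 * (2 * (M:ℝ)) ^ 6 := by gcongr
    have h5 : (2 * (V:ℝ)) ^ 2 * (2 * (M:ℝ)) ^ 6 = 256 * ((V:ℝ) ^ 2 * (M:ℝ) ^ 6) := by ring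
    rw [h3, ← h5]; exact h4
  have hS' := num_alg k hk _ ((V:ℝ) ^ 2 * M ^ 6) (36992 * k) c u M b p w (norm_nonneg _) (by linarith) hc (by linarith)
    (by positivity) (by linarith) hP hw0 hub hwb hW hcore
  have htail : ‖∑ ρ ∈ F, ∑ r ∈ F.filter (fun q => ¬ (M:ℝ) ≤ b * q.den), ξ ρ * ζ r * χ (fareyEmb p ρ - fareyEmb p r)‖ ≤ 4 * (M ^ 4 * w) := by
    set F2 := F.filter (fun q => ¬ (M:ℝ) ≤ b * q.den) with hF2
    have h1 : (#F2 : ℝ) ≤ 2 * (⌊(M:ℝ) / b⌋₊ : ℝ) ^ 2 := by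
      refine farey_card F2 _ fun q hq => ?_
      rw [hF2, mem_filter] at hq
      obtain ⟨a1, a2, a3⟩ := hF q hq.1
      refine ⟨a1, a2, Nat.le_floor ?_⟩
      rw [le_div_iff₀ (by linarith)]
      linarith [not_le.1 hq.2]
    have h2 : (⌊(M:ℝ) / b⌋₊ : ℝ) ≤ M / b := Nat.floor_le (by positivity)
    have h3 : ‖∑ ρ ∈ F, ∑ r ∈ F2, ξ ρ * ζ r * χ (fareyEmb p ρ - fareyEmb p r)‖ ≤ ∑ ρ ∈ F, ∑ r ∈ F2, (1:ℝ) := by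
      refine (norm_sum_le _ _).trans (sum_le_sum fun a ha => (norm_sum_le _ _).trans (sum_le_sum fun r hr => ?_))
      rw [norm_mul, norm_mul]
      exact mul_le_one₀ (mul_le_one₀ (hξ a) (norm_nonneg _) (hζ r)) (norm_nonneg _) (norm_mulchar_le p _ _)
    refine h3.trans ?_
    rw [sum_const, sum_const, nsmul_eq_mul, nsmul_eq_mul, mul_one]
    have hwb2 : (1 / b) ^ 2 ≤ w := by
      have e : 1 / b = w ^ (4 * k) := by rw [div_eq_iff (by linarith)]; linarith
      rw [e, ← pow_mul]
      exact pow_le_of_le_one hw0.le hw1 (by omega)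
    calc (#F:ℝ) * #F2 ≤ (2 * (M:ℝ) ^ 2) * (2 * (M / b) ^ 2) := by
          have := farey_card F M hF
          have h4 : (#F2 : ℝ) ≤ 2 * (M / b) ^ 2 := h1.trans (by gcongr)
          gcongr
      _ = 4 * (M ^ 4 * (1 / b) ^ 2) := by ring
      _ ≤ _ := by gcongr
  have hsplit : ∑ ρ ∈ F, ∑ r ∈ F, ξ ρ * ζ r * χ (fareyEmb p ρ - fareyEmb p r) =
      ∑ ρ ∈ F, ∑ r ∈ F', ξ ρ * ζ r * χ (fareyEmb p ρ - fareyEmb p r) +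
      ∑ ρ ∈ F, ∑ r ∈ F.filter (fun q => ¬ (M:ℝ) ≤ b * q.den), ξ ρ * ζ r * χ (fareyEmb p ρ - fareyEmb p r) := by
    rw [← sum_add_distrib]
    refine sum_congr rfl fun ρ _ => ?_
    rw [hF', sum_filter_add_sum_filter_not]
  rw [hsplit]
  calc _ ≤ D * (M ^ 4 * w) + 4 * (M ^ 4 * w) := (norm_add_le _ _).trans (add_le_add hS' htail)
    _ = (D + 4) * (M:ℝ) ^ 4 * w := by ring
    _ ≤ _ := by gcongr


end

/-- Corollary 2.15 (oscillation of characters on differences of Farey fractions). -/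
theorem farey_character_sum (η : ℝ) (hη : 0 < η) :
    ∃ κ : ℝ, 0 < κ ∧ ∃ C : ℝ, 0 < C ∧ ∀ (p : ℕ), p.Prime →
      ∀ (R : ℝ), (p : ℝ) ^ ((1 : ℝ) / 8 + η) ≤ R → R < (p : ℝ) ^ ((1 : ℝ) / 2) →
      ∀ (χ : MulChar (ZMod p) ℂ), χ ≠ 1 →
      ∀ (ξ ζ : ℚ → ℂ), (∀ ρ, ‖ξ ρ‖ ≤ 1) → (∀ ϱ, ‖ζ ϱ‖ ≤ 1) →
      ‖∑ ρ ∈ fareySet R, ∑ ϱ ∈ fareySet R,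
          ξ ρ * ζ ϱ * χ (fareyEmb p ρ - fareyEmb p ϱ)‖ ≤
        C * R ^ 4 * (p : ℝ) ^ (-κ) := by
  obtain ⟨κ1, hκ1, C1, hC1, hmain⟩ := small_final η hη
  set κ := min κ1 (1 / 50) with hκ
  have hκp : 0 < κ := lt_min hκ1 (by norm_num)
  have hk1 : κ ≤ κ1 := min_le_left _ _
  have hk2 : κ ≤ 1 / 50 := min_le_right _ _
  set p0 : ℝ := 1156 ^ 100 with hp0
  have hp0p : 0 < p0 := by positivity
  set C0 : ℝ := 4 * p0 ^ κ with hC0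
  have hC0p : 0 < C0 := by positivity
  refine ⟨κ, hκp, C1 + 4 + C0, by positivity, ?_⟩
  intro p hpp R hR hR2 χ hχ ξ ζ hξ hζ
  have : Fact p.Prime := ⟨hpp⟩
  have hP1 : (1:ℝ) ≤ p := by exact_mod_cast hpp.one_le
  have hP : (0:ℝ) < p := by linarith
  have hR1 : 1 ≤ R := (Real.one_le_rpow hP1 (by positivity)).trans hR
  have hF := farey_mem R
  have hMR : (⌊R⌋₊:ℝ) ≤ R := Nat.floor_le (by linarith)
  have hw0 : 0 < (p:ℝ) ^ (-κ) := Real.rpow_pos_of_pos hP _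
  by_cases hsmall : (p:ℝ) ≤ p0
  · have h3 : ‖∑ ρ ∈ fareySet R, ∑ r ∈ fareySet R, ξ ρ * ζ r * χ (fareyEmb p ρ - fareyEmb p r)‖ ≤ ∑ ρ ∈ fareySet R, ∑ r ∈ fareySet R, (1:ℝ) := by
      refine (norm_sum_le _ _).trans (sum_le_sum fun a ha => (norm_sum_le _ _).trans (sum_le_sum fun r hr => ?_))
      rw [norm_mul, norm_mul]
      exact mul_le_one₀ (mul_le_one₀ (hξ a) (norm_nonneg _) (hζ r)) (norm_nonneg _) (norm_mulchar_le p _ _)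
    refine h3.trans ?_
    rw [sum_const, sum_const, nsmul_eq_mul, nsmul_eq_mul, mul_one]
    have h4 : (#(fareySet R):ℝ) ≤ 2 * R ^ 2 := (farey_card _ _ hF).trans (by gcongr)
    have h5 : 1 ≤ p0 ^ κ * (p:ℝ) ^ (-κ) := by
      rw [Real.rpow_neg hP.le, ← div_eq_mul_inv, one_le_div (Real.rpow_pos_of_pos hP _)]
      exact Real.rpow_le_rpow hP.le hsmall hκp.le
    calc (#(fareySet R):ℝ) * #(fareySet R) ≤ (2 * R ^ 2) * (2 * R ^ 2) := by gcongr
      _ = 4 * R ^ 4 * 1 := by ring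
      _ ≤ 4 * R ^ 4 * (p0 ^ κ * (p:ℝ) ^ (-κ)) := by gcongr
      _ = C0 * R ^ 4 * (p:ℝ) ^ (-κ) := by rw [hC0]; ring
      _ ≤ _ := by gcongr; linarith
  push Not at hsmall
  by_cases hbig : (p:ℝ) ^ ((13:ℝ) / 50) ≤ R
  · have hM2 : ⌊R⌋₊ ^ 2 < p := by
      have : (⌊R⌋₊:ℝ) ^ 2 < p := by
        calc (⌊R⌋₊:ℝ) ^ 2 ≤ R ^ 2 := by gcongr
          _ < ((p:ℝ) ^ ((1:ℝ) / 2)) ^ 2 := by gcongr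
          _ = p := by rw [← Real.rpow_natCast, ← Real.rpow_mul hP.le]; norm_num
      exact_mod_cast this
    refine (large_bound p χ hχ _ hM2 (fareySet R) hF ξ ζ hξ hζ).trans ?_
    have h1 : √(p:ℝ) ≤ R ^ 2 * (p:ℝ) ^ (-κ) := by
      calc √(p:ℝ) = (p:ℝ) ^ ((1:ℝ)/2) := Real.sqrt_eq_rpow _
        _ ≤ (p:ℝ) ^ ((13:ℝ)/25 + -κ) := Real.rpow_le_rpow_of_exponent_le hP1 (by linarith)
        _ = ((p:ℝ) ^ ((13:ℝ) / 50)) ^ 2 * (p:ℝ) ^ (-κ) := by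
            rw [Real.rpow_add hP, ← Real.rpow_natCast ((p:ℝ) ^ ((13:ℝ) / 50)), ← Real.rpow_mul hP.le]; norm_num
        _ ≤ _ := by gcongr
    calc 4 * √(p:ℝ) * (⌊R⌋₊:ℝ) ^ 2 ≤ 4 * (R ^ 2 * (p:ℝ) ^ (-κ)) * R ^ 2 := by gcongr
      _ = 4 * R ^ 4 * (p:ℝ) ^ (-κ) := by ring
      _ ≤ _ := by gcongr; linarith
  · push Not at hbig
    have hp3 : 3 ≤ p := by
      have : (3:ℝ) ≤ p := by
        have : (3:ℝ) ≤ p0 := by rw [hp0]; norm_num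
        linarith
      exact_mod_cast this
    have hsm : 1156 * ⌊R⌋₊ ^ 3 * ⌊(p:ℝ) ^ ((1:ℝ)/8)⌋₊ < p := by
      have h1 : (⌊(p:ℝ) ^ ((1:ℝ)/8)⌋₊ : ℝ) ≤ (p:ℝ) ^ ((1:ℝ)/8) := Nat.floor_le (by positivity)
      have h2 : (1156:ℝ) < (p:ℝ) ^ ((1:ℝ) / 100) := by
        calc (1156:ℝ) = p0 ^ ((1:ℝ) / 100) := by
              rw [hp0, ← Real.rpow_natCast, ← Real.rpow_mul (by norm_num)]; norm_num
          _ < _ := Real.rpow_lt_rpow hp0p.le hsmall (by norm_num)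
      have : (1156 * ⌊R⌋₊ ^ 3 * ⌊(p:ℝ) ^ ((1:ℝ)/8)⌋₊ : ℝ) < p := by
        calc (1156 * ⌊R⌋₊ ^ 3 * ⌊(p:ℝ) ^ ((1:ℝ)/8)⌋₊ : ℝ) ≤ 1156 * ((p:ℝ) ^ ((13:ℝ) / 50)) ^ 3 * (p:ℝ) ^ ((1:ℝ)/8) := by
              gcongr; linarith
          _ < (p:ℝ) ^ ((1:ℝ) / 100) * ((p:ℝ) ^ ((13:ℝ) / 50)) ^ 3 * (p:ℝ) ^ ((1:ℝ)/8) := by gcongr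
          _ = (p:ℝ) ^ ((1:ℝ) / 100 + (13:ℝ)/50 * 3 + 1 / 8) := by
              rw [Real.rpow_add hP, Real.rpow_add hP, ← Real.rpow_natCast ((p:ℝ) ^ ((13:ℝ) / 50)), ← Real.rpow_mul hP.le]; norm_num
          _ ≤ (p:ℝ) ^ (1:ℝ) := Real.rpow_le_rpow_of_exponent_le hP1 (by norm_num)
          _ = p := Real.rpow_one _
      exact_mod_cast this
    refine (hmain p hp3 R hR hsm χ hχ ξ ζ hξ hζ).trans ?_
    have h1 : (p:ℝ) ^ (-κ1) ≤ (p:ℝ) ^ (-κ) := Real.rpow_le_rpow_of_exponent_le hP1 (by linarith)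
    gcongr
    linarith
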